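/- arXiv:1701.02616 — 3 statements merged into one kernel-verified Lean document; each statement's English description precedes it below -/
import Mathlib

section
/- Let 0 < β < 1, set K = cot²((1−β)π/4), and let φ : 𝔻 → ℂ be an injective holomorphic function with φ(0) = 0 satisfying the star-shapedness condition |arg(z·φ′(z)/φ(z))| ≤ βπ/2 for all z ∈ 𝔻, z ≠ 0. Suppose Ω = φ(𝔻) is bounded. Then for every α with 2 < α, α(K² − 1) < 2K², and ν := 10^{4α}·(24π²·cot⁴((1−β)π/4))^α·(α−2)/(α−1) < 1, every test function f on Ω satisfies ∬_Ω |f − f_Ω|² dxdy ≤ (C_α²·cot⁴((1−β)π/4)/π) · ((2α−2)/(α−2))^{(2α−2)/α} · exp{π²(2 + π⁴)²·cot⁴((1−β)π/4)/(2 log 3)} · |Ω| · ∬_Ω |∇f|² dxdy, where C_α = 10⁶/[(α−1)(1−ν)]^{1/α}. -/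
open MeasureTheory Metric Real
open scoped ENNReal NNReal

lemma nps_cov {H : ℂ → ℝ≥0∞} (hH : Measurable H) {a : ℝ} (ha : 1 / 2 ≤ a) (b : ℂ) :
    ∫⁻ x, H (a * x + b) ≤ 4 * ∫⁻ x, H x := by
  have ha0 : a ≠ 0 := by linarith
  have h1 : ∫⁻ x, H (a * x + b) = ∫⁻ u, H (u + b) ∂(Measure.map (fun x : ℂ => a • x) volume) := by
    have hm : Measurable (fun u => H (u + b)) := hH.comp (measurable_id.add_const b)
    rw [lintegral_map hm (measurable_const_smul a)]
    rfl
  rw [h1, show (fun x : ℂ => a • x) = (a • ·) from rfl, Measure.map_addHaar_smul _ ha0,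
    lintegral_smul_measure, lintegral_add_right_eq_self, smul_eq_mul]
  gcongr
  rw [Complex.finrank_real_complex, show (4 : ℝ≥0∞) = ENNReal.ofReal 4 by simp]
  apply ENNReal.ofReal_le_ofReal
  rw [abs_of_pos (by positivity), inv_le_comm₀ (by positivity) (by norm_num)]
  nlinarith

lemma nps_ptwise {Ω : Set ℂ} (hΩo : IsOpen Ω) {f : ℂ → ℝ} (hf : ContDiffOn ℝ 1 f Ω) {x y : ℂ} {D : ℝ}
    (hseg : ∀ t : ℝ, 0 ≤ t → t ≤ 1 → x + t * (y - x) ∈ Ω) (hD : ‖y - x‖ ≤ D) :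
    ENNReal.ofReal ((f x - f y) ^ 2) ≤ ENNReal.ofReal (D ^ 2) *
      ∫⁻ t in Set.Ioc (0:ℝ) 1, ENNReal.ofReal (‖fderiv ℝ f (x + t * (y - x))‖ ^ 2) := by
  set γ : ℝ → ℂ := fun s => x + s * (y - x) with hγ
  have hγc : Continuous γ := by fun_prop
  have hγd : ∀ s, HasDerivAt γ (y - x) s := by
    intro s
    have h1 : HasDerivAt (fun s : ℝ => (s:ℂ)) 1 s := Complex.ofRealCLM.hasDerivAt
    have h2 : HasDerivAt γ (1 * (y - x)) s := (h1.mul_const (y - x)).const_add x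
    simpa using h2
  have hγm : Set.MapsTo γ (Set.Icc 0 1) Ω := fun t ht => hseg t ht.1 ht.2
  have hfc : ContinuousOn (fderiv ℝ f) Ω := hf.continuousOn_fderiv_of_isOpen hΩo le_rfl
  have hfγ : ContinuousOn (fun t => fderiv ℝ f (γ t)) (Set.Icc 0 1) := hfc.comp hγc.continuousOn hγm
  have hu01 : Set.uIcc (0:ℝ) 1 = Set.Icc 0 1 := Set.uIcc_of_le zero_le_one
  have hder : ∀ t ∈ Set.uIcc (0:ℝ) 1, HasDerivAt (fun t => f (γ t)) (fderiv ℝ f (γ t) (y - x)) t := by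
    intro t ht
    rw [hu01] at ht
    have h1 : DifferentiableAt ℝ f (γ t) :=
      (hf.differentiableOn one_ne_zero).differentiableAt (hΩo.mem_nhds (hγm ht))
    exact h1.hasFDerivAt.comp_hasDerivAt t (hγd t)
  have hc1 : ContinuousOn (fun t => fderiv ℝ f (γ t) (y - x)) (Set.uIcc 0 1) := by
    rw [hu01]; exact hfγ.clm_apply continuousOn_const
  have hftc := intervalIntegral.integral_eq_sub_of_hasDerivAt hder hc1.intervalIntegrable
  set u : ℝ → ℝ := fun t => ‖fderiv ℝ f (γ t)‖ with hu
  have huc : ContinuousOn u (Set.uIcc 0 1) := by rw [hu01]; exact hfγ.norm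
  have hui := huc.intervalIntegrable (μ := volume)
  have hui2 : IntervalIntegrable (fun t => u t ^ 2) volume 0 1 := (huc.pow 2).intervalIntegrable
  set m := ∫ t in (0:ℝ)..1, u t with hm
  have hγ0 : γ 0 = x := by simp [hγ]
  have hγ1 : γ 1 = y := by simp [hγ]
  rw [hγ0, hγ1] at hftc
  have hD0 : 0 ≤ D := (norm_nonneg _).trans hD
  have hm0 : 0 ≤ m := intervalIntegral.integral_nonneg zero_le_one (fun t _ => norm_nonneg _)
  have h1 : |f y - f x| ≤ D * m := by
    rw [← hftc, ← Real.norm_eq_abs, hm, ← intervalIntegral.integral_const_mul]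
    apply intervalIntegral.norm_integral_le_of_norm_le zero_le_one
    · apply Filter.Eventually.of_forall
      intro t _
      calc ‖fderiv ℝ f (γ t) (y - x)‖ ≤ ‖fderiv ℝ f (γ t)‖ * ‖y - x‖ :=
            ContinuousLinearMap.le_opNorm _ _
        _ ≤ D * u t := by rw [mul_comm]; gcongr
    · exact hui.const_mul D
  have h2 : m ^ 2 ≤ ∫ t in (0:ℝ)..1, u t ^ 2 := by
    have h3 : 0 ≤ ∫ t in (0:ℝ)..1, (u t ^ 2 - (2 * m) * u t + m ^ 2) := by
      apply intervalIntegral.integral_nonneg zero_le_one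
      intro t _
      nlinarith [sq_nonneg (u t - m)]
    rw [intervalIntegral.integral_add (f := fun t => u t ^ 2 - (2 * m) * u t) (hui2.sub (hui.const_mul _)) (by simp),
      intervalIntegral.integral_sub hui2 (hui.const_mul _), intervalIntegral.integral_const_mul,
      ← hm] at h3
    simp at h3
    nlinarith
  have h3 : (f x - f y) ^ 2 ≤ D ^ 2 * ∫ t in (0:ℝ)..1, u t ^ 2 := by
    calc (f x - f y) ^ 2 = |f y - f x| ^ 2 := by rw [sq_abs]; ring
      _ ≤ (D * m) ^ 2 := by gcongr
      _ = D ^ 2 * m ^ 2 := by ring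
      _ ≤ _ := by gcongr
  refine (ENNReal.ofReal_le_ofReal h3).trans ?_
  rw [ENNReal.ofReal_mul (by positivity), intervalIntegral.integral_of_le zero_le_one,
    ofReal_integral_eq_lintegral_ofReal hui2.1 (Filter.Eventually.of_forall fun t => by positivity)]

lemma nps_poincare {Ω : Set ℂ} (hΩo : IsOpen Ω) (hfin : volume Ω ≠ ∞) {ρ D : ℝ} (hρ : 0 < ρ)
    (hB : ball 0 ρ ⊆ Ω) (hdist : ∀ x ∈ Ω, ∀ y ∈ ball (0:ℂ) ρ, ‖y - x‖ ≤ D)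
    (hseg : ∀ x ∈ Ω, ∀ y ∈ ball (0:ℂ) ρ, ∀ t : ℝ, 0 ≤ t → t ≤ 1 → x + t * (y - x) ∈ Ω)
    {f : ℂ → ℝ} (hf : ContDiffOn ℝ 1 f Ω)
    (hf2 : IntegrableOn (fun z => (f z) ^ 2) Ω)
    (hg2 : IntegrableOn (fun z => ‖fderiv ℝ f z‖ ^ 2) Ω) :
    ∫ z in Ω, (f z - ⨍ w in Ω, f w) ^ 2 ≤
      4 * D ^ 2 / (π * ρ ^ 2) * (volume Ω).toReal * ∫ z in Ω, ‖fderiv ℝ f z‖ ^ 2 := by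
  set B := ball (0:ℂ) ρ with hBdef
  have hΩm := hΩo.measurableSet
  have : IsFiniteMeasure (volume.restrict Ω) := ⟨by simpa using hfin.lt_top⟩
  have hfm : AEStronglyMeasurable f (volume.restrict Ω) := hf.continuousOn.aestronglyMeasurable hΩm
  have hL2 : MemLp f 2 (volume.restrict Ω) := (memLp_two_iff_integrable_sq hfm).2 hf2
  have hL1 : IntegrableOn f Ω := hL2.integrable (by norm_num)
  set m := ⨍ w in Ω, f w with hm
  have hVm : ∫ w in Ω, f w = (volume Ω).toReal * m := by
    have := measure_smul_setAverage (μ := volume) f hfin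
    rw [← this, smul_eq_mul]; rfl
  have hvar : ∀ a : ℝ, ∫ z in Ω, (f z - m) ^ 2 ≤ ∫ z in Ω, (f z - a) ^ 2 := by
    have key : ∀ b : ℝ, ∫ z in Ω, (f z - b) ^ 2 =
        (∫ z in Ω, f z ^ 2) - 2 * b * ((volume Ω).toReal * m) + b ^ 2 * (volume Ω).toReal := by
      intro b
      have e : ∀ z, (f z - b) ^ 2 = f z ^ 2 - (2 * b) * f z + b ^ 2 := fun z => by ring
      simp_rw [e]
      rw [integral_add (f := fun z => f z ^ 2 - (2 * b) * f z) (Integrable.sub hf2 (hL1.const_mul _)) (integrable_const _),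
        integral_sub hf2 (hL1.const_mul _), integral_const_mul, hVm]
      simp [Measure.real, mul_comm]
    intro a
    rw [key, key]
    have : 0 ≤ (volume Ω).toReal := ENNReal.toReal_nonneg
    nlinarith [mul_nonneg this (sq_nonneg (m - a))]
  have hint : ∀ a : ℝ, IntegrableOn (fun z => (f z - a) ^ 2) Ω := by
    intro a
    exact (hL2.sub (memLp_const a)).integrable_sq
  set I := ∫ z in Ω, (f z - m) ^ 2 with hI
  set H : ℂ → ℝ≥0∞ := Ω.indicator (fun z => ENNReal.ofReal (‖fderiv ℝ f z‖ ^ 2)) with hH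
  have hHm : Measurable H := by
    refine Measurable.indicator ?_ hΩm
    exact ((measurable_fderiv ℝ f).norm.pow_const 2).ennreal_ofReal
  have hHint : ∫⁻ z, H z = ENNReal.ofReal (∫ z in Ω, ‖fderiv ℝ f z‖ ^ 2) := by
    rw [hH, lintegral_indicator hΩm, ofReal_integral_eq_lintegral_ofReal hg2
      (Filter.Eventually.of_forall fun t => by positivity)]
  have hBm : MeasurableSet B := measurableSet_ball
  have step1 : volume B * ENNReal.ofReal I ≤ ∫⁻ y in B, ∫⁻ x in Ω, ENNReal.ofReal ((f x - f y) ^ 2) := by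
    rw [mul_comm, ← setLIntegral_const]
    apply lintegral_mono
    intro y
    dsimp only
    rw [← ofReal_integral_eq_lintegral_ofReal (hint _)
      (Filter.Eventually.of_forall fun t => by positivity)]
    exact ENNReal.ofReal_le_ofReal (hvar _)
  have step2 : ∫⁻ y in B, ∫⁻ x in Ω, ENNReal.ofReal ((f x - f y) ^ 2) ≤
      ∫⁻ y in B, ∫⁻ x in Ω, ENNReal.ofReal (D ^ 2) * ∫⁻ t in Set.Ioc (0:ℝ) 1, H (x + t * (y - x)) := by
    apply setLIntegral_mono' hBm
    intro y hy
    apply setLIntegral_mono' hΩm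
    intro x hx
    refine (nps_ptwise hΩo hf (hseg x hx y hy) (hdist x hx y hy)).trans ?_
    refine mul_le_mul_right ?_ _
    apply setLIntegral_mono' measurableSet_Ioc
    intro t ht
    rw [hH, Set.indicator_of_mem (hseg x hx y hy t ht.1.le ht.2)]
  have hm3 : Measurable (fun p : (ℂ × ℝ) × ℂ => H (p.2 + p.1.2 * (p.1.1 - p.2))) :=
    hHm.comp (by fun_prop)
  have step3 : ∫⁻ y in B, ∫⁻ x in Ω, ENNReal.ofReal (D ^ 2) * ∫⁻ t in Set.Ioc (0:ℝ) 1, H (x + t * (y - x))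
      = ENNReal.ofReal (D ^ 2) * ∫⁻ t in Set.Ioc (0:ℝ) 1, ∫⁻ y in B, ∫⁻ x in Ω, H (x + t * (y - x)) := by
    have e1 : ∀ y : ℂ, ∫⁻ x in Ω, ENNReal.ofReal (D ^ 2) * ∫⁻ t in Set.Ioc (0:ℝ) 1, H (x + t * (y - x))
        = ENNReal.ofReal (D ^ 2) * ∫⁻ t in Set.Ioc (0:ℝ) 1, ∫⁻ x in Ω, H (x + t * (y - x)) := by
      intro y
      rw [lintegral_const_mul' _ _ ENNReal.ofReal_ne_top, lintegral_lintegral_swap]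
      exact (hHm.comp (f := fun p : ℂ × ℝ => p.1 + p.2 * (y - p.1)) (by fun_prop)).aemeasurable
    simp_rw [e1]
    rw [lintegral_const_mul' _ _ ENNReal.ofReal_ne_top, lintegral_lintegral_swap]
    exact hm3.lintegral_prod_right'.aemeasurable
  have hBV : volume B ≤ volume Ω := measure_mono hB
  have step4 : ∀ t ∈ Set.Ioc (0:ℝ) 1, ∫⁻ y in B, ∫⁻ x in Ω, H (x + t * (y - x)) ≤
      4 * (∫⁻ z, H z) * volume Ω := by
    intro t ht
    rcases le_total t (1 / 2) with h | h
    · calc ∫⁻ y in B, ∫⁻ x in Ω, H (x + t * (y - x)) ≤ ∫⁻ y in B, 4 * ∫⁻ z, H z := by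
            apply lintegral_mono
            intro y
            refine (setLIntegral_le_lintegral _ _).trans ?_
            have := nps_cov hHm (a := 1 - t) (by linarith) (t * y)
            refine le_trans (le_of_eq ?_) this
            congr 1; funext x; congr 1; push_cast; ring
        _ = 4 * (∫⁻ z, H z) * volume B := setLIntegral_const _ _
        _ ≤ _ := by gcongr
    · rw [lintegral_lintegral_swap (f := fun y x => H (x + t * (y - x)))
        (hHm.comp (f := fun p : ℂ × ℂ => p.2 + t * (p.1 - p.2)) (by fun_prop)).aemeasurable]
      calc ∫⁻ x in Ω, ∫⁻ y in B, H (x + t * (y - x)) ≤ ∫⁻ x in Ω, 4 * ∫⁻ z, H z := by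
            apply lintegral_mono
            intro x
            refine (setLIntegral_le_lintegral _ _).trans ?_
            have := nps_cov hHm (a := t) h (x - t * x)
            refine le_trans (le_of_eq ?_) this
            congr 1; funext y; congr 1; ring
        _ = 4 * (∫⁻ z, H z) * volume Ω := setLIntegral_const _ _
  have step5 : ∫⁻ t in Set.Ioc (0:ℝ) 1, ∫⁻ y in B, ∫⁻ x in Ω, H (x + t * (y - x)) ≤
      4 * (∫⁻ z, H z) * volume Ω := by
    refine (setLIntegral_mono' measurableSet_Ioc step4).trans ?_
    rw [setLIntegral_const]; simp
  have hfinal : volume B * ENNReal.ofReal I ≤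
      ENNReal.ofReal (D ^ 2) * (4 * (∫⁻ z, H z) * volume Ω) := by
    refine step1.trans (step2.trans ?_)
    rw [step3]
    gcongr
  have hI0 : 0 ≤ I := integral_nonneg fun z => by positivity
  set E := ∫ z in Ω, ‖fderiv ℝ f z‖ ^ 2 with hE
  have hE0 : 0 ≤ E := integral_nonneg fun z => by positivity
  rw [hHint] at hfinal
  have hne : ENNReal.ofReal (D ^ 2) * (4 * ENNReal.ofReal E * volume Ω) ≠ ∞ := by
    finiteness
  have hreal := ENNReal.toReal_mono hne hfinal
  have hvB : (volume B).toReal = π * ρ ^ 2 := by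
    rw [hBdef, Complex.volume_ball]
    simp [hρ.le]
    ring
  simp only [ENNReal.toReal_mul, ENNReal.toReal_ofReal hI0, ENNReal.toReal_ofReal hE0,
    ENNReal.toReal_ofReal (sq_nonneg D), hvB, ENNReal.toReal_ofNat] at hreal
  rw [div_mul_eq_mul_div, div_mul_eq_mul_div, le_div_iff₀ (by positivity)]
  linarith

open Filter Topology in
lemma nps_deriv_ne {φ : ℂ → ℂ} {U : Set ℂ} (hU : IsOpen U) (hφd : DifferentiableOn ℂ φ U)
    (hφi : Set.InjOn φ U) {z₀ : ℂ} (hz₀ : z₀ ∈ U) : deriv φ z₀ ≠ 0 := by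
  intro hd
  have hUn : U ∈ 𝓝 z₀ := hU.mem_nhds hz₀
  have han : AnalyticAt ℂ φ z₀ := hφd.analyticAt hUn
  have han2 : AnalyticAt ℂ (fun z => φ z - φ z₀) z₀ := han.sub analyticAt_const
  have hne : ¬ ∀ᶠ z in 𝓝 z₀, φ z - φ z₀ = 0 := by
    intro h
    have h2 : ∀ᶠ z in 𝓝 z₀, z = z₀ := by
      filter_upwards [h, hUn] with z hz hzU
      exact hφi hzU hz₀ (sub_eq_zero.1 hz)
    have h3 : ∀ᶠ z in 𝓝[≠] z₀, z = z₀ := h2.filter_mono nhdsWithin_le_nhds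
    obtain ⟨z, hz, hz'⟩ := (h3.and self_mem_nhdsWithin).exists
    exact hz' hz
  obtain ⟨n, g, hg, hg0, hfac⟩ := (han2.exists_eventuallyEq_pow_smul_nonzero_iff).2 hne
  have hn0 : n ≠ 0 := by
    rintro rfl
    have := hfac.self_of_nhds
    simp at this
    exact hg0 this.symm
  have hn1 : n ≠ 1 := by
    rintro rfl
    have h1 : HasDerivAt (fun z => (z - z₀) ^ 1 • g z) (g z₀) z₀ := by
      have : HasDerivAt (fun z => (z - z₀) * g z) (1 * g z₀ + (z₀ - z₀) * deriv g z₀) z₀ :=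
        ((hasDerivAt_id z₀).sub_const z₀).mul hg.differentiableAt.hasDerivAt
      simpa using this
    have h2 := (h1.congr_of_eventuallyEq hfac)
    have h3 : HasDerivAt (fun z => φ z - φ z₀) (deriv φ z₀) z₀ :=
      han.differentiableAt.hasDerivAt.sub_const _
    exact hg0 (by rw [← hd]; exact h2.unique h3)
  set k : ℂ → ℂ := fun z => Complex.exp (Complex.log (g z / g z₀) / n) with hk
  set ψ : ℂ → ℂ := fun z => (z - z₀) * k z with hψ
  have hka : AnalyticAt ℂ k z₀ := by
    have : AnalyticAt ℂ (fun z => Complex.log (g z / g z₀)) z₀ := by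
      refine AnalyticAt.clog (hg.div_const) ?_
      simp [div_self hg0]
    exact (this.div_const).cexp
  have hk0 : k z₀ = 1 := by simp [hk, div_self hg0]
  have hψa : AnalyticAt ℂ ψ z₀ := (analyticAt_id.sub analyticAt_const).mul hka
  have hψd : HasStrictDerivAt ψ 1 z₀ := by
    have h1 : HasDerivAt ψ 1 z₀ := by
      have : HasDerivAt ψ (1 * k z₀ + (z₀ - z₀) * deriv k z₀) z₀ :=
        ((hasDerivAt_id z₀).sub_const z₀).mul hka.differentiableAt.hasDerivAt
      simpa [hk0] using this
    have := hψa.hasStrictDerivAt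
    rwa [h1.deriv] at this
  have hmap := hψd.map_nhds_eq one_ne_zero
  have hψ0 : ψ z₀ = 0 := by simp [hψ]
  rw [hψ0] at hmap
  have hgood : ∀ᶠ z in 𝓝 z₀, z ∈ U ∧ φ z - φ z₀ = g z₀ * ψ z ^ n := by
    filter_upwards [hUn, hfac, hg.continuousAt.eventually_ne hg0] with z h1 h2 h3
    refine ⟨h1, ?_⟩
    rw [h2, hψ, hk]
    simp only [mul_pow, smul_eq_mul]
    rw [← Complex.exp_nat_mul, mul_div_cancel₀ _ (by exact_mod_cast hn0), Complex.exp_log (by positivity)]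
    field_simp
  have him : ∀ᶠ w in 𝓝 (0:ℂ), ∃ z, z ∈ U ∧ φ z - φ z₀ = g z₀ * w ^ n ∧ ψ z = w := by
    rw [← hmap, eventually_map]
    filter_upwards [hgood] with z hz
    exact ⟨z, hz.1, hz.2, rfl⟩
  set ω := Complex.exp (2 * π * Complex.I / n) with hω
  have hprim : IsPrimitiveRoot ω n := Complex.isPrimitiveRoot_exp n hn0
  have him2 : ∀ᶠ w in 𝓝 (0:ℂ), ∃ z, z ∈ U ∧ φ z - φ z₀ = g z₀ * (ω * w) ^ n ∧ ψ z = ω * w := by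
    have : Tendsto (fun w : ℂ => ω * w) (𝓝 0) (𝓝 0) := by
      have : Continuous (fun w : ℂ => ω * w) := by fun_prop
      simpa using this.tendsto 0
    exact this.eventually him
  have h3 : ∀ᶠ w in 𝓝[≠] (0:ℂ), _ := (him.and him2).filter_mono nhdsWithin_le_nhds
  obtain ⟨w, ⟨⟨z1, hz1, e1, p1⟩, ⟨z2, hz2, e2, p2⟩⟩, hw⟩ := (h3.and self_mem_nhdsWithin).exists
  have : z1 = z2 := by
    apply hφi hz1 hz2
    rw [mul_pow, hprim.pow_eq_one, one_mul, ← e1] at e2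
    simpa using e2.symm
  rw [this, p2] at p1
  have : ω = 1 := by
    have hw' : w ≠ 0 := hw
    field_simp at p1
    exact p1
  exact hn1 ((hprim.eq_orderOf).trans (by rw [this]; simp))

open Filter Topology in
lemma nps_seg {φ : ℂ → ℂ} (hφd : DifferentiableOn ℂ φ (Metric.ball 0 1))
    (hφ0 : φ 0 = 0) (hd : ∀ z ∈ Metric.ball (0:ℂ) 1, deriv φ z ≠ 0) {κ : ℝ} (hκ : 0 < κ) (hκ1 : κ ≤ 1)
    (hQ : ∀ z ∈ Metric.ball (0 : ℂ) 1, z ≠ 0 →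
      κ * ‖z * deriv φ z / φ z‖ ≤ (z * deriv φ z / φ z).re)
    {R : ℝ} (hR : 0 < R) (hball : ball 0 R ⊆ φ '' ball 0 1)
    {x y : ℂ} (hx : x ∈ φ '' ball 0 1) (hy : y ∈ ball (0:ℂ) (κ * R)) {t : ℝ} (ht0 : 0 ≤ t)
    (ht1 : t ≤ 1) : x + t * (y - x) ∈ φ '' ball 0 1 := by
  by_contra hcon
  obtain ⟨z₀, hz₀, hxz⟩ := hx
  have hyn : ‖y‖ < κ * R := by simpa using hy
  have hyR : ‖y‖ < R := by nlinarith
  set γ : ℝ → ℂ := fun s => x + s * (y - x) with hγ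
  have hγc : Continuous γ := by fun_prop
  have hbig : ∀ s, 0 ≤ s → s ≤ t → R ≤ ‖γ s‖ := by
    intro s hs0 hst
    by_contra! hlt
    apply hcon
    apply hball
    have ht1' : s < 1 := by
      rcases lt_or_eq_of_le (hst.trans ht1) with h | h
      · exact h
      · exfalso
        have : t = 1 := le_antisymm ht1 (h ▸ hst)
        apply hcon
        apply hball
        rw [this]
        simpa using hyR
    have e : x + t * (y - x) = ((1 - t) / (1 - s) : ℝ) • γ s + ((t - s) / (1 - s) : ℝ) • y := by
      have : (1 - s : ℂ) ≠ 0 := by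
        have : (1 - s : ℝ) ≠ 0 := by linarith
        exact_mod_cast this
      simp only [hγ, Complex.real_smul]
      push_cast
      field_simp
      ring
    rw [e]
    have hs1 : 0 < 1 - s := by linarith
    apply convex_ball (0:ℂ) R (by simpa using hlt) (by simpa using hyR)
    · apply div_nonneg <;> linarith
    · apply div_nonneg <;> linarith
    · field_simp; ring
  set S : Set ℝ := γ ⁻¹' (φ '' closedBall 0 ‖z₀‖) with hS
  have hz₀1 : ‖z₀‖ < 1 := by simpa using hz₀
  have hsub : closedBall (0:ℂ) ‖z₀‖ ⊆ ball 0 1 := closedBall_subset_ball hz₀1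
  have hScl : IsClosed S := by
    refine IsClosed.preimage hγc ?_
    exact ((isCompact_closedBall _ _).image_of_continuousOn (hφd.continuousOn.mono hsub)).isClosed
  have hall : Set.Icc 0 t ⊆ S := by
    apply IsClosed.Icc_subset_of_forall_exists_gt
    · exact hScl.inter isClosed_Icc
    · exact ⟨z₀, by simp, by simp [hγ, hxz]⟩
    rintro s ⟨⟨z, hz, hzs⟩, hs0, hst⟩ s' hs'
    have hz1 := hsub hz
    have hw := hbig s hs0 hst.le
    have hw0 : γ s ≠ 0 := by
      intro h; rw [h] at hw; simp at hw; linarith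
    have hzne : z ≠ 0 := by
      rintro rfl
      exact hw0 (by rw [← hzs, hφ0])
    have hs1 : 0 < 1 - s := by linarith
    have han : AnalyticAt ℂ φ z := hφd.analyticAt (isOpen_ball.mem_nhds hz1)
    have hsd := han.hasStrictDerivAt
    have hdz := hd z hz1
    set ι := hsd.localInverse φ _ z hdz with hι
    have hι1 : ι (φ z) = z := by
      rw [hι]; exact HasStrictFDerivAt.localInverse_apply_image ..
    have hιd : HasDerivAt ι (deriv φ z)⁻¹ (γ s) := by
      rw [← hzs]; exact (hsd.to_localInverse hdz).hasDerivAt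
    have hιr : ∀ᶠ w in 𝓝 (γ s), φ (ι w) = w := by
      rw [← hzs]; exact hsd.eventually_right_inverse hdz
    have hγd : HasDerivAt γ (y - x) s := by
      have h1 : HasDerivAt (fun s : ℝ => (s:ℂ)) 1 s := Complex.ofRealCLM.hasDerivAt
      have h2 : HasDerivAt γ (1 * (y - x)) s := (h1.mul_const (y - x)).const_add x
      simpa using h2
    have hcomp : HasDerivAt (fun u => ι (γ u)) ((deriv φ z)⁻¹ * (y - x)) s := by
      have := hιd.comp s hγd
      exact this
    have hN := hcomp.norm_sq
    have hιs : ι (γ s) = z := by rw [← hzs, hι1]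
    set D := 2 * inner ℝ (ι (γ s)) ((deriv φ z)⁻¹ * (y - x)) with hD
    have hDneg : D < 0 := by
      set q := z * deriv φ z / φ z with hq
      have hφz : φ z ≠ 0 := by rw [hzs]; exact hw0
      have hq0 : q ≠ 0 := by
        simp only [hq]; exact div_ne_zero (mul_ne_zero hzne hdz) hφz
      have h1 := hQ z hz1 hzne
      rw [← hq] at h1
      have hyx : y - x = ((1 - s)⁻¹ : ℝ) * (y - φ z) := by
        have : (1 - s : ℂ) ≠ 0 := by exact_mod_cast hs1.ne'
        rw [hzs]; simp only [hγ]; push_cast; field_simp; ring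
      have e : (starRingEnd ℂ) z * ((deriv φ z)⁻¹ * (y - x)) =
          ((‖z‖ ^ 2 * (1 - s)⁻¹ : ℝ) : ℂ) * (y / φ z / q - q⁻¹) := by
        rw [hyx]
        have : (starRingEnd ℂ) z = (‖z‖ ^ 2 : ℝ) / z := by
          rw [eq_div_iff hzne, mul_comm, Complex.mul_conj, Complex.normSq_eq_norm_sq]
        rw [this, hq]
        push_cast
        field_simp
      rw [hD, hιs, Complex.inner, mul_comm ((deriv φ z)⁻¹ * (y - x)) , e, Complex.re_ofReal_mul]
      have hpos : 0 < ‖z‖ ^ 2 * (1 - s)⁻¹ := by positivity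
      have hneg : (y / φ z / q - q⁻¹).re < 0 := by
        rw [Complex.sub_re, Complex.inv_re, Complex.normSq_eq_norm_sq]
        have hqn : 0 < ‖q‖ := norm_pos_iff.2 hq0
        have h2 : (y / φ z / q).re ≤ ‖y‖ / ‖φ z‖ / ‖q‖ := by
          have := Complex.re_le_norm (y / φ z / q)
          simpa using this
        have h3 : ‖y‖ / ‖φ z‖ < κ := by
          rw [div_lt_iff₀ (norm_pos_iff.2 hφz)]
          rw [hzs]
          nlinarith
        have h4 : κ / ‖q‖ ≤ q.re / ‖q‖ ^ 2 := by
          rw [div_le_div_iff₀ hqn (by positivity)]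
          nlinarith
        have h5 : ‖y‖ / ‖φ z‖ / ‖q‖ < κ / ‖q‖ := by gcongr
        linarith
      nlinarith [mul_pos hpos (neg_pos.2 hneg)]
    have hsl := hasDerivAt_iff_tendsto_slope.1 hN
    have hev := hsl.eventually (gt_mem_nhds hDneg)
    have hev2 : ∀ᶠ u in 𝓝[>] s, slope (fun u => ‖ι (γ u)‖ ^ 2) s u < 0 :=
      hev.filter_mono (nhdsWithin_mono _ (fun u hu => ne_of_gt hu))
    have hev3 : ∀ᶠ u in 𝓝[>] s, φ (ι (γ u)) = γ u :=
      (hγc.continuousAt.eventually hιr).filter_mono nhdsWithin_le_nhds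
    have hev4 : ∀ᶠ u in 𝓝[>] s, u ∈ Set.Ioc s s' := Ioc_mem_nhdsGT hs'
    obtain ⟨u, hu1, hu2, hu3⟩ := (hev2.and (hev3.and hev4)).exists
    refine ⟨u, ⟨ι (γ u), ?_, hu2⟩, hu3⟩
    have hus : 0 < u - s := sub_pos.2 hu3.1
    rw [slope_def_field, div_lt_iff₀ hus, hιs] at hu1
    have h6 : ‖ι (γ u)‖ ^ 2 < ‖z‖ ^ 2 := by linarith
    have h7 : ‖ι (γ u)‖ < ‖z‖ := lt_of_pow_lt_pow_left₀ 2 (norm_nonneg _) h6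
    have h8 : ‖z‖ ≤ ‖z₀‖ := by simpa using hz
    simpa using (h7.trans_le h8).le
  obtain ⟨z, hz, e⟩ := hall ⟨ht0, le_rfl⟩
  exact hcon ⟨z, hsub hz, e⟩

lemma nps_ratio {φ : ℂ → ℂ} (hφd : DifferentiableOn ℂ φ (Metric.ball 0 1))
    (hφi : Set.InjOn φ (Metric.ball 0 1)) 
    (hφ0 : φ 0 = 0) (hd : deriv φ 0 ≠ 0) {κ : ℝ} (hκ : 0 < κ)
    (hQ : ∀ z ∈ Metric.ball (0 : ℂ) 1, z ≠ 0 →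
      κ * ‖z * deriv φ z / φ z‖ ≤ (z * deriv φ z / φ z).re)
    {r : ℝ} (hr0 : 0 < r) (hr1 : r < 1) {z₁ z₂ : ℂ} (h₁ : ‖z₁‖ = r) (h₂ : ‖z₂‖ = r) :
    ‖φ z₁‖ ≤ exp (2 * π / κ) * ‖φ z₂‖ := by
  have h0b : (0:ℂ) ∈ ball (0:ℂ) 1 := by simp
  have hφne : ∀ z ∈ ball (0:ℂ) 1, z ≠ 0 → φ z ≠ 0 := fun z hz hz0 h =>
    hz0 (hφi hz h0b (by rw [h, hφ0]))
  set h : ℂ → ℂ := dslope φ 0 with hh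
  have hhd : DifferentiableOn ℂ h (ball 0 1) :=
    (Complex.differentiableOn_dslope (ball_mem_nhds _ one_pos)).2 hφd
  have hfac : ∀ z, φ z = z * h z := by
    intro z
    have := sub_smul_dslope φ 0 z
    simpa [hφ0] using this.symm
  have hh0 : h 0 = deriv φ 0 := by simp [hh]
  have hhne : ∀ z ∈ ball (0:ℂ) 1, h z ≠ 0 := by
    intro z hz
    by_cases hz0 : z = 0
    · rw [hz0, hh0]; exact hd
    · intro h'
      exact hφne z hz hz0 (by rw [hfac, h', mul_zero])
  have hhdd : DifferentiableOn ℂ (deriv h) (ball 0 1) := hhd.deriv isOpen_ball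
  set P : ℂ → ℂ := fun z => 1 + z * deriv h z / h z with hP
  have hPd : DifferentiableOn ℂ P (ball 0 1) := by
    apply DifferentiableOn.const_add
    exact (differentiableOn_id.mul hhdd).div hhd hhne
  have hPQ : ∀ z ∈ ball (0:ℂ) 1, z ≠ 0 → P z = z * deriv φ z / φ z := by
    intro z hz hz0
    have h1 : HasDerivAt (fun z => z * h z) (1 * h z + z * deriv h z) z :=
      (hasDerivAt_id z).mul (hhd.differentiableAt (isOpen_ball.mem_nhds hz)).hasDerivAt
    have h2 : deriv φ z = 1 * h z + z * deriv h z := by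
      rw [← h1.deriv]; congr 1; funext w; exact hfac w
    have := hhne z hz
    rw [h2, hfac, hP]
    field_simp
  have hcb : closedBall (0:ℂ) r ⊆ ball 0 1 := closedBall_subset_ball hr1
  have hcm : ∀ θ, circleMap 0 r θ ∈ ball (0:ℂ) 1 := fun θ =>
    hcb (circleMap_mem_closedBall 0 hr0.le θ)
  have hcm0 : ∀ θ, circleMap 0 r θ ≠ 0 := fun θ => circleMap_ne_center hr0.ne'
  have hPc : Continuous (fun θ => P (circleMap 0 r θ)) :=
    hPd.continuousOn.comp_continuous (continuous_circleMap 0 r) hcm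
  have hmean : ∫ θ in (0:ℝ)..2 * π, P (circleMap 0 r θ) = 2 * π := by
    have hdc : DiffContOnCl ℂ P (ball 0 |r|) := by
      rw [abs_of_pos hr0]
      exact (hPd.mono hcb).diffContOnCl_ball subset_rfl
    have := hdc.circleAverage
    rw [circleAverage_def, inv_smul_eq_iff₀ (by positivity)] at this
    rw [this]
    simp [hP]
  have hmeanre : ∫ θ in (0:ℝ)..2 * π, (P (circleMap 0 r θ)).re = 2 * π := by
    have := Complex.reCLM.intervalIntegral_comp_comm (hPc.intervalIntegrable (μ := volume) 0 (2 * π))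
    simp only [Complex.reCLM_apply] at this
    rw [this, hmean]
    simp
  have hre : ∀ θ, κ * ‖P (circleMap 0 r θ)‖ ≤ (P (circleMap 0 r θ)).re := by
    intro θ
    rw [hPQ _ (hcm θ) (hcm0 θ)]
    exact hQ _ (hcm θ) (hcm0 θ)
  set g : ℝ → ℂ := fun θ => φ (circleMap 0 r θ) with hg
  have hgne : ∀ θ, g θ ≠ 0 := fun θ => hφne _ (hcm θ) (hcm0 θ)
  have hgd : ∀ θ, HasDerivAt g (g θ * (P (circleMap 0 r θ) * Complex.I)) θ := by
    intro θ
    have h1 : HasDerivAt φ (deriv φ (circleMap 0 r θ)) (circleMap 0 r θ) :=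
      (hφd.differentiableAt (isOpen_ball.mem_nhds (hcm θ))).hasDerivAt
    have h2 := h1.comp θ (hasDerivAt_circleMap 0 r θ)
    have h3 : g θ * (P (circleMap 0 r θ) * Complex.I) =
        deriv φ (circleMap 0 r θ) * (circleMap 0 r θ * Complex.I) := by
      rw [hPQ _ (hcm θ) (hcm0 θ)]
      have := hgne θ
      simp only [hg] at this ⊢
      field_simp
    rw [h3]
    exact h2
  have hFd : ∀ θ, HasDerivAt (fun θ => Real.log (‖g θ‖ ^ 2)) (-2 * (P (circleMap 0 r θ)).im) θ := by
    intro θ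
    have hgp : 0 < ‖g θ‖ := norm_pos_iff.2 (hgne θ)
    have := (hgd θ).norm_sq.log (by positivity)
    convert this using 1
    rw [Complex.inner, eq_div_iff (by positivity)]
    have e : g θ * (P (circleMap 0 r θ) * Complex.I) * (starRingEnd ℂ) (g θ) =
      ((‖g θ‖ ^ 2 : ℝ) : ℂ) * (P (circleMap 0 r θ) * Complex.I) := by
      rw [← Complex.normSq_eq_norm_sq, ← Complex.mul_conj]; ring
    rw [e, Complex.re_ofReal_mul]
    simp
    ring
  have hic : Continuous (fun θ => -2 * (P (circleMap 0 r θ)).im) :=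
    continuous_const.mul (Complex.continuous_im.comp hPc)
  have hrc : Continuous (fun θ => (2 / κ) * (P (circleMap 0 r θ)).re) :=
    continuous_const.mul (Complex.continuous_re.comp hPc)
  have hmem : ∀ z : ℂ, ‖z‖ = r → ∃ θ ∈ Set.Ioc 0 (2 * π), circleMap 0 r θ = z := by
    intro z hz
    have : z ∈ sphere (0:ℂ) |r| := by simp [hz, abs_of_pos hr0]
    rw [← image_circleMap_Ioc] at this
    exact this
  obtain ⟨θ₁, hθ₁, e1⟩ := hmem z₁ h₁
  obtain ⟨θ₂, hθ₂, e2⟩ := hmem z₂ h₂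
  have hftc := intervalIntegral.integral_eq_sub_of_hasDerivAt (a := θ₂) (b := θ₁)
    (fun θ _ => hFd θ) (hic.intervalIntegrable _ _)
  have hpt : ∀ θ, ‖-2 * (P (circleMap 0 r θ)).im‖ ≤ (2 / κ) * (P (circleMap 0 r θ)).re := by
    intro θ
    have a1 := hre θ
    have a2 := Complex.abs_im_le_norm (P (circleMap 0 r θ))
    rw [Real.norm_eq_abs, abs_mul, abs_neg, abs_two, div_mul_eq_mul_div, le_div_iff₀ hκ]
    nlinarith
  have hpt0 : ∀ θ, 0 ≤ (2 / κ) * (P (circleMap 0 r θ)).re := fun θ => (norm_nonneg _).trans (hpt θ)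
  have hbound : ∫ θ in θ₂..θ₁, -2 * (P (circleMap 0 r θ)).im ≤ 4 * π / κ := by
    calc ∫ θ in θ₂..θ₁, -2 * (P (circleMap 0 r θ)).im
        ≤ ‖∫ θ in θ₂..θ₁, -2 * (P (circleMap 0 r θ)).im‖ := le_norm_self _
      _ ≤ ∫ θ in Set.uIoc θ₂ θ₁, ‖-2 * (P (circleMap 0 r θ)).im‖ :=
          intervalIntegral.norm_integral_le_integral_norm_uIoc
      _ ≤ ∫ θ in Set.uIoc θ₂ θ₁, (2 / κ) * (P (circleMap 0 r θ)).re := by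
          apply setIntegral_mono
          · exact (hic.norm.intervalIntegrable _ _).def'
          · exact (hrc.intervalIntegrable _ _).def'
          · exact hpt
      _ ≤ ∫ θ in Set.Ioc 0 (2 * π), (2 / κ) * (P (circleMap 0 r θ)).re := by
          apply setIntegral_mono_set
          · exact ((hrc.intervalIntegrable 0 (2 * π)).1)
          · exact Filter.Eventually.of_forall hpt0
          · apply Filter.Eventually.of_forall
            intro θ (hθ : θ ∈ Set.Ioc (min θ₂ θ₁) (max θ₂ θ₁))
            exact ⟨(le_min hθ₂.1.le hθ₁.1.le).trans_lt hθ.1, hθ.2.trans (max_le hθ₂.2 hθ₁.2)⟩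
      _ = 4 * π / κ := by
          rw [← intervalIntegral.integral_of_le (by positivity), intervalIntegral.integral_const_mul,
            hmeanre]
          ring
  rw [hftc] at hbound
  have hg1 : g θ₁ = φ z₁ := by simp [hg, e1]
  have hg2 : g θ₂ = φ z₂ := by simp [hg, e2]
  have p1 : 0 < ‖φ z₁‖ := by rw [← hg1]; exact norm_pos_iff.2 (hgne _)
  have p2 : 0 < ‖φ z₂‖ := by rw [← hg2]; exact norm_pos_iff.2 (hgne _)
  rw [hg1, hg2, Real.log_pow, Real.log_pow] at hbound
  rw [← Real.log_le_log_iff p1 (by positivity), Real.log_mul (by positivity) (by positivity), Real.log_exp]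
  push_cast at hbound
  have : 4 * π / κ = 2 * (2 * π / κ) := by ring
  linarith

lemma nps_const {c κ α : ℝ} (hc : 1 ≤ c) (hκ : 0 < κ) (hκc : 1 ≤ κ * c) (hα : 2 < α)
    (hν : (10 : ℝ) ^ (4 * α) * (24 * π ^ 2 * c ^ 4) ^ α * ((α - 2) / (α - 1)) < 1) :
    256 * exp (4 * π / κ) / (π * κ ^ 2) ≤ 
      ((10 ^ 6 / ((α - 1) * (1 - (10 : ℝ) ^ (4 * α) * (24 * π ^ 2 * c ^ 4) ^ α *
                ((α - 2) / (α - 1)))) ^ (1 / α)) ^ 2 * c ^ 4 / π) *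
          ((2 * α - 2) / (α - 2)) ^ ((2 * α - 2) / α) *
          Real.exp (π ^ 2 * (2 + π ^ 4) ^ 2 * c ^ 4 / (2 * Real.log 3)) := by
  have hpi3 : 3 < π := pi_gt_three
  have hpi4 : π ≤ 4 := pi_le_four
  have hc2 : 1 ≤ c ^ 2 := one_le_pow₀ hc
  have hc4 : 1 ≤ c ^ 4 := one_le_pow₀ hc
  have hα1 : 0 < α - 1 := by linarith
  have hα2 : 0 < α - 2 := by linarith
  set V := (10 : ℝ) ^ (4 * α) * (24 * π ^ 2 * c ^ 4) ^ α * ((α - 2) / (α - 1)) with hV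
  have hV0 : 0 ≤ V := by positivity
  have h10 : (10:ℝ) ≤ (10:ℝ) ^ (4 * α) := by
    have := Real.rpow_le_rpow_of_exponent_le (x := 10) (by norm_num) (show (1:ℝ) ≤ 4 * α by linarith)
    simpa using this
  have h24 : (1:ℝ) ≤ (24 * π ^ 2 * c ^ 4) ^ α := by
    apply Real.one_le_rpow _ (by linarith)
    nlinarith [mul_le_mul (show (1:ℝ) ≤ 24 * π ^ 2 by nlinarith) hc4 zero_le_one (by positivity)]
  have hα3 : α - 1 ≤ 2 := by
    have hp : (10:ℝ) ≤ (10 : ℝ) ^ (4 * α) * (24 * π ^ 2 * c ^ 4) ^ α := by nlinarith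
    have h1 : 10 * ((α - 2) / (α - 1)) < 1 := lt_of_le_of_lt (by rw [hV]; gcongr) hν
    rw [← mul_div_assoc, div_lt_one hα1] at h1
    linarith
  set b := (α - 1) * (1 - V) with hb
  have hb0 : 0 < b := mul_pos hα1 (by linarith)
  have hb2 : b ≤ 2 := by nlinarith
  have hbp : b ^ (1 / α) ≤ 2 := by
    calc b ^ (1 / α) ≤ 2 ^ (1 / α) := Real.rpow_le_rpow hb0.le hb2 (by positivity)
      _ ≤ 2 ^ (1:ℝ) := Real.rpow_le_rpow_of_exponent_le (by norm_num)
          (by rw [div_le_one (by linarith)]; linarith)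
      _ = 2 := by simp
  have hbp0 : 0 < b ^ (1 / α) := by positivity
  have hA : 16 ≤ 10 ^ 6 / b ^ (1 / α) := by
    rw [le_div_iff₀ hbp0]; linarith
  have hT : 1 ≤ ((2 * α - 2) / (α - 2)) ^ ((2 * α - 2) / α) := by
    apply Real.one_le_rpow
    · rw [le_div_iff₀ hα2]; linarith
    · apply div_nonneg <;> linarith
  have hinv : 1 / κ ≤ c := by rw [div_le_iff₀ hκ]; linarith
  have hlog : Real.log 3 ≤ 2 := by
    have := Real.log_le_sub_one_of_pos (show (0:ℝ) < 3 by norm_num)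
    linarith
  have hlog0 : 0 < Real.log 3 := Real.log_pos (by norm_num)
  have hX : 4 * π / κ ≤ π ^ 2 * (2 + π ^ 4) ^ 2 * c ^ 4 / (2 * Real.log 3) := by
    have h1 : 4 * π / κ ≤ 16 * c := by
      calc 4 * π / κ = 4 * π * (1 / κ) := by ring
        _ ≤ 4 * 4 * c := by gcongr
        _ = 16 * c := by ring
    have h2 : c ≤ c ^ 4 := le_self_pow₀ hc (by norm_num)
    have h3 : 64 ≤ π ^ 2 * (2 + π ^ 4) ^ 2 := by
      have a1 : (9:ℝ) ≤ π ^ 2 := by nlinarith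
      have a2 : (81:ℝ) ≤ π ^ 4 := by nlinarith
      nlinarith
    refine h1.trans ?_
    rw [le_div_iff₀ (by positivity)]
    calc 16 * c * (2 * Real.log 3) ≤ 16 * c ^ 4 * (2 * 2) := by gcongr
      _ = 64 * c ^ 4 := by ring
      _ ≤ _ := by gcongr
  have h256 : 256 / (π * κ ^ 2) ≤ (10 ^ 6 / b ^ (1 / α)) ^ 2 * c ^ 4 / π := by
    have e : 256 / (π * κ ^ 2) = 16 ^ 2 * (1 / κ) ^ 2 / π := by field_simp; norm_num
    rw [e]
    have : (1 / κ) ^ 2 ≤ c ^ 4 := by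
      calc (1 / κ) ^ 2 ≤ c ^ 2 := by gcongr
        _ ≤ c ^ 4 := pow_le_pow_right₀ hc (by norm_num)
    gcongr
  calc 256 * exp (4 * π / κ) / (π * κ ^ 2) = 256 / (π * κ ^ 2) * 1 * exp (4 * π / κ) := by ring
    _ ≤ _ := by gcongr


theorem neumann_poincare_star_shaped
    (β : ℝ) (hβ0 : 0 < β) (hβ1 : β < 1)
    (φ : ℂ → ℂ) (hφd : DifferentiableOn ℂ φ (Metric.ball 0 1))
    (hφi : Set.InjOn φ (Metric.ball 0 1)) (hφ0 : φ 0 = 0)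
    (hstar : ∀ z ∈ Metric.ball (0 : ℂ) 1, z ≠ 0 →
      |Complex.arg (z * deriv φ z / φ z)| ≤ β * π / 2)
    (Ω : Set ℂ) (hΩ : Ω = φ '' Metric.ball 0 1) (hbdd : Bornology.IsBounded Ω)
    (K : ℝ) (hKdef : K = Real.cot ((1 - β) * π / 4) ^ 2)
    (α : ℝ) (hα : 2 < α) (hαK : α * (K ^ 2 - 1) < 2 * K ^ 2)
    (hν : (10 : ℝ) ^ (4 * α) * (24 * π ^ 2 * Real.cot ((1 - β) * π / 4) ^ 4) ^ α *
        ((α - 2) / (α - 1)) < 1)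
    (f : ℂ → ℝ) (hf : ContDiffOn ℝ 1 f Ω)
    (hf2 : IntegrableOn (fun z => (f z) ^ 2) Ω)
    (hg2 : IntegrableOn (fun z => ‖fderiv ℝ f z‖ ^ 2) Ω) :
    ∫ z in Ω, (f z - ⨍ w in Ω, f w) ^ 2
      ≤ ((10 ^ 6 /
            ((α - 1) *
              (1 - (10 : ℝ) ^ (4 * α) * (24 * π ^ 2 * Real.cot ((1 - β) * π / 4) ^ 4) ^ α *
                ((α - 2) / (α - 1)))) ^ (1 / α)) ^ 2 *
            Real.cot ((1 - β) * π / 4) ^ 4 / π) *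
          ((2 * α - 2) / (α - 2)) ^ ((2 * α - 2) / α) *
          Real.exp (π ^ 2 * (2 + π ^ 4) ^ 2 * Real.cot ((1 - β) * π / 4) ^ 4 /
            (2 * Real.log 3)) *
          (volume Ω).toReal *
          ∫ z in Ω, ‖fderiv ℝ f z‖ ^ 2 := by
  set x := (1 - β) * π / 4 with hx
  have hpi := Real.pi_pos
  have hx0 : 0 < x := by have : 0 < 1 - β := by linarith
                         positivity
  have hx4 : x < π / 4 := by rw [hx]; nlinarith
  set c := Real.cot x with hcdef
  have hsin : 0 < Real.sin x := Real.sin_pos_of_pos_of_lt_pi hx0 (by linarith)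
  have hcos : 0 < Real.cos x := Real.cos_pos_of_mem_Ioo ⟨by linarith, by linarith⟩
  have hsc : Real.sin x ≤ Real.cos x := by
    rw [← Real.sin_pi_div_two_sub]
    exact Real.sin_le_sin_of_le_of_le_pi_div_two (by linarith) (by linarith) (by linarith)
  have hc : 1 ≤ c := by
    rw [hcdef, Real.cot_eq_cos_div_sin, le_div_iff₀ hsin]; linarith
  set κ := Real.cos (β * π / 2) with hκdef
  have hκs : κ = 2 * Real.sin x * Real.cos x := by
    rw [← Real.sin_two_mul, hκdef, ← Real.sin_pi_div_two_sub]
    congr 1; rw [hx]; ring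
  have hκ : 0 < κ := by rw [hκs]; positivity
  have hκ1 : κ ≤ 1 := Real.cos_le_one _
  have hκc : 1 ≤ κ * c := by
    have : κ * c = 2 * Real.cos x ^ 2 := by
      rw [hκs, hcdef, Real.cot_eq_cos_div_sin]; field_simp
    rw [this]
    nlinarith [Real.sin_sq_add_cos_sq x]
  have hd : ∀ z ∈ ball (0:ℂ) 1, deriv φ z ≠ 0 := fun z hz => nps_deriv_ne isOpen_ball hφd hφi hz
  have hQ : ∀ z ∈ Metric.ball (0 : ℂ) 1, z ≠ 0 →
      κ * ‖z * deriv φ z / φ z‖ ≤ (z * deriv φ z / φ z).re := by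
    intro z hz hz0
    have h1 := hstar z hz hz0
    rw [← Complex.norm_mul_cos_arg (z * deriv φ z / φ z), mul_comm, ← Real.cos_abs (Complex.arg _)]
    refine mul_le_mul_of_nonneg_left ?_ (norm_nonneg _)
    apply Real.cos_le_cos_of_nonneg_of_le_pi (abs_nonneg _) _ h1
    nlinarith
  have hΩo : IsOpen Ω := by
    rw [isOpen_iff_mem_nhds, hΩ]
    rintro _ ⟨z, hz, rfl⟩
    have han : AnalyticAt ℂ φ z := hφd.analyticAt (isOpen_ball.mem_nhds hz)
    rw [← han.hasStrictDerivAt.map_nhds_eq (hd z hz)]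
    exact Filter.image_mem_map (isOpen_ball.mem_nhds hz)
  have hfin : volume Ω ≠ ∞ := hbdd.measure_lt_top.ne
  have h0b : (0:ℂ) ∈ ball (0:ℂ) 1 := by simp
  have hφne : ∀ z ∈ ball (0:ℂ) 1, z ≠ 0 → φ z ≠ 0 := fun z hz hz0 h =>
    hz0 (hφi hz h0b (by rw [h, hφ0]))
  obtain ⟨C, hC⟩ := hbdd.exists_norm_le
  set N : Set ℝ := norm '' Ω with hN
  have hNb : BddAbove N := ⟨C, by rintro _ ⟨w, hw, rfl⟩; exact hC w hw⟩
  set s := sSup N with hs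
  have hle : ∀ w ∈ Ω, ‖w‖ ≤ s := fun w hw => le_csSup hNb ⟨w, hw, rfl⟩
  have hhalf : (1/2 : ℂ) ∈ ball (0:ℂ) 1 := by
    simp; norm_num
  have hhΩ : φ (1/2) ∈ Ω := by rw [hΩ]; exact ⟨_, hhalf, rfl⟩
  have hs0 : 0 < s := lt_of_lt_of_le (norm_pos_iff.2 (hφne _ hhalf (by norm_num))) (hle _ hhΩ)
  obtain ⟨_, ⟨w, hw, rfl⟩, hws⟩ := exists_lt_of_lt_csSup (s := N) ⟨_, _, hhΩ, rfl⟩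
    (show s / 2 < sSup N by rw [← hs]; linarith)
  rw [hΩ] at hw
  obtain ⟨z, hz, rfl⟩ := hw
  have hz0 : z ≠ 0 := by
    rintro rfl
    rw [hφ0] at hws; simp at hws; linarith
  have hr0 : 0 < ‖z‖ := norm_pos_iff.2 hz0
  have hr1 : ‖z‖ < 1 := by simpa using hz
  set Ex := Real.exp (2 * π / κ) with hEx
  have hEx0 : 0 < Ex := Real.exp_pos _
  set R := s / (4 * Ex) with hR
  have hR0 : 0 < R := by positivity
  have hcb : closedBall (0:ℂ) ‖z‖ ⊆ ball 0 1 := closedBall_subset_ball hr1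
  have hball : ball 0 R ⊆ φ '' ball 0 1 := by
    have hdc : DiffContOnCl ℂ φ (ball 0 ‖z‖) := (hφd.mono hcb).diffContOnCl_ball subset_rfl
    have h1 := hdc.ball_subset_image_closedBall hr0 (ε := s / (2 * Ex)) ?_ ?_
    · rw [hφ0, show s / (2 * Ex) / 2 = R by rw [hR]; field_simp; norm_num] at h1
      exact h1.trans (Set.image_mono hcb)
    · intro z' hz'
      have := nps_ratio hφd hφi hφ0 (hd 0 h0b) hκ hQ hr0 hr1 rfl (show ‖z'‖ = ‖z‖ by simpa using hz')
      rw [hφ0, sub_zero, div_le_iff₀ (by positivity)]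
      rw [← hEx] at this
      nlinarith
    · have hev : ∀ᶠ u in nhdsWithin (0:ℂ) {0}ᶜ, φ u ≠ φ 0 := by
        have hb : ∀ᶠ u in nhdsWithin (0:ℂ) {0}ᶜ, u ∈ ball (0:ℂ) 1 :=
          nhdsWithin_le_nhds (isOpen_ball.mem_nhds h0b)
        filter_upwards [hb, self_mem_nhdsWithin] with u hu hu0
        rw [hφ0]; exact hφne u hu hu0
      exact hev.frequently.filter_mono nhdsWithin_le_nhds
  have hsub : ball (0:ℂ) (κ * R) ⊆ Ω := by
    rw [hΩ]; exact (ball_subset_ball (by nlinarith)).trans hball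
  have hP := nps_poincare hΩo hfin (ρ := κ * R) (D := 2 * s) (by positivity) hsub
    (fun x hx y hy => by
      have := norm_sub_le y x
      have h1 := hle x hx
      have h2 := hle y (hsub hy)
      linarith)
    (fun x hx y hy t ht0 ht1 => by
      rw [hΩ] at hx ⊢
      exact nps_seg hφd hφ0 hd hκ hκ1 hQ hR0 hball hx hy ht0 ht1) hf hf2 hg2
  refine hP.trans ?_
  have hcst := nps_const hc hκ hκc hα hν
  have e : 4 * (2 * s) ^ 2 / (π * (κ * R) ^ 2) = 256 * exp (4 * π / κ) / (π * κ ^ 2) := by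
    have : exp (4 * π / κ) = Ex ^ 2 := by
      rw [hEx, ← Real.exp_nat_mul]; congr 1; push_cast; ring
    rw [this, hR]
    field_simp
    norm_num
  rw [e]
  have hE0 : 0 ≤ ∫ z in Ω, ‖fderiv ℝ f z‖ ^ 2 := integral_nonneg fun z => by positivity
  exact mul_le_mul_of_nonneg_right (mul_le_mul_of_nonneg_right hcst ENNReal.toReal_nonneg) hE0
end

section
/- Let 0 < β < 1, set K = cot²((1−β)π/4), and let φ : 𝔻 → ℂ be an injective holomorphic function with φ(0) = 0 such that for some real δ with |δ| < βπ/2 the spiral-shapedness condition |arg(e^{iδ}·z·φ′(z)/φ(z))| ≤ βπ/2 holds for all z ∈ 𝔻, z ≠ 0. Suppose Ω = φ(𝔻) is bounded. Then for every α with 2 < α, α(K² − 1) < 2K², and ν := 10^{4α}·(24π²·cot⁴((1−β)π/4))^α·(α−2)/(α−1) < 1, every test function f on Ω satisfies ∬_Ω |f − f_Ω|² dxdy ≤ (C_α²·cot⁴((1−β)π/4)/π) · ((2α−2)/(α−2))^{(2α−2)/α} · exp{π²(2 + π⁴)²·cot⁴((1−β)π/4)/(2 log 3)} · |Ω| ·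 ∬_Ω |∇f|² dxdy, where C_α = 10⁶/[(α−1)(1−ν)]^{1/α}. -/
open MeasureTheory Metric Real
open scoped ENNReal NNReal

lemma aux_flow (φ : ℂ → ℂ) (hφd : DifferentiableOn ℂ φ (Metric.ball 0 1)) (hφ0 : φ 0 = 0)
    (hd : ∀ z ∈ Metric.ball (0 : ℂ) 1, z ≠ 0 → deriv φ z ≠ 0) (μ : ℂ)
    (hμ : ∀ z ∈ Metric.ball (0 : ℂ) 1, z ≠ 0 → 0 ≤ (μ * φ z / (z * deriv φ z)).re)
    (w : ℂ) (hw : w ∈ φ '' Metric.ball 0 1) (t : ℝ) (ht : t ∈ Set.Icc (0 : ℝ) 1) :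
    Complex.exp (-(t * μ)) * w ∈ φ '' Metric.ball 0 1 := by
  obtain ⟨z0, hz0, rfl⟩ := hw
  by_cases hw0 : φ z0 = 0
  · exact ⟨0, by simp, by simp [hw0, hφ0]⟩
  set P : ℝ → ℂ := fun t => Complex.exp (-(t * μ)) * φ z0 with hP
  have hPd : ∀ t, HasDerivAt P (-μ * P t) t := by
    intro t
    have h1 : HasDerivAt (fun t : ℝ => -((t : ℂ) * μ)) (-(1 * μ)) t :=
      ((Complex.ofRealCLM.hasDerivAt (x := t)).mul_const μ).neg
    have h2 := (h1.cexp).mul_const (φ z0)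
    refine HasDerivAt.congr_deriv (f := P) h2 ?_
    show _ = -μ * (Complex.exp (-(t * μ)) * φ z0)
    ring
  have hP0 : ∀ t, P t ≠ 0 := fun t => mul_ne_zero (Complex.exp_ne_zero _) hw0
  have hPc : Continuous P := continuous_iff_continuousAt.2 fun t => (hPd t).continuousAt
  have hz01 : ‖z0‖ < 1 := by simpa using hz0
  have hsub : closedBall (0 : ℂ) ‖z0‖ ⊆ ball 0 1 := closedBall_subset_ball hz01
  have hcl : IsClosed (φ '' closedBall 0 ‖z0‖) :=
    ((isCompact_closedBall _ _).image_of_continuousOn (hφd.continuousOn.mono hsub)).isClosed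
  suffices h : Set.Icc (0 : ℝ) 1 ⊆ P ⁻¹' (φ '' closedBall 0 ‖z0‖) from
    Set.image_mono hsub (h ht)
  refine IsClosed.Icc_subset_of_forall_exists_gt ((hcl.preimage hPc).inter isClosed_Icc) ?_ ?_
  · exact ⟨z0, by simp, by simp [hP]⟩
  rintro x ⟨⟨zx, hzx, hφx⟩, hx01⟩ y hy
  have hzx1 : zx ∈ ball (0 : ℂ) 1 := hsub hzx
  have hzx0 : zx ≠ 0 := by
    rintro rfl
    exact hP0 x (by rw [← hφx, hφ0])
  have hstrict : ∀ z ∈ ball (0 : ℂ) 1, HasStrictDerivAt φ (deriv φ z) z := fun z hz =>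
    ((hφd.analyticOnNhd isOpen_ball) z hz).hasStrictDerivAt
  have hS := hstrict zx hzx1
  have hne := hd zx hzx1 hzx0
  set g := hS.localInverse φ (deriv φ zx) zx hne with hg
  have hli : ∀ᶠ z in nhds zx, g (φ z) = z := hS.eventually_left_inverse hne
  have hri : ∀ᶠ v in nhds (φ zx), φ (g v) = v := hS.eventually_right_inverse hne
  have hgx : g (φ zx) = zx := hli.self_of_nhds
  have hgc : ContinuousAt g (φ zx) := (hS.to_localInverse hne).hasDerivAt.continuousAt
  have hPt : Filter.Tendsto P (nhds x) (nhds (φ zx)) := by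
    rw [hφx]; exact hPc.continuousAt
  have hψt : Filter.Tendsto (fun t => g (P t)) (nhds x) (nhds zx) := by
    have := hgc.tendsto.comp hPt
    rwa [hgx] at this
  have hgood : ∀ᶠ z in nhds zx, z ∈ ball (0 : ℂ) 1 ∧ z ≠ 0 ∧ ∀ᶠ z' in nhds z, g (φ z') = z' :=
    (isOpen_ball.eventually_mem hzx1).and ((isOpen_ne.eventually_mem hzx0).and hli.eventually_nhds)
  have hev : ∀ᶠ t in nhds x, φ (g (P t)) = P t ∧ g (P t) ∈ ball (0 : ℂ) 1 ∧ g (P t) ≠ 0 ∧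
      ∀ᶠ z' in nhds (g (P t)), g (φ z') = z' :=
    (hPt.eventually hri).and (hψt.eventually hgood)
  obtain ⟨ε, hε, hball⟩ := Metric.eventually_nhds_iff.1 hev
  have hy' : x < y := hy
  set b := min y (x + ε / 2) with hb
  have hxb : x < b := lt_min hy' (by linarith)
  have hin : ∀ t ∈ Set.Icc x b, dist t x < ε := by
    intro t ht
    have := ht.2.trans (min_le_right _ _)
    rw [Real.dist_eq, abs_of_nonneg (by linarith [ht.1])]
    linarith
  have hder : ∀ t ∈ Set.Icc x b, ∃ D ≤ (0 : ℝ), HasDerivAt (fun t => ‖g (P t)‖ ^ 2) D t := by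
    intro t ht
    obtain ⟨h1, h2, h3, h4⟩ := hball (hin t ht)
    have h5 := (hstrict _ h2).to_local_left_inverse (hd _ h2 h3) h4
    rw [h1] at h5
    have h6 : HasDerivAt (fun t => g (P t)) ((deriv φ (g (P t)))⁻¹ * (-μ * P t)) t :=
      h5.hasDerivAt.comp t (hPd t)
    refine ⟨_, ?_, h6.norm_sq⟩
    have h7 := hμ _ h2 h3
    rw [h1] at h7
    set z := g (P t)
    have h8 : (deriv φ z)⁻¹ * (-μ * P t) = -(z * (μ * P t / (z * deriv φ z))) := by
      have := hd _ h2 h3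
      field_simp
    rw [h8, Complex.inner]
    have h9 : -(z * (μ * P t / (z * deriv φ z))) * (starRingEnd ℂ) z
        = ((-(Complex.normSq z) : ℝ) : ℂ) * (μ * P t / (z * deriv φ z)) := by
      push_cast
      rw [← Complex.mul_conj]; ring
    have h10 : (-(z * (μ * P t / (z * deriv φ z))) * (starRingEnd ℂ) z).re ≤ 0 := by
      rw [h9, Complex.re_ofReal_mul]
      nlinarith [Complex.normSq_nonneg z]
    linarith
  have hanti : AntitoneOn (fun t => ‖g (P t)‖ ^ 2) (Set.Icc x b) := by
    refine antitoneOn_of_deriv_nonpos (convex_Icc _ _) ?_ ?_ ?_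
    · intro t ht
      obtain ⟨D, _, h⟩ := hder t ht
      exact h.continuousAt.continuousWithinAt
    · intro t ht
      obtain ⟨D, _, h⟩ := hder t (interior_subset ht)
      exact h.differentiableAt.differentiableWithinAt
    · intro t ht
      obtain ⟨D, h0, h⟩ := hder t (interior_subset ht)
      rwa [h.deriv]
  have hle := hanti (Set.left_mem_Icc.2 hxb.le) (Set.right_mem_Icc.2 hxb.le) hxb.le
  simp only at hle
  rw [← hφx, hgx] at hle
  have hle' : ‖g (P b)‖ ≤ ‖zx‖ := by
    exact (sq_le_sq₀ (norm_nonneg _) (norm_nonneg _)).1 hle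
  refine ⟨b, ⟨g (P b), ?_, (hball (hin b (Set.right_mem_Icc.2 hxb.le))).1⟩, hxb, min_le_left _ _⟩
  simp at hzx ⊢
  linarith

lemma aux_deriv_ne (β : ℝ) (hβ1 : β < 1)
    (φ : ℂ → ℂ) (hφd : DifferentiableOn ℂ φ (Metric.ball 0 1))
    (hφi : Set.InjOn φ (Metric.ball 0 1)) (hφ0 : φ 0 = 0)
    (δ : ℝ)
    (hspiral : ∀ z ∈ Metric.ball (0 : ℂ) 1, z ≠ 0 →
      |Complex.arg (Complex.exp (Complex.I * δ) * z * deriv φ z / φ z)| ≤ β * π / 2)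
    (z : ℂ) (hz : z ∈ Metric.ball (0 : ℂ) 1) (hz0 : z ≠ 0) : deriv φ z ≠ 0 := by
  intro hdz
  have hφz : ∀ u ∈ ball (0 : ℂ) 1, u ≠ 0 → φ u ≠ 0 := by
    intro u hu hu0 h
    exact hu0 (hφi hu (by simp) (by rw [h, hφ0]))
  have han := hφd.analyticOnNhd isOpen_ball
  have hq : AnalyticAt ℂ (fun z => Complex.exp (Complex.I * δ) * z * deriv φ z / φ z) z :=
    ((analyticAt_const.mul analyticAt_id).mul (han z hz).deriv).div (han z hz) (hφz z hz hz0)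
  have hnear : ∀ᶠ u in nhds z, u ∈ ball (0 : ℂ) 1 ∧ u ≠ 0 :=
    (isOpen_ball.eventually_mem hz).and (isOpen_ne.eventually_mem hz0)
  rcases hq.eventually_constant_or_nhds_le_map_nhds with h | h
  · have h2 : ∀ᶠ u in nhds z, deriv φ u = 0 ∧ u ∈ ball (0 : ℂ) 1 := by
      filter_upwards [h, hnear] with u hu hn
      refine ⟨?_, hn.1⟩
      simp only [hdz, mul_zero, zero_div, div_eq_zero_iff, mul_eq_zero] at hu
      have := hφz u hn.1 hn.2
      have := hn.2
      simp_all
    obtain ⟨ε, hε, hb⟩ := Metric.eventually_nhds_iff_ball.1 h2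
    have hconst : ∀ u ∈ ball z ε, φ u = φ z := by
      intro u hu
      refine isOpen_ball.is_const_of_deriv_eq_zero (convex_ball z ε).isPreconnected
        (hφd.mono fun v hv => (hb v hv).2) (fun v hv => (hb v hv).1) hu (mem_ball_self hε)
    have hu : z + (ε / 2 : ℝ) ∈ ball z ε := by
      simp [abs_of_pos hε]; linarith
    have := hφi (hb _ hu).2 hz (hconst _ hu)
    simp at this
    exact hε.ne' this
  · simp only [hdz, mul_zero, zero_div] at h
    have h3 : ∀ᶠ v in nhds (0 : ℂ), |Complex.arg v| ≤ β * π / 2 := by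
      refine h (Filter.eventually_map.2 ?_)
      filter_upwards [hnear] with u hu
      exact hspiral u hu.1 hu.2
    obtain ⟨ε, hε, hb⟩ := Metric.eventually_nhds_iff_ball.1 h3
    have h4 := hb ((-(ε / 2) : ℝ) : ℂ) (by
      rw [mem_ball_zero_iff, Complex.norm_real, Real.norm_eq_abs, abs_neg, abs_of_pos] <;> linarith)
    rw [Complex.arg_ofReal_of_neg (by linarith), abs_of_pos pi_pos] at h4
    nlinarith [pi_pos]

lemma aux_invariant (β : ℝ) (hβ0 : 0 < β) (hβ1 : β < 1)
    (φ : ℂ → ℂ) (hφd : DifferentiableOn ℂ φ (Metric.ball 0 1))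
    (hφi : Set.InjOn φ (Metric.ball 0 1)) (hφ0 : φ 0 = 0)
    (δ : ℝ)
    (hspiral : ∀ z ∈ Metric.ball (0 : ℂ) 1, z ≠ 0 →
      |Complex.arg (Complex.exp (Complex.I * δ) * z * deriv φ z / φ z)| ≤ β * π / 2)
    (s y : ℝ) (hs : 0 ≤ s) (hy : |y| ≤ s * cos (β * π / 2))
    (w : ℂ) (hw : w ∈ φ '' Metric.ball 0 1) (t : ℝ) (ht : t ∈ Set.Icc (0 : ℝ) 1) :
    Complex.exp (-(t * (s * Complex.exp (-(Complex.I * δ)) + Complex.I * y))) * w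
      ∈ φ '' Metric.ball 0 1 := by
  have hd := aux_deriv_ne β hβ1 φ hφd hφi hφ0 δ hspiral
  refine aux_flow φ hφd hφ0 hd _ ?_ w hw t ht
  intro z hz hz0
  have hφz : φ z ≠ 0 := by
    intro h
    exact hz0 (hφi hz (by simp) (by rw [h, hφ0]))
  have hdz := hd z hz hz0
  have harg := hspiral z hz hz0
  set q := Complex.exp (Complex.I * δ) * z * deriv φ z / φ z with hq
  set e := Complex.exp (Complex.I * δ) with he
  have he0 : e ≠ 0 := Complex.exp_ne_zero _
  have hq0 : q ≠ 0 := by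
    simp [hq, hφz, hdz, hz0, he0]
  have heq : (s * Complex.exp (-(Complex.I * δ)) + Complex.I * y) * φ z / (z * deriv φ z)
      = (s : ℂ) * q⁻¹ + (y : ℂ) * (Complex.I * e * q⁻¹) := by
    rw [Complex.exp_neg, ← he, hq]
    field_simp
  rw [heq, Complex.add_re, Complex.re_ofReal_mul, Complex.re_ofReal_mul]
  have hnq : 0 < ‖q‖ := norm_pos_iff.2 hq0
  have hre : cos (β * π / 2) * ‖q‖ ≤ q.re := by
    rw [← Complex.norm_mul_cos_arg q, mul_comm]
    refine mul_le_mul_of_nonneg_left ?_ hnq.le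
    rw [← Real.cos_abs (Complex.arg q)]
    exact Real.cos_le_cos_of_nonneg_of_le_pi (abs_nonneg _) (by nlinarith [pi_pos]) harg
  have h1 : cos (β * π / 2) * ‖q‖⁻¹ ≤ (q⁻¹).re := by
    rw [Complex.inv_re, Complex.normSq_eq_norm_sq, le_div_iff₀ (by positivity)]
    calc _ = cos (β * π / 2) * ‖q‖ := by field_simp
      _ ≤ _ := hre
  have hen : ‖e‖ = 1 := by rw [he, mul_comm]; exact Complex.norm_exp_ofReal_mul_I δ
  have h2 : |(Complex.I * e * q⁻¹).re| ≤ ‖q‖⁻¹ := by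
    refine (Complex.abs_re_le_norm _).trans ?_
    simp [hen]
  have h3 : |y * (Complex.I * e * q⁻¹).re| ≤ s * cos (β * π / 2) * ‖q‖⁻¹ := by
    rw [abs_mul]
    exact mul_le_mul hy h2 (abs_nonneg _) ((abs_nonneg _).trans hy)
  have h4 := (abs_le.1 h3).1
  have h5 := mul_le_mul_of_nonneg_left h1 hs
  nlinarith

lemma aux_ball (β : ℝ) (hβ0 : 0 < β) (hβ1 : β < 1)
    (φ : ℂ → ℂ) (hφd : DifferentiableOn ℂ φ (Metric.ball 0 1))
    (hφi : Set.InjOn φ (Metric.ball 0 1)) (hφ0 : φ 0 = 0)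
    (δ : ℝ) (hδ : |δ| < β * π / 2)
    (hspiral : ∀ z ∈ Metric.ball (0 : ℂ) 1, z ≠ 0 →
      |Complex.arg (Complex.exp (Complex.I * δ) * z * deriv φ z / φ z)| ≤ β * π / 2)
    (w : ℂ) (hw : w ∈ φ '' Metric.ball 0 1) (v : ℂ)
    (hv : ‖v‖ ≤ ‖w‖ * exp (-(π / cos (β * π / 2) * cos δ))) : v ∈ φ '' Metric.ball 0 1 := by
  by_cases hv0 : v = 0
  · exact ⟨0, by simp, by rw [hφ0, hv0]⟩
  have hvp : 0 < ‖v‖ := norm_pos_iff.2 hv0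
  have hwp : 0 < ‖w‖ := by
    by_contra h
    have : ‖w‖ = 0 := le_antisymm (not_lt.1 h) (norm_nonneg _)
    rw [this] at hv; linarith
  have hw0 : w ≠ 0 := norm_pos_iff.1 hwp
  have hc : 0 < cos (β * π / 2) :=
    cos_pos_of_mem_Ioo ⟨by nlinarith [pi_pos], by nlinarith [pi_pos]⟩
  have hd' := abs_lt.1 hδ
  have hcd : 0 < cos δ := cos_pos_of_mem_Ioo ⟨by nlinarith [pi_pos], by nlinarith [pi_pos]⟩
  -- x = log (‖w‖/‖v‖)
  set s := Real.log (‖w‖ / ‖v‖) / cos δ with hs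
  have hsS : π / cos (β * π / 2) ≤ s := by
    rw [hs, le_div_iff₀ hcd, Real.le_log_iff_exp_le (by positivity), le_div_iff₀ hvp]
    rw [Real.exp_neg, ← div_eq_mul_inv, le_div_iff₀ (exp_pos _)] at hv
    linarith
  have hs0 : 0 ≤ s := (by positivity : 0 ≤ π / cos (β * π / 2)).trans hsS
  have hsc : π ≤ s * cos (β * π / 2) := by
    rwa [div_le_iff₀ hc] at hsS
  -- y := arg of (exp(-s e^{-iδ}) * w / v)
  set u := Complex.exp (-(s * Complex.exp (-(Complex.I * δ)))) * w / v with hu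
  have hun : ‖u‖ = 1 := by
    rw [hu, norm_div, norm_mul, Complex.norm_exp]
    have : (-(s * Complex.exp (-(Complex.I * δ))) : ℂ).re = -(s * cos δ) := by
      rw [Complex.neg_re, Complex.re_ofReal_mul]
      congr 2
      rw [show -(Complex.I * (δ : ℂ)) = ((-δ : ℝ) : ℂ) * Complex.I by push_cast; ring,
        Complex.exp_ofReal_mul_I_re, Real.cos_neg]
    rw [this, hs, div_mul_cancel₀ _ hcd.ne', Real.exp_neg, Real.exp_log (by positivity)]
    field_simp
  have key := aux_invariant β hβ0 hβ1 φ hφd hφi hφ0 δ hspiral s (Complex.arg u) hs0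
    ((Complex.abs_arg_le_pi u).trans hsc) w hw 1 (by simp)
  convert key using 1
  have hu2 : Complex.exp (Complex.I * (Complex.arg u)) = u := by
    have := Complex.norm_mul_exp_arg_mul_I u
    rw [hun] at this
    rw [mul_comm]; simpa using this
  rw [Complex.ofReal_one, one_mul, neg_add, Complex.exp_add, Complex.exp_neg (Complex.I * (Complex.arg u : ℂ)), hu2, hu]
  field_simp

lemma aux_cov (a b : ℂ) (ha : a ≠ 0) (H : ℂ → ℝ≥0∞) (hH : Measurable H) :
    ENNReal.ofReal (‖a‖ ^ 2) * ∫⁻ x, H (b + a * (x - b)) = ∫⁻ x, H x := by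
  have hdet : LinearMap.det (LinearMap.mul ℝ ℂ a) = ‖a‖ ^ 2 := by
    rw [← Complex.normSq_eq_norm_sq]
    exact Algebra.norm_complex_apply a
  have hap : 0 < ‖a‖ ^ 2 := by positivity
  have h1 : ∫⁻ x, H (b + a * (x - b)) = ∫⁻ x, H (b + a * x) :=
    lintegral_sub_right_eq_self (fun u => H (b + a * u)) b
  have h2 : ∫⁻ x, H (b + a * x) = ∫⁻ x, H (b + x) ∂(Measure.map (LinearMap.mul ℝ ℂ a) volume) := by
    rw [lintegral_map]
    · rfl
    · fun_prop
    · exact (continuous_const.mul continuous_id).measurable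
  rw [h1, h2, Measure.map_linearMap_addHaar_eq_smul_addHaar _ (by rw [hdet]; exact hap.ne'), hdet,
    lintegral_smul_measure, lintegral_add_left_eq_self, smul_eq_mul, ← mul_assoc,
    ← ENNReal.ofReal_mul hap.le, abs_of_pos (by positivity), mul_inv_cancel₀ hap.ne']
  simp

lemma aux_sq (h : ℝ → ℝ) (hh : ContinuousOn h (Set.Icc 0 1)) :
    (∫ t in (0:ℝ)..1, h t) ^ 2 ≤ ∫ t in (0:ℝ)..1, h t ^ 2 := by
  set m := ∫ t in (0:ℝ)..1, h t with hm
  have hi : IntervalIntegrable h volume 0 1 :=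
    ContinuousOn.intervalIntegrable (by rwa [Set.uIcc_of_le zero_le_one])
  have hi2 : IntervalIntegrable (fun t => h t ^ 2) volume 0 1 :=
    ContinuousOn.intervalIntegrable (by rw [Set.uIcc_of_le zero_le_one]; exact hh.pow 2)
  have h0 : 0 ≤ ∫ t in (0:ℝ)..1, (h t - m) ^ 2 :=
    intervalIntegral.integral_nonneg zero_le_one fun t _ => sq_nonneg _
  have h1 : ∫ t in (0:ℝ)..1, (h t - m) ^ 2 = (∫ t in (0:ℝ)..1, h t ^ 2) - m ^ 2 := by
    have : ∀ t, (h t - m) ^ 2 = h t ^ 2 - (2 * m) * h t + m ^ 2 := fun t => by ring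
    simp_rw [this]
    rw [intervalIntegral.integral_add (hi2.sub (hi.const_mul _)) (by simp),
      intervalIntegral.integral_sub hi2 (hi.const_mul _), intervalIntegral.integral_const_mul, ← hm]
    simp; ring
  linarith

lemma aux_path (U : Set ℂ) (hU : IsOpen U) (f : ℂ → ℝ) (hf : ContDiffOn ℝ 1 f U) (b μ : ℂ)
    (R : ℝ) (x : ℂ)
    (hγ : ∀ t ∈ Set.Icc (0 : ℝ) 1, b + Complex.exp (-(t * μ)) * (x - b) ∈ U)
    (hR : ‖x - b‖ ≤ R) :
    ENNReal.ofReal ((f (b + Complex.exp (-μ) * (x - b)) - f x) ^ 2) ≤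
      ∫⁻ t in Set.Ioc (0 : ℝ) 1, ENNReal.ofReal (‖μ‖ ^ 2 * R ^ 2) *
        (ENNReal.ofReal (‖Complex.exp (-((t : ℝ) * μ))‖ ^ 2) *
        U.indicator (fun x => ENNReal.ofReal (‖fderiv ℝ f x‖ ^ 2))
          (b + Complex.exp (-(t * μ)) * (x - b))) := by
  set γ : ℝ → ℂ := fun t => b + Complex.exp (-(t * μ)) * (x - b) with hγdef
  set γ' : ℝ → ℂ := fun t => Complex.exp (-(t * μ)) * -(1 * μ) * (x - b) with hγ'def
  have hγd : ∀ t, HasDerivAt γ (γ' t) t := by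
    intro t
    have h1 : HasDerivAt (fun t : ℝ => -((t : ℂ) * μ)) (-(1 * μ)) t :=
      ((Complex.ofRealCLM.hasDerivAt (x := t)).mul_const μ).neg
    exact ((h1.cexp).mul_const (x - b)).const_add b
  have hγc : Continuous γ := by fun_prop
  have hγ'c : Continuous γ' := by fun_prop
  have hfd : ∀ t ∈ Set.Icc (0 : ℝ) 1,
      HasDerivAt (fun t => f (γ t)) (fderiv ℝ f (γ t) (γ' t)) t := by
    intro t ht
    have := (hf.differentiableOn one_ne_zero).differentiableAt (hU.mem_nhds (hγ t ht))
    exact this.hasFDerivAt.comp_hasDerivAt t (hγd t)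
  have hhc : ContinuousOn (fun t => fderiv ℝ f (γ t) (γ' t)) (Set.Icc 0 1) :=
    ((hf.continuousOn_fderiv_of_isOpen hU le_rfl).comp hγc.continuousOn hγ).clm_apply
      hγ'c.continuousOn
  have hftc : ∫ t in (0:ℝ)..1, fderiv ℝ f (γ t) (γ' t) = f (γ 1) - f (γ 0) := by
    refine intervalIntegral.integral_eq_sub_of_hasDerivAt (f := fun t => f (γ t)) ?_ ?_
    · rw [Set.uIcc_of_le zero_le_one]; exact hfd
    · exact ContinuousOn.intervalIntegrable (by rwa [Set.uIcc_of_le zero_le_one])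
  have h0 : γ 0 = x := by simp [hγdef]
  have h1 : γ 1 = b + Complex.exp (-μ) * (x - b) := by simp [hγdef]
  rw [h0, h1] at hftc
  have hsq := aux_sq _ hhc
  rw [hftc] at hsq
  refine (ENNReal.ofReal_le_ofReal hsq).trans ?_
  rw [intervalIntegral.integral_of_le zero_le_one, ofReal_integral_eq_lintegral_ofReal]
  rotate_left
  · exact ((hhc.pow 2).integrableOn_Icc).mono_set Set.Ioc_subset_Icc_self
  · exact Filter.Eventually.of_forall fun t => sq_nonneg _
  refine setLIntegral_mono' measurableSet_Ioc fun t ht => ?_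
  rw [Set.indicator_of_mem (hγ t (Set.Ioc_subset_Icc_self ht)), ← ENNReal.ofReal_mul (by positivity),
    ← ENNReal.ofReal_mul (by positivity)]
  refine ENNReal.ofReal_le_ofReal ?_
  have h2 : ‖fderiv ℝ f (γ t) (γ' t)‖ ≤ ‖fderiv ℝ f (γ t)‖ * (‖Complex.exp (-(t * μ))‖ * ‖μ‖ * R) := by
    refine (ContinuousLinearMap.le_opNorm _ _).trans ?_
    gcongr
    rw [hγ'def]
    simp only [norm_mul, norm_neg, one_mul]
    gcongr
  rw [Real.norm_eq_abs] at h2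
  calc _ = |fderiv ℝ f (γ t) (γ' t)| ^ 2 := (sq_abs _).symm
    _ ≤ (‖fderiv ℝ f (γ t)‖ * (‖Complex.exp (-(t * μ))‖ * ‖μ‖ * R)) ^ 2 := by gcongr
    _ = _ := by ring

lemma aux_contr (U : Set ℂ) (hU : IsOpen U) (f : ℂ → ℝ) (hf : ContDiffOn ℝ 1 f U) (b μ : ℂ)
    (R : ℝ)
    (hγ : ∀ x ∈ U, ∀ t ∈ Set.Icc (0 : ℝ) 1, b + Complex.exp (-(t * μ)) * (x - b) ∈ U)
    (hR : ∀ x ∈ U, ‖x - b‖ ≤ R) :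
    ∫⁻ x in U, ENNReal.ofReal ((f (b + Complex.exp (-μ) * (x - b)) - f x) ^ 2) ≤
      ENNReal.ofReal (‖μ‖ ^ 2 * R ^ 2) * ∫⁻ x in U, ENNReal.ofReal (‖fderiv ℝ f x‖ ^ 2) := by
  set H : ℂ → ℝ≥0∞ := U.indicator (fun x => ENNReal.ofReal (‖fderiv ℝ f x‖ ^ 2)) with hH
  have hHm : Measurable H := by
    refine Measurable.indicator ?_ hU.measurableSet
    exact ((measurable_fderiv ℝ f).norm.pow_const 2).ennreal_ofReal
  have hI : ∫⁻ x in U, ENNReal.ofReal (‖fderiv ℝ f x‖ ^ 2) = ∫⁻ x, H x :=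
    (lintegral_indicator hU.measurableSet _).symm
  have hKm : Measurable (fun p : ℂ × ℝ => ENNReal.ofReal (‖μ‖ ^ 2 * R ^ 2) *
        (ENNReal.ofReal (‖Complex.exp (-((p.2 : ℝ) * μ))‖ ^ 2) *
        H (b + Complex.exp (-(p.2 * μ)) * (p.1 - b)))) := by
    have h1 : Measurable (fun p : ℂ × ℝ => b + Complex.exp (-(p.2 * μ)) * (p.1 - b)) := by
      apply Continuous.measurable; fun_prop
    have h2 : Measurable (fun p : ℂ × ℝ => ‖Complex.exp (-((p.2 : ℝ) * μ))‖ ^ 2) := by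
      apply Continuous.measurable; fun_prop
    exact (h2.ennreal_ofReal.mul (hHm.comp h1)).const_mul _
  calc _ ≤ ∫⁻ x in U, ∫⁻ t in Set.Ioc (0 : ℝ) 1, ENNReal.ofReal (‖μ‖ ^ 2 * R ^ 2) *
        (ENNReal.ofReal (‖Complex.exp (-((t : ℝ) * μ))‖ ^ 2) *
        H (b + Complex.exp (-(t * μ)) * (x - b))) :=
        setLIntegral_mono' hU.measurableSet fun x hx =>
          aux_path U hU f hf b μ R x (hγ x hx) (hR x hx)
    _ ≤ ∫⁻ x, ∫⁻ t in Set.Ioc (0 : ℝ) 1, ENNReal.ofReal (‖μ‖ ^ 2 * R ^ 2) *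
        (ENNReal.ofReal (‖Complex.exp (-((t : ℝ) * μ))‖ ^ 2) *
        H (b + Complex.exp (-(t * μ)) * (x - b))) := setLIntegral_le_lintegral _ _
    _ = ∫⁻ t in Set.Ioc (0 : ℝ) 1, ∫⁻ x, ENNReal.ofReal (‖μ‖ ^ 2 * R ^ 2) *
        (ENNReal.ofReal (‖Complex.exp (-((t : ℝ) * μ))‖ ^ 2) *
        H (b + Complex.exp (-(t * μ)) * (x - b))) := lintegral_lintegral_swap hKm.aemeasurable
    _ = ∫⁻ t in Set.Ioc (0 : ℝ) 1, ENNReal.ofReal (‖μ‖ ^ 2 * R ^ 2) * ∫⁻ x, H x := by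
        refine lintegral_congr fun t => ?_
        rw [lintegral_const_mul' _ _ ENNReal.ofReal_ne_top,
          lintegral_const_mul' _ _ ENNReal.ofReal_ne_top,
          aux_cov _ b (Complex.exp_ne_zero _) H hHm]
    _ = _ := by
        rw [hI]; simp

lemma aux_two (a b c : ℝ) : ENNReal.ofReal ((a - c) ^ 2) ≤
    2 * ENNReal.ofReal ((b - a) ^ 2) + 2 * ENNReal.ofReal ((b - c) ^ 2) := by
  have h2 : (2 : ℝ≥0∞) = ENNReal.ofReal 2 := by simp
  rw [h2, ← ENNReal.ofReal_mul (by norm_num), ← ENNReal.ofReal_mul (by norm_num),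
    ← ENNReal.ofReal_add (by positivity) (by positivity)]
  apply ENNReal.ofReal_le_ofReal
  nlinarith [sq_nonneg (2 * b - a - c)]

lemma aux_meas (U : Set ℂ) (hU : IsOpen U) (f : ℂ → ℝ) (hf : ContinuousOn f U) :
    Measurable (U.indicator f) := by
  classical
  rw [← Set.piecewise_eq_indicator]
  exact hf.measurable_piecewise continuousOn_const hU.measurableSet

lemma aux_double_gen (B : Set ℂ) (hB : MeasurableSet B) (Q : ℂ → ℂ → ℝ≥0∞)
    (hQm : Measurable (Function.uncurry Q)) (D : ℂ → ℂ → ℝ≥0∞)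
    (hD : ∀ x y, D x y ≤ 2 * Q x y + 2 * Q y x) (X : ℝ≥0∞)
    (hQ : ∀ y ∈ B, ∫⁻ x in B, Q x y ≤ X) :
    ∫⁻ y in B, ∫⁻ x in B, D x y ≤ 4 * X * volume B := by
  have hA : ∫⁻ y in B, ∫⁻ x in B, Q x y ≤ X * volume B := by
    calc _ ≤ ∫⁻ y in B, X := setLIntegral_mono' hB hQ
      _ = _ := by simp
  have hA2 : ∫⁻ y in B, ∫⁻ x in B, Q y x ≤ X * volume B := by
    rw [lintegral_lintegral_swap hQm.aemeasurable]
    exact hA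
  have hQm2 : Measurable (Function.uncurry (fun y x => Q x y)) := hQm.comp measurable_swap
  have hm1 : ∀ y, Measurable fun x => Q x y := fun y => hQm2.of_uncurry_left
  have hm2 : ∀ y, Measurable fun x => Q y x := fun y => hQm.of_uncurry_left
  have hM1 : Measurable fun y => ∫⁻ x in B, Q x y := hQm2.lintegral_prod_right
  have hM2 : Measurable fun y => ∫⁻ x in B, Q y x := hQm.lintegral_prod_right
  calc _ ≤ ∫⁻ y in B, ∫⁻ x in B, (2 * Q x y + 2 * Q y x) :=
        lintegral_mono fun y => lintegral_mono fun x => hD x y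
    _ = ∫⁻ y in B, (2 * (∫⁻ x in B, Q x y) + 2 * (∫⁻ x in B, Q y x)) := by
        refine lintegral_congr fun y => ?_
        rw [lintegral_add_left ((hm1 y).const_mul _), lintegral_const_mul _ (hm1 y),
          lintegral_const_mul _ (hm2 y)]
    _ = 2 * (∫⁻ y in B, ∫⁻ x in B, Q x y) + 2 * ∫⁻ y in B, ∫⁻ x in B, Q y x := by
        rw [lintegral_add_left (hM1.const_mul _), lintegral_const_mul _ hM1,
          lintegral_const_mul _ hM2]
    _ ≤ 2 * (X * volume B) + 2 * (X * volume B) := by gcongr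
    _ = _ := by ring

lemma aux_double (B : Set ℂ) (hB : MeasurableSet B) (F : ℂ → ℝ) (hFm : Measurable F) (X : ℝ≥0∞)
    (hQ : ∀ y ∈ B, ∫⁻ x in B, ENNReal.ofReal ((F ((x + y) / 2) - F x) ^ 2) ≤ X) :
    ∫⁻ y in B, ∫⁻ x in B, ENNReal.ofReal ((F x - F y) ^ 2) ≤ 4 * X * volume B := by
  refine aux_double_gen B hB (fun x y => ENNReal.ofReal ((F ((x + y) / 2) - F x) ^ 2)) ?_
    (fun x y => ENNReal.ofReal ((F x - F y) ^ 2)) ?_ X hQ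
  · have h1 : Measurable (fun p : ℂ × ℂ => (p.1 + p.2) / 2) := by
      apply Continuous.measurable; fun_prop
    exact (((hFm.comp h1).sub (hFm.comp measurable_fst)).pow_const 2).ennreal_ofReal
  · intro x y
    have := aux_two (F x) (F ((x + y) / 2)) (F y)
    simpa only [add_comm y x] using this

lemma aux_poincare_ball (r : ℝ) (hr : 0 < r) (f : ℂ → ℝ) (hf : ContDiffOn ℝ 1 f (ball 0 r)) :
    ∃ c : ℝ, ∫⁻ x in ball (0 : ℂ) r, ENNReal.ofReal ((f x - c) ^ 2) ≤
      ENNReal.ofReal (16 * r ^ 2) * ∫⁻ x in ball 0 r, ENNReal.ofReal (‖fderiv ℝ f x‖ ^ 2) := by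
  set B := ball (0 : ℂ) r with hB
  have hBo : IsOpen B := isOpen_ball
  set I := ∫⁻ x in B, ENNReal.ofReal (‖fderiv ℝ f x‖ ^ 2) with hI
  set F := B.indicator f with hF
  have hFm : Measurable F := aux_meas B hBo f hf.continuousOn
  have hFe : ∀ x ∈ B, F x = f x := fun x hx => Set.indicator_of_mem hx f
  have hexp : ∀ t : ℝ, Complex.exp (-(t * ((Real.log 2 : ℝ) : ℂ))) = ((exp (-(t * Real.log 2)) : ℝ) : ℂ) := by
    intro t; push_cast; rfl
  have hseg : ∀ y ∈ B, ∀ x ∈ B, ∀ t ∈ Set.Icc (0 : ℝ) 1,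
      y + Complex.exp (-(t * ((Real.log 2 : ℝ) : ℂ))) * (x - y) ∈ B := by
    intro y hy x hx t ht
    rw [hexp]
    have h1 : exp (-(t * Real.log 2)) ≤ 1 := by
      rw [Real.exp_le_one_iff]
      have := Real.log_nonneg (by norm_num : (1:ℝ) ≤ 2)
      nlinarith [ht.1]
    have := (convex_ball (0 : ℂ) r).add_smul_sub_mem hy hx ⟨(exp_pos _).le, h1⟩
    rwa [Complex.real_smul] at this
  have hmid : ∀ x y : ℂ, y + Complex.exp (-((Real.log 2 : ℝ) : ℂ)) * (x - y) = (x + y) / 2 := by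
    intro x y
    have := hexp 1
    rw [Complex.ofReal_one, one_mul, one_mul, Real.exp_neg, Real.exp_log (by norm_num)] at this
    rw [this]; push_cast; ring
  set X := ENNReal.ofReal (4 * r ^ 2) * I with hX
  have hlog : (Real.log 2) ^ 2 ≤ 1 := by
    have := Real.log_nonneg (by norm_num : (1:ℝ) ≤ 2)
    have := Real.log_two_lt_d9
    nlinarith
  have hQ : ∀ y ∈ B, ∫⁻ x in B, ENNReal.ofReal ((F ((x + y) / 2) - F x) ^ 2) ≤ X := by
    intro y hy
    have h := aux_contr B hBo f hf y ((Real.log 2 : ℝ) : ℂ) (2 * r) (hseg y hy) (by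
      intro x hx
      have h1 : ‖x‖ < r := by simpa [hB] using hx
      have h2 : ‖y‖ < r := by simpa [hB] using hy
      linarith [norm_sub_le x y])
    refine le_trans (le_of_eq ?_) (h.trans ?_)
    · refine setLIntegral_congr_fun hBo.measurableSet fun x hx => ?_
      have h1 := hseg y hy x hx 1 (by simp)
      rw [Complex.ofReal_one, one_mul, hmid] at h1
      rw [hmid, hFe _ h1, hFe _ hx]
    · rw [hX]
      refine mul_le_mul' (ENNReal.ofReal_le_ofReal ?_) le_rfl
      rw [Complex.norm_real, Real.norm_eq_abs, sq_abs]
      nlinarith [sq_nonneg r]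
  have hDm : Measurable (fun p : ℂ × ℂ => ENNReal.ofReal ((F p.2 - F p.1) ^ 2)) :=
    (((hFm.comp measurable_snd).sub (hFm.comp measurable_fst)).pow_const 2).ennreal_ofReal
  have hA3 := aux_double B hBo.measurableSet F hFm X hQ
  have hv0 : volume B ≠ 0 := (measure_ball_pos volume _ hr).ne'
  have hvt : volume B ≠ ∞ := measure_ball_lt_top.ne
  obtain ⟨y, hy, hyle⟩ := exists_le_setLAverage (μ := volume) hv0 hvt
    (f := fun y => ∫⁻ x in B, ENNReal.ofReal ((F x - F y) ^ 2))
    hDm.lintegral_prod_right'.aemeasurable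
  refine ⟨F y, ?_⟩
  have e1 : ∫⁻ x in B, ENNReal.ofReal ((f x - F y) ^ 2) = ∫⁻ x in B, ENNReal.ofReal ((F x - F y) ^ 2) :=
    setLIntegral_congr_fun hBo.measurableSet fun x hx => by rw [hFe x hx]
  rw [e1]
  refine hyle.trans ?_
  rw [setLAverage_eq]
  refine ENNReal.div_le_of_le_mul (hA3.trans (le_of_eq ?_))
  rw [hX, ← mul_assoc 4, show (4 : ℝ≥0∞) = ENNReal.ofReal 4 by simp, ← ENNReal.ofReal_mul (by norm_num)]
  ring_nf

lemma aux_core (Ω : Set ℂ) (hΩo : IsOpen Ω) (f : ℂ → ℝ) (hf : ContDiffOn ℝ 1 f Ω)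
    (μ : ℂ) (S R : ℝ) (hS : ‖μ‖ = S) (hR : 0 < R) (hΩR : ∀ w ∈ Ω, ‖w‖ < R)
    (hinv : ∀ w ∈ Ω, ∀ t ∈ Set.Icc (0 : ℝ) 1, Complex.exp (-(t * μ)) * w ∈ Ω)
    (hball : ball 0 (R * ‖Complex.exp (-μ)‖) ⊆ Ω) :
    ∃ c : ℝ, ∫⁻ x in Ω, ENNReal.ofReal ((f x - c) ^ 2) ≤
      ENNReal.ofReal ((2 * S ^ 2 + 32) * R ^ 2) *
        ∫⁻ x in Ω, ENNReal.ofReal (‖fderiv ℝ f x‖ ^ 2) := by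
  set a := Complex.exp (-μ) with ha
  have ha0 : a ≠ 0 := Complex.exp_ne_zero _
  have hap : 0 < ‖a‖ := norm_pos_iff.2 ha0
  set r := R * ‖a‖ with hr
  have hrp : 0 < r := by positivity
  set I := ∫⁻ x in Ω, ENNReal.ofReal (‖fderiv ℝ f x‖ ^ 2) with hI
  obtain ⟨c, hc⟩ := aux_poincare_ball r hrp f (hf.mono hball)
  refine ⟨c, ?_⟩
  have h1 := aux_contr Ω hΩo f hf 0 μ R (by simpa using hinv) (by
    intro x hx; simpa using (hΩR x hx).le)
  simp only [zero_add, sub_zero] at h1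
  rw [← ha, hS, ← hI] at h1
  have hmaps : ∀ x ∈ Ω, a * x ∈ Ω := by
    intro x hx
    have := hinv x hx 1 (by simp)
    simpa [ha] using this
  have h2 : ∫⁻ x in Ω, ENNReal.ofReal ((f (a * x) - c) ^ 2) ≤ ENNReal.ofReal (16 * R ^ 2) * I := by
    set H : ℂ → ℝ≥0∞ := (ball (0 : ℂ) r).indicator
      (fun x => ENNReal.ofReal (((ball (0 : ℂ) r).indicator f x - c) ^ 2)) with hH
    have hHm : Measurable H := by
      refine Measurable.indicator ?_ isOpen_ball.measurableSet
      exact (((aux_meas _ isOpen_ball f (hf.continuousOn.mono hball)).sub_const c).pow_const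
        2).ennreal_ofReal
    have e1 : ∫⁻ x, H x = ∫⁻ x in ball 0 r, ENNReal.ofReal ((f x - c) ^ 2) := by
      rw [hH, lintegral_indicator isOpen_ball.measurableSet]
      refine setLIntegral_congr_fun isOpen_ball.measurableSet fun x hx => ?_
      rw [Set.indicator_of_mem hx]
    have e2 : ∫⁻ x in Ω, ENNReal.ofReal ((f (a * x) - c) ^ 2) ≤ ∫⁻ x, H (0 + a * (x - 0)) := by
      refine le_trans (le_of_eq ?_) (setLIntegral_le_lintegral Ω _)
      refine setLIntegral_congr_fun hΩo.measurableSet fun x hx => ?_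
      have hm : a * x ∈ ball (0 : ℂ) r := by
        rw [mem_ball_zero_iff, norm_mul, hr, mul_comm R]
        exact mul_lt_mul_of_pos_left (hΩR x hx) hap
      simp only [zero_add, sub_zero]
      rw [hH, Set.indicator_of_mem hm, Set.indicator_of_mem hm]
    have e3 := aux_cov a 0 ha0 H hHm
    have hA0 : ENNReal.ofReal (‖a‖ ^ 2) ≠ 0 := by
      rw [Ne, ENNReal.ofReal_eq_zero, not_le]; positivity
    have e4 : ENNReal.ofReal (‖a‖ ^ 2) * ∫⁻ x, H (0 + a * (x - 0)) ≤
        ENNReal.ofReal (‖a‖ ^ 2) * (ENNReal.ofReal (16 * R ^ 2) * I) := by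
      rw [e3, e1, ← mul_assoc, ← ENNReal.ofReal_mul (by positivity)]
      refine hc.trans (mul_le_mul' (ENNReal.ofReal_le_ofReal ?_) (lintegral_mono_set hball))
      rw [hr]; apply le_of_eq; ring
    exact e2.trans ((ENNReal.mul_le_mul_iff_right hA0 ENNReal.ofReal_ne_top).1 e4)
  have hcont : ContinuousOn (fun x => (f (a * x) - f x) ^ 2) Ω :=
    ((hf.continuousOn.comp (continuous_const.mul continuous_id).continuousOn hmaps).sub
      hf.continuousOn).pow 2
  have hae : AEMeasurable (fun x => 2 * ENNReal.ofReal ((f (a * x) - f x) ^ 2))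
      (volume.restrict Ω) :=
    ((hcont.aemeasurable hΩo.measurableSet).ennreal_ofReal).const_mul _
  calc _ ≤ ∫⁻ x in Ω, (2 * ENNReal.ofReal ((f (a * x) - f x) ^ 2) +
          2 * ENNReal.ofReal ((f (a * x) - c) ^ 2)) :=
        lintegral_mono fun x => aux_two (f x) (f (a * x)) c
    _ = 2 * (∫⁻ x in Ω, ENNReal.ofReal ((f (a * x) - f x) ^ 2)) +
          2 * ∫⁻ x in Ω, ENNReal.ofReal ((f (a * x) - c) ^ 2) := by
        rw [lintegral_add_left' hae, lintegral_const_mul' _ _ (by simp),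
          lintegral_const_mul' _ _ (by simp)]
    _ ≤ 2 * (ENNReal.ofReal (S ^ 2 * R ^ 2) * I) + 2 * (ENNReal.ofReal (16 * R ^ 2) * I) := by
        gcongr
    _ = _ := by
        rw [show (2 : ℝ≥0∞) = ENNReal.ofReal 2 by simp, ← mul_assoc, ← mul_assoc, ← add_mul,
          ← ENNReal.ofReal_mul (by norm_num), ← ENNReal.ofReal_mul (by norm_num),
          ← ENNReal.ofReal_add (by positivity) (by positivity)]
        ring_nf

lemma aux_mean (Ω : Set ℂ) (hv : volume Ω ≠ ∞) (hm : MeasurableSet Ω) (f : ℂ → ℝ)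
    (hfm : AEStronglyMeasurable f (volume.restrict Ω))
    (hf2 : IntegrableOn (fun z => (f z) ^ 2) Ω) (c : ℝ) :
    ∫ z in Ω, (f z - ⨍ w in Ω, f w) ^ 2 ≤ ∫ z in Ω, (f z - c) ^ 2 := by
  have : IsFiniteMeasure (volume.restrict Ω) := ⟨by simpa using hv.lt_top⟩
  have hL2 : MemLp f 2 (volume.restrict Ω) := (memLp_two_iff_integrable_sq hfm).2 hf2
  have hf1 : Integrable f (volume.restrict Ω) := hL2.integrable one_le_two
  set m := ⨍ w in Ω, f w with hmdef
  have hI : ∫ w in Ω, f w = m * volume.real Ω := by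
    have := measure_smul_setAverage (μ := volume) f hv
    rw [← this, smul_eq_mul, mul_comm]
  have hexp : ∀ c : ℝ, ∫ z in Ω, (f z - c) ^ 2 =
      (∫ z in Ω, f z ^ 2) - 2 * c * (m * volume.real Ω) + c ^ 2 * volume.real Ω := by
    intro c
    have : ∀ z, (f z - c) ^ 2 = f z ^ 2 - (2 * c) * f z + c ^ 2 := fun z => by ring
    simp_rw [this]
    have hA : Integrable (fun z => f z ^ 2) (volume.restrict Ω) := hf2
    have hB : Integrable (fun z => (2 * c) * f z) (volume.restrict Ω) := hf1.const_mul _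
    have hC : Integrable (fun z => f z ^ 2 - (2 * c) * f z) (volume.restrict Ω) := hA.sub hB
    rw [integral_add hC (integrable_const _), integral_sub hA hB, integral_const_mul, hI]
    simp [mul_comm]
  rw [hexp m, hexp c]
  have : 0 ≤ volume.real Ω := measureReal_nonneg
  nlinarith [mul_nonneg (sq_nonneg (m - c)) this]

lemma aux_const (β : ℝ) (hβ0 : 0 < β) (hβ1 : β < 1) (α : ℝ) (hα : 2 < α) (ν : ℝ) (hν0 : 0 ≤ ν)
    (hν : ν < 1) :
    (2 * (π / cos (β * π / 2)) ^ 2 + 32) * (exp (2 * (π / cos (β * π / 2))) / π) ≤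
      ((10 ^ 6 / ((α - 1) * (1 - ν)) ^ (1 / α)) ^ 2 * Real.cot ((1 - β) * π / 4) ^ 4 / π) *
          ((2 * α - 2) / (α - 2)) ^ ((2 * α - 2) / α) *
          Real.exp (π ^ 2 * (2 + π ^ 4) ^ 2 * Real.cot ((1 - β) * π / 4) ^ 4 /
            (2 * Real.log 3)) := by
  have hpi := pi_pos
  have hpi3 := pi_gt_three
  set θ := (1 - β) * π / 4 with hθ
  have hθ0 : 0 < θ := by rw [hθ]; have : 0 < 1 - β := by linarith
                         positivity
  have hθ1 : θ < π / 4 := by rw [hθ]; nlinarith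
  set k := Real.cot θ with hk
  have hsin : 0 < sin θ := sin_pos_of_pos_of_lt_pi hθ0 (by linarith)
  have hcos : 0 < cos θ := cos_pos_of_mem_Ioo ⟨by linarith, by linarith⟩
  have hc2 : 0 < cos (2 * θ) := cos_pos_of_mem_Ioo ⟨by linarith, by linarith⟩
  have hkc : k = cos θ / sin θ := Real.cot_eq_cos_div_sin θ
  have hsc := sin_sq_add_cos_sq θ
  have hcos2 : 1 < 2 * cos θ ^ 2 := by
    rw [cos_two_mul] at hc2; linarith
  have hk1 : 1 ≤ k := by
    rw [hkc, le_div_iff₀ hsin, one_mul]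
    nlinarith
  have hcβ : cos (β * π / 2) = 2 * sin θ * cos θ := by
    rw [← sin_two_mul, ← cos_pi_div_two_sub]
    congr 1; rw [hθ]; ring
  set S := π / cos (β * π / 2) with hS
  have hS0 : 0 < S := by rw [hS, hcβ]; positivity
  have hSk : S ≤ π * k := by
    rw [hS, hcβ, hkc, div_le_iff₀ (by positivity)]
    have : π * (cos θ / sin θ) * (2 * sin θ * cos θ) = π * (2 * cos θ ^ 2) := by
      field_simp
    rw [this]; nlinarith
  -- left side
  have hL : (2 * S ^ 2 + 32) * (exp (2 * S) / π) ≤ 32 * exp (3 * S) / π := by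
    have h1 : 2 * S ^ 2 + 32 ≤ 32 * exp S := by
      have := Real.quadratic_le_exp_of_nonneg hS0.le
      nlinarith
    calc _ ≤ (32 * exp S) * (exp (2 * S) / π) := by gcongr
      _ = 32 * (exp S * exp (2 * S)) / π := by ring
      _ = _ := by rw [← Real.exp_add]; ring_nf
  have hk4 : 1 ≤ k ^ 4 := one_le_pow₀ hk1
  have hkk4 : k ≤ k ^ 4 := le_self_pow₀ hk1 (by norm_num)
  have hE : exp (3 * S) ≤ Real.exp (π ^ 2 * (2 + π ^ 4) ^ 2 * k ^ 4 / (2 * Real.log 3)) := by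
    apply Real.exp_le_exp.2
    have hl0 : 0 < Real.log 3 := Real.log_pos (by norm_num)
    have hl : Real.log 3 ≤ 2 := by
      have := Real.log_le_sub_one_of_pos (by norm_num : (0:ℝ) < 3)
      linarith
    rw [le_div_iff₀ (by positivity)]
    have h1 : 3 * S * (2 * Real.log 3) ≤ 3 * (π * k) * (2 * 2) := by gcongr
    have h2 : π ^ 2 * 4 * k ^ 4 ≤ π ^ 2 * (2 + π ^ 4) ^ 2 * k ^ 4 := by
      gcongr
      have : 0 < π ^ 4 := by positivity
      nlinarith
    have h3 : 3 * (π * k) * (2 * 2) ≤ π ^ 2 * 4 * k ^ 4 := by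
      have : π * k ≤ π * k ^ 4 := by gcongr
      have h5 : 0 < k ^ 4 := by positivity
      have : 3 * (π * k ^ 4) ≤ π * (π * k ^ 4) := by gcongr
      nlinarith
    linarith
  have hα1 : 0 < (α - 1) * (1 - ν) := mul_pos (by linarith) (by linarith)
  have hD : ((α - 1) * (1 - ν)) ^ (1 / α) ≤ 3 := by
    have h1 : (α - 1) * (1 - ν) ≤ exp α := by
      have := Real.add_one_le_exp α
      nlinarith
    calc _ ≤ (exp α) ^ (1 / α) := Real.rpow_le_rpow hα1.le h1 (by positivity)
      _ = exp 1 := by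
        rw [← Real.exp_mul]; congr 1; field_simp
      _ ≤ 3 := by have := Real.exp_one_lt_d9; linarith
  have hDp : 0 < ((α - 1) * (1 - ν)) ^ (1 / α) := Real.rpow_pos_of_pos hα1 _
  have hC : 32 ≤ (10 ^ 6 / ((α - 1) * (1 - ν)) ^ (1 / α)) ^ 2 := by
    have : (10 : ℝ) ^ 6 / 3 ≤ 10 ^ 6 / ((α - 1) * (1 - ν)) ^ (1 / α) := by gcongr
    calc (32 : ℝ) ≤ (10 ^ 6 / 3) ^ 2 := by norm_num
      _ ≤ _ := by gcongr
  have hP : 1 ≤ ((2 * α - 2) / (α - 2)) ^ ((2 * α - 2) / α) := by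
    apply Real.one_le_rpow
    · rw [le_div_iff₀ (by linarith)]; linarith
    · exact div_nonneg (by linarith) (by linarith)
  refine hL.trans ?_
  set A := (10 ^ 6 / ((α - 1) * (1 - ν)) ^ (1 / α)) ^ 2
  set P := ((2 * α - 2) / (α - 2)) ^ ((2 * α - 2) / α)
  set E := Real.exp (π ^ 2 * (2 + π ^ 4) ^ 2 * k ^ 4 / (2 * Real.log 3))
  have hE0 : 0 < E := Real.exp_pos _
  calc 32 * exp (3 * S) / π ≤ 32 * E / π := by gcongr
    _ = (32 * 1 / π) * 1 * E := by ring
    _ ≤ (A * k ^ 4 / π) * P * E := by gcongr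

theorem neumann_poincare_spiral_shaped
    (β : ℝ) (hβ0 : 0 < β) (hβ1 : β < 1)
    (φ : ℂ → ℂ) (hφd : DifferentiableOn ℂ φ (Metric.ball 0 1))
    (hφi : Set.InjOn φ (Metric.ball 0 1)) (hφ0 : φ 0 = 0)
    (δ : ℝ) (hδ : |δ| < β * π / 2)
    (hspiral : ∀ z ∈ Metric.ball (0 : ℂ) 1, z ≠ 0 →
      |Complex.arg (Complex.exp (Complex.I * δ) * z * deriv φ z / φ z)| ≤ β * π / 2)
    (Ω : Set ℂ) (hΩ : Ω = φ '' Metric.ball 0 1) (hbdd : Bornology.IsBounded Ω)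
    (K : ℝ) (hKdef : K = Real.cot ((1 - β) * π / 4) ^ 2)
    (α : ℝ) (hα : 2 < α) (hαK : α * (K ^ 2 - 1) < 2 * K ^ 2)
    (hν : (10 : ℝ) ^ (4 * α) * (24 * π ^ 2 * Real.cot ((1 - β) * π / 4) ^ 4) ^ α *
        ((α - 2) / (α - 1)) < 1)
    (f : ℂ → ℝ) (hf : ContDiffOn ℝ 1 f Ω)
    (hf2 : IntegrableOn (fun z => (f z) ^ 2) Ω)
    (hg2 : IntegrableOn (fun z => ‖fderiv ℝ f z‖ ^ 2) Ω) :
    ∫ z in Ω, (f z - ⨍ w in Ω, f w) ^ 2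
      ≤ ((10 ^ 6 /
            ((α - 1) *
              (1 - (10 : ℝ) ^ (4 * α) * (24 * π ^ 2 * Real.cot ((1 - β) * π / 4) ^ 4) ^ α *
                ((α - 2) / (α - 1)))) ^ (1 / α)) ^ 2 *
            Real.cot ((1 - β) * π / 4) ^ 4 / π) *
          ((2 * α - 2) / (α - 2)) ^ ((2 * α - 2) / α) *
          Real.exp (π ^ 2 * (2 + π ^ 4) ^ 2 * Real.cot ((1 - β) * π / 4) ^ 4 /
            (2 * Real.log 3)) *
          (volume Ω).toReal *
          ∫ z in Ω, ‖fderiv ℝ f z‖ ^ 2 := by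
  have hν0 : 0 ≤ (10 : ℝ) ^ (4 * α) * (24 * π ^ 2 * Real.cot ((1 - β) * π / 4) ^ 4) ^ α *
        ((α - 2) / (α - 1)) := by
    have : 0 ≤ (α - 2) / (α - 1) := div_nonneg (by linarith) (by linarith)
    positivity
  have hconst := aux_const β hβ0 hβ1 α hα _ hν0 hν
  have hpi := pi_pos
  have hhalf : (1 / 2 : ℂ) ∈ ball (0 : ℂ) 1 := by simp; norm_num
  have hφh : φ (1 / 2) ≠ 0 := by
    intro h
    have := hφi hhalf (mem_ball_self one_pos) (by rw [h, hφ0])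
    norm_num at this
  have hΩo : IsOpen Ω := by
    rcases (hφd.analyticOnNhd isOpen_ball).is_constant_or_isOpen
      (convex_ball (0 : ℂ) 1).isPreconnected with ⟨w, hw⟩ | h
    · exact absurd (by rw [hw _ hhalf, ← hw 0 (by simp), hφ0]) hφh
    · rw [hΩ]; exact h _ subset_rfl isOpen_ball
  have hcb : 0 < cos (β * π / 2) :=
    cos_pos_of_mem_Ioo ⟨by nlinarith, by nlinarith⟩
  have hd' := abs_lt.1 hδ
  have hcd : 0 < cos δ := cos_pos_of_mem_Ioo ⟨by nlinarith, by nlinarith⟩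
  set S := π / cos (β * π / 2) with hS
  have hS0 : 0 < S := by positivity
  set μ : ℂ := S * Complex.exp (-(Complex.I * δ)) with hμ
  have hen : Complex.exp (-(Complex.I * δ)) = Complex.exp (((-δ : ℝ) : ℂ) * Complex.I) := by
    congr 1; push_cast; ring
  have hμn : ‖μ‖ = S := by
    rw [hμ, norm_mul, hen, Complex.norm_exp_ofReal_mul_I, Complex.norm_real, Real.norm_eq_abs,
      abs_of_pos hS0, mul_one]
  have han : ‖Complex.exp (-μ)‖ = exp (-(S * cos δ)) := by
    rw [Complex.norm_exp, Complex.neg_re, hμ, Complex.re_ofReal_mul, hen,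
      Complex.exp_ofReal_mul_I_re, Real.cos_neg]
  have hinv : ∀ w ∈ Ω, ∀ t ∈ Set.Icc (0 : ℝ) 1, Complex.exp (-(t * μ)) * w ∈ Ω := by
    intro w hw t ht
    rw [hΩ] at hw ⊢
    have := aux_invariant β hβ0 hβ1 φ hφd hφi hφ0 δ hspiral S 0 hS0.le
      (by rw [abs_zero]; positivity) w hw t ht
    simpa [hμ] using this
  obtain ⟨M, hM⟩ := hbdd.exists_norm_le
  have hbdN : BddAbove (norm '' Ω) := ⟨M, by rintro _ ⟨w, hw, rfl⟩; exact hM w hw⟩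
  have hhΩ : φ (1 / 2) ∈ Ω := by rw [hΩ]; exact ⟨_, hhalf, rfl⟩
  set R := sSup (norm '' Ω) with hR
  have hle : ∀ w ∈ Ω, ‖w‖ ≤ R := fun w hw => le_csSup hbdN ⟨w, hw, rfl⟩
  have hR0 : 0 < R := (norm_pos_iff.2 hφh).trans_le (hle _ hhΩ)
  have hlt : ∀ w ∈ Ω, ‖w‖ < R := by
    intro w hw
    by_cases hw0 : w = 0
    · simpa [hw0] using hR0
    have hcont : Filter.Tendsto (fun t : ℝ => ((1 + t : ℝ) : ℂ) * w) (nhds 0) (nhds w) := by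
      have : Continuous (fun t : ℝ => ((1 + t : ℝ) : ℂ) * w) := by fun_prop
      simpa using this.tendsto 0
    obtain ⟨ε, hε, hb⟩ := Metric.eventually_nhds_iff.1 (hcont.eventually (hΩo.eventually_mem hw))
    have h1 := hle _ (hb (y := ε / 2) (by simp [abs_of_pos hε]; linarith))
    rw [norm_mul, Complex.norm_real, Real.norm_eq_abs, abs_of_pos (by linarith)] at h1
    have := norm_pos_iff.2 hw0
    nlinarith
  have hball : ball 0 (R * ‖Complex.exp (-μ)‖) ⊆ Ω := by
    intro v hv
    rw [mem_ball_zero_iff, han, Real.exp_neg, ← div_eq_mul_inv, lt_div_iff₀ (exp_pos _)] at hv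
    obtain ⟨_, ⟨w, hw, rfl⟩, hlt⟩ := exists_lt_of_lt_csSup (Set.Nonempty.image _ ⟨_, hhΩ⟩) hv
    rw [hΩ] at hw ⊢
    refine aux_ball β hβ0 hβ1 φ hφd hφi hφ0 δ hδ hspiral w hw v ?_
    rw [Real.exp_neg, ← div_eq_mul_inv, le_div_iff₀ (exp_pos _)]
    exact hlt.le
  obtain ⟨c, hc⟩ := aux_core Ω hΩo f hf μ S R hμn hR0 hlt hinv hball
  have hvt : volume Ω ≠ ∞ := hbdd.measure_lt_top.ne
  have hmeasf : AEStronglyMeasurable f (volume.restrict Ω) :=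
    hf.continuousOn.aestronglyMeasurable hΩo.measurableSet
  refine (aux_mean Ω hvt hΩo.measurableSet f hmeasf hf2 c).trans ?_
  set J := ∫ z in Ω, ‖fderiv ℝ f z‖ ^ 2 with hJ
  have hJ0 : 0 ≤ J := integral_nonneg fun z => sq_nonneg _
  have hIJ : ∫⁻ x in Ω, ENNReal.ofReal (‖fderiv ℝ f x‖ ^ 2) = ENNReal.ofReal J :=
    (ofReal_integral_eq_lintegral_ofReal hg2 (Filter.Eventually.of_forall fun z => sq_nonneg _)).symm
  have h1 : ∫ z in Ω, (f z - c) ^ 2 ≤ (2 * S ^ 2 + 32) * R ^ 2 * J := by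
    have hm2 : AEStronglyMeasurable (fun z => (f z - c) ^ 2) (volume.restrict Ω) :=
      (hmeasf.sub aestronglyMeasurable_const).pow 2
    rw [integral_eq_lintegral_of_nonneg_ae (Filter.Eventually.of_forall fun z => sq_nonneg _) hm2]
    refine ENNReal.toReal_le_of_le_ofReal (by positivity) ?_
    rw [hIJ, ← ENNReal.ofReal_mul (by positivity)] at hc
    exact hc
  have hvol : π * (R * ‖Complex.exp (-μ)‖) ^ 2 ≤ (volume Ω).toReal := by
    have h2 := ENNReal.toReal_mono hvt (measure_mono (μ := volume) hball)
    rw [Complex.volume_ball, ENNReal.toReal_mul, ENNReal.toReal_pow,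
      ENNReal.toReal_ofReal (by positivity)] at h2
    simp at h2
    linarith
  have hR2 : R ^ 2 ≤ exp (2 * S) / π * (volume Ω).toReal := by
    have h3 : exp (-S) ≤ exp (-(S * cos δ)) := by
      apply Real.exp_le_exp.2
      nlinarith [Real.cos_le_one δ]
    have h4 : π * (R * exp (-S)) ^ 2 ≤ (volume Ω).toReal := by
      refine le_trans ?_ hvol
      rw [han]; gcongr
    calc R ^ 2 = exp (2 * S) / π * (π * (R * exp (-S)) ^ 2) := by
          rw [Real.exp_neg, two_mul, Real.exp_add]; field_simp
      _ ≤ _ := by gcongr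
  refine h1.trans (mul_le_mul_of_nonneg_right ?_ hJ0)
  calc (2 * S ^ 2 + 32) * R ^ 2 ≤ (2 * S ^ 2 + 32) * (exp (2 * S) / π * (volume Ω).toReal) := by
        gcongr
    _ = (2 * S ^ 2 + 32) * (exp (2 * S) / π) * (volume Ω).toReal := by ring
    _ ≤ _ := mul_le_mul_of_nonneg_right hconst ENNReal.toReal_nonneg
end

section
/- Let Ω ⊂ ℂ be a bounded domain whose boundary is a Jordan curve satisfying the Ahlfors three-point condition with constant C ≥ 1, and set K₀ = 2^{−10}·exp{(1 + e^{2π}C⁵)²}. Then for every α with 2 < α, α(K₀² − 1) < 2K₀², and ν := 10^{4α}·((24π²/2^{20})·e^{2(1 + e^{2π}C⁵)²})^α·(α−2)/(α−1) < 1, every test function f on Ω satisfies ∬_Ω |f − f_Ω|² dxdy ≤ (C_α²·e^{2(1 + e^{2π}C⁵)²}/(2^{20}π)) · ((2α−2)/(α−2))^{(2α−2)/α} · exp{π²(2 + π⁴)²·e^{2(1 + e^{2π}C⁵)²}/(2^{21}·log 3)} · |Ω| · ∬_Ω |∇f|² dxdy, where C_α = 10⁶/[(α−1)(1−ν)]^{1/α}.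 -/
open MeasureTheory Metric Real
open scoped ENNReal NNReal

theorem nap_const_of_exp {X : Type*} [TopologicalSpace X] {S : Set X} (hS : IsPreconnected S)
    {φ : X → ℂ} (hφ : ContinuousOn φ S) {w : ℂ} (hw : ∀ x ∈ S, Complex.exp (φ x) = w)
    {x y : X} (hx : x ∈ S) (hy : y ∈ S) : φ x = φ y := by
  refine hS.induction₂ (fun x y => φ x = φ y) ?_ ?_ ?_ hx hy
  · intro x hx
    have h1 : ∀ᶠ y in nhdsWithin x S, dist (φ y) (φ x) < 1 :=
      (hφ x hx).eventually (Metric.ball_mem_nhds _ one_pos)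
    filter_upwards [h1, self_mem_nhdsWithin] with y hy hyS
    have h2 : Complex.exp (φ y) = Complex.exp (φ x) := by rw [hw y hyS, hw x hx]
    obtain ⟨n, hn⟩ := Complex.exp_eq_exp_iff_exists_int.1 h2
    have h3 : n = 0 := by
      by_contra hne
      rw [hn, dist_eq_norm] at hy
      have : ‖φ x + n * (2 * π * Complex.I) - φ x‖ = |(n:ℝ)| * (2 * π) := by
        simp [abs_of_pos Real.pi_pos]
      rw [this] at hy
      have h4 : (1:ℝ) ≤ |(n:ℝ)| := by exact_mod_cast Int.one_le_abs hne
      nlinarith [Real.pi_gt_three]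
    rw [hn, h3]; simp
  · intro x y z _ _ _ h1 h2; exact h1.trans h2
  · intro x y _ _ h; exact h.symm

theorem nap_no_log_circle (H : ℂ → ℂ) (hH : Continuous H) (a : ℂ) (R : ℝ) (hR : 0 < R)
    (h : ∀ w : ℂ, ‖w - a‖ = R → Complex.exp (H w) = w - a) : False := by
  have key := nap_const_of_exp (S := (Set.univ : Set ℝ)) isPreconnected_univ
    (φ := fun θ : ℝ => H (a + R * Complex.exp (θ * Complex.I)) - θ * Complex.I)
    (by fun_prop) (w := R) (by
      intro θ _
      rw [Complex.exp_sub, h]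
      · field_simp; ring
      · simp [Complex.norm_exp_ofReal_mul_I, abs_of_pos hR]) 
    (Set.mem_univ 0) (Set.mem_univ (2 * π))
  have e : Complex.exp (((2 * π : ℝ) : ℂ) * Complex.I) = 1 := by
    push_cast; exact Complex.exp_two_pi_mul_I
  simp only [e] at key
  simp at key
  have h2 : (2 * (π:ℂ) * Complex.I) = 0 := by linear_combination key
  simp [Real.pi_ne_zero] at h2

theorem nap_frontier_comp {K : Set ℂ} (hK : IsClosed K) (a : ℂ) :
    frontier (connectedComponentIn Kᶜ a) ⊆ K := by
  intro z hz
  by_contra hzK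
  have ho : IsOpen (connectedComponentIn Kᶜ z) := hK.isOpen_compl.connectedComponentIn
  have hoa : IsOpen (connectedComponentIn Kᶜ a) := hK.isOpen_compl.connectedComponentIn
  have hmz : z ∈ connectedComponentIn Kᶜ z := mem_connectedComponentIn hzK
  obtain ⟨y, hy1, hy2⟩ := mem_closure_iff.1 hz.1 _ ho hmz
  have e1 := connectedComponentIn_eq hy1
  have e2 := connectedComponentIn_eq hy2
  rw [← e1] at e2
  apply hz.2
  rw [hoa.interior_eq, e2]; exact hmz

theorem nap_eilenberg {K : Set ℂ} (hK : IsClosed K) {a b : ℂ} (ha : a ∉ K) (hb : b ∉ K)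
    (hbd : Bornology.IsBounded (connectedComponentIn Kᶜ a))
    (g : ℂ → ℂ) (hg : ContinuousOn g K)
    (hge : ∀ z ∈ K, Complex.exp (g z) = (z - a) / (z - b)) :
    b ∈ connectedComponentIn Kᶜ a := by
  by_contra hbA
  set A := connectedComponentIn Kᶜ a with hA
  have haA : a ∈ A := mem_connectedComponentIn ha
  have hAK : A ⊆ Kᶜ := connectedComponentIn_subset _ _
  obtain ⟨G, hG⟩ := ContinuousMap.exists_restrict_eq hK
    ⟨K.domRestrict g, continuousOn_iff_continuous_domRestrict.mp hg⟩
  have hG' : ∀ z ∈ K, G z = g z := by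
    intro z hz
    have := congrArg (fun h => h ⟨z, hz⟩) hG
    simpa using this
  classical
  let F : ℂ → ℂ := A.piecewise (fun z => (z - b) * Complex.exp (G z)) (fun z => z - a)
  have hF : Continuous F := by
    apply Continuous.piecewise
    · intro z hz
      have hzK := nap_frontier_comp hK a hz
      have : z - b ≠ 0 := by rw [sub_ne_zero]; rintro rfl; exact hb hzK
      rw [hG' z hzK, hge z hzK]; field_simp
    · fun_prop
    · fun_prop
  have hF0 : ∀ z, F z ≠ 0 := by
    intro z
    by_cases hz : z ∈ A
    · simp only [F, Set.piecewise_eq_of_mem _ _ _ hz]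
      refine mul_ne_zero ?_ (Complex.exp_ne_zero _)
      rw [sub_ne_zero]; rintro rfl; exact hbA hz
    · simp only [F, Set.piecewise_eq_of_notMem _ _ _ hz]
      rw [sub_ne_zero]; rintro rfl; exact hz haA
  have hsc : IsSimplyConnected (Set.univ : Set ℂ) := by
    have := SimplyConnectedSpace.ofContractible ℂ
    exact (Homeomorph.Set.univ ℂ).toHomotopyEquiv.simplyConnectedSpace_iff.2 this
  obtain ⟨H, hHc, hH⟩ := Complex.exists_continuousOn_eqOn_exp_comp (X := ℂ) hsc isOpen_univ
    hF.continuousOn (by rintro ⟨z, -, hz⟩; exact hF0 z hz)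
  obtain ⟨R, hR⟩ := hbd.subset_ball a
  refine nap_no_log_circle H (continuousOn_univ.1 hHc) a (max R 1) (by positivity) ?_
  intro w hw
  have hwA : w ∉ A := by
    intro hwA
    have := hR hwA
    rw [mem_ball, dist_eq_norm, hw] at this
    exact absurd this (not_lt.2 (le_max_left _ _))
  have := hH (Set.mem_univ w)
  simpa [F, Set.piecewise_eq_of_notMem _ _ _ hwA] using this

theorem nap_log_exists {Γ Ω : Set ℂ} (hΓ : IsClosed Γ) (hΩ : IsPreconnected Ω) (hd : Disjoint Γ Ω)
    {a b : ℂ} (ha : a ∈ Ω) (hb : b ∈ Ω) :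
    ∃ g : ℂ → ℂ, ContinuousOn g Γ ∧ ∀ z ∈ Γ, Complex.exp (g z) = (z - a) / (z - b) := by
  have hne : ∀ z ∈ Γ, ∀ x ∈ Ω, z - x ≠ 0 := by
    intro z hz x hx h
    rw [sub_eq_zero] at h
    exact Set.disjoint_left.1 hd hz (h ▸ hx)
  refine hΩ.induction₂ (fun a b => ∃ g : ℂ → ℂ, ContinuousOn g Γ ∧
    ∀ z ∈ Γ, Complex.exp (g z) = (z - a) / (z - b)) ?_ ?_ ?_ ha hb
  · intro x hx
    have hxΓ : x ∈ Γᶜ := fun h => Set.disjoint_left.1 hd h hx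
    obtain ⟨ε, hε, hball⟩ := Metric.isOpen_iff.1 hΓ.isOpen_compl x hxΓ
    filter_upwards [mem_nhdsWithin_of_mem_nhds (Metric.ball_mem_nhds x hε), self_mem_nhdsWithin]
      with y hy hyΩ
    refine ⟨fun z => -Complex.log ((z - y) / (z - x)), ?_, ?_⟩
    · refine ContinuousOn.neg (ContinuousOn.clog ?_ ?_)
      · exact ContinuousOn.div (by fun_prop) (by fun_prop) (fun z hz => hne z hz x hx)
      · intro z hz
        have hzx : ε ≤ ‖z - x‖ := by
          by_contra hlt
          exact hball (by rw [mem_ball, dist_eq_norm]; exact not_le.1 hlt) hz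
        have : (z - y) / (z - x) = 1 + (x - y) / (z - x) := by
          field_simp [hne z hz x hx]; ring
        rw [this]
        apply Complex.mem_slitPlane_of_norm_lt_one
        rw [norm_div, div_lt_one (by linarith)]
        rw [mem_ball, dist_comm, dist_eq_norm] at hy
        linarith
    · intro z hz
      rw [Complex.exp_neg, Complex.exp_log (div_ne_zero (hne z hz y hyΩ) (hne z hz x hx)), inv_div]
  · rintro x y z hx hy hz ⟨g, hg, hg'⟩ ⟨k, hk, hk'⟩
    refine ⟨fun w => g w + k w, hg.add hk, fun w hw => ?_⟩
    rw [Complex.exp_add, hg' w hw, hk' w hw]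
    have := hne w hw y hy
    have := hne w hw z hz
    field_simp
  · rintro x y hx hy ⟨g, hg, hg'⟩
    refine ⟨fun w => - g w, hg.neg, fun w hw => ?_⟩
    rw [Complex.exp_neg, hg' w hw, inv_div]

theorem nap_john {Γ Ω : Set ℂ} {C : ℝ} (hC : 1 ≤ C) (hΓ : IsCompact Γ) (hΓn : Γ.Nonempty)
    (hBT : ∀ p ∈ Γ, ∀ q ∈ Γ, ∃ S, IsPreconnected S ∧ S ⊆ Γ ∧ p ∈ S ∧ q ∈ S ∧
      ∀ s ∈ S, dist s p ≤ C * dist p q)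
    (z : ℂ) (hΩ : Ω = connectedComponentIn Γᶜ z) (hbd : Bornology.IsBounded Ω)
    {a b : ℂ} (ha : a ∈ Ω) (hb : b ∈ Ω) :
    ∃ A, IsPreconnected A ∧ A ⊆ Ω ∧ a ∈ A ∧ b ∈ A ∧
      ∀ w ∈ A, min (dist w a) (dist w b) < (4 * C + 4) * infDist w Γ := by
  have hΓc : IsClosed Γ := hΓ.isClosed
  have hΩp : IsPreconnected Ω := hΩ ▸ isPreconnected_connectedComponentIn
  have hΩΓ : Ω ⊆ Γᶜ := hΩ ▸ connectedComponentIn_subset _ _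
  have hd : Disjoint Γ Ω := by
    rw [Set.disjoint_left]; intro x hx hx'; exact hΩΓ hx' hx
  obtain ⟨L, hL, hLe⟩ := nap_log_exists hΓc hΩp hd ha hb
  set K : Set ℂ := {w | (4 * C + 4) * infDist w Γ ≤ min (dist w a) (dist w b)} with hKdef
  have hK : IsClosed K := by
    apply isClosed_le
    · exact continuous_const.mul (continuous_infDist_pt _)
    · fun_prop
  have hpos : ∀ x ∈ Ω, 0 < infDist x Γ := fun x hx =>
    (hΓc.notMem_iff_infDist_pos hΓn).1 (hΩΓ hx)
  have haK : a ∉ K := by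
    intro h
    have h1 : (4 * C + 4) * infDist a Γ ≤ min (dist a a) (dist a b) := h
    have := min_le_left (dist a a) (dist a b)
    rw [dist_self] at this h1
    nlinarith [hpos a ha]
  have hbK : b ∉ K := by
    intro h
    have h1 : (4 * C + 4) * infDist b Γ ≤ min (dist b a) (dist b b) := h
    have := min_le_right (dist b a) (dist b b)
    rw [dist_self] at this h1
    nlinarith [hpos b hb]
  have hΓK : Γ ⊆ K := by
    intro w hw
    change (4 * C + 4) * infDist w Γ ≤ min (dist w a) (dist w b)
    rw [infDist_zero_of_mem hw, mul_zero]; positivity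
  have hAΩ : connectedComponentIn Kᶜ a ⊆ Ω := by
    have h1 : Ω = connectedComponentIn Γᶜ a := by
      rw [hΩ] at ha ⊢; exact connectedComponentIn_eq ha
    rw [h1]
    exact connectedComponentIn_mono a (Set.compl_subset_compl.2 hΓK)
  have hKm : ∀ w ∈ K, 0 < min (dist w a) (dist w b) := by
    intro w hw
    refine lt_min (dist_pos.2 ?_) (dist_pos.2 ?_)
    · rintro rfl; exact haK hw
    · rintro rfl; exact hbK hw
  have hKm' : ∀ w ∈ K, infDist w Γ ≤ min (dist w a) (dist w b) / (4 * C + 4) := by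
    intro w hw
    rw [le_div_iff₀ (by positivity), mul_comm]; exact hw
  -- slit plane fact
  have hsl : ∀ p w c : ℂ, dist p w < dist w c → (p - c) / (w - c) ∈ Complex.slitPlane := by
    intro p w c h
    have hne : w - c ≠ 0 := by
      rw [sub_ne_zero]; rintro rfl
      rw [dist_self] at h; exact absurd h (not_lt.2 dist_nonneg)
    have : (p - c) / (w - c) = 1 + (p - w) / (w - c) := by
      field_simp; ring
    rw [this]
    apply Complex.mem_slitPlane_of_norm_lt_one
    rw [norm_div, div_lt_one (norm_pos_iff.2 hne)]
    simpa [dist_eq_norm] using h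
  have hne0 : ∀ p w c : ℂ, dist p w < dist w c → w - c ≠ 0 := by
    intro p w c h
    rw [sub_ne_zero]; rintro rfl
    rw [dist_self] at h; exact absurd h (not_lt.2 dist_nonneg)
  let Φ : ℂ → ℂ → ℂ := fun w p => L p - Complex.log ((p - a) / (w - a))
    + Complex.log ((p - b) / (w - b))
  have hΦe : ∀ w p, p ∈ Γ → dist p w < min (dist w a) (dist w b) →
      Complex.exp (Φ w p) = (w - a) / (w - b) := by
    intro w p hp h
    have h1 := hsl p w a (h.trans_le (min_le_left _ _))
    have h2 := hsl p w b (h.trans_le (min_le_right _ _))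
    have n1 := hne0 p w a (h.trans_le (min_le_left _ _))
    have n2 := hne0 p w b (h.trans_le (min_le_right _ _))
    have e1 := Complex.slitPlane_ne_zero h1
    have e2 := Complex.slitPlane_ne_zero h2
    have m1 : p - a ≠ 0 := fun h => e1 (by simp [h])
    have m2 : p - b ≠ 0 := fun h => e2 (by simp [h])
    simp only [Φ]
    rw [Complex.exp_add, Complex.exp_sub, Complex.exp_log e1, Complex.exp_log e2, hLe p hp]
    field_simp
  have hΦc : ∀ w p q μ, p ∈ Γ → q ∈ Γ → dist p w ≤ μ → dist q w ≤ μ →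
      (2 * C + 1) * μ < min (dist w a) (dist w b) → Φ w p = Φ w q := by
    intro w p q μ hp hq hpw hqw hμ
    obtain ⟨S, hS, hSΓ, hpS, hqS, hSd⟩ := hBT p hp q hq
    have hSw : ∀ s ∈ S, dist s w < min (dist w a) (dist w b) := by
      intro s hs
      refine lt_of_le_of_lt ?_ hμ
      have h1 := hSd s hs
      have h2 := dist_triangle s p w
      have h3 := dist_triangle_right p q w
      nlinarith
    refine nap_const_of_exp hS (φ := Φ w) ?_ (w := (w - a) / (w - b)) ?_ hpS hqS
    · refine ContinuousOn.add (ContinuousOn.sub (hL.mono hSΓ) (ContinuousOn.clog ?_ ?_))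
        (ContinuousOn.clog ?_ ?_)
      · fun_prop
      · intro s hs; exact hsl s w a ((hSw s hs).trans_le (min_le_left _ _))
      · fun_prop
      · intro s hs; exact hsl s w b ((hSw s hs).trans_le (min_le_right _ _))
    · intro s hs; exact hΦe w s (hSΓ hs) (hSw s hs)
  have hP : ∀ w, ∃ p ∈ Γ, infDist w Γ = dist w p := fun w => hΓ.exists_infDist_eq_dist hΓn w
  choose P hPΓ hPd using hP
  have hPm : ∀ w ∈ K, dist (P w) w < min (dist w a) (dist w b) := by
    intro w hw
    rw [dist_comm, ← hPd w]
    refine (hKm' w hw).trans_lt ?_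
    rw [div_lt_iff₀ (by positivity)]
    nlinarith [hKm w hw]
  have hbA := nap_eilenberg hK haK hbK (hbd.subset hAΩ) (fun w => Φ w (P w)) ?_ ?_
  · refine ⟨connectedComponentIn Kᶜ a, isPreconnected_connectedComponentIn, hAΩ,
      mem_connectedComponentIn haK, hbA, ?_⟩
    intro w hw
    have := connectedComponentIn_subset _ _ hw
    exact not_le.1 this
  · intro w hw
    have hm := hKm w hw
    set m := min (dist w a) (dist w b) with hmdef
    have hη : 0 < m / (4 * C + 5) := by positivity
    have hev : (fun w' => Φ w' (P w)) =ᶠ[nhdsWithin w K] (fun w' => Φ w' (P w')) := by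
      filter_upwards [mem_nhdsWithin_of_mem_nhds (Metric.ball_mem_nhds w hη), self_mem_nhdsWithin]
        with w' hw' hw'K
      rw [mem_ball] at hw'
      set η := dist w' w with hηd
      have hη0 : 0 ≤ η := dist_nonneg
      set m' := min (dist w' a) (dist w' b) with hm'def
      have hmm : m ≤ m' + η := by
        rw [hmdef, hm'def, ← min_add_add_right]
        refine min_le_min ?_ ?_
        · have := dist_triangle w w' a; rw [dist_comm w w'] at this; linarith
        · have := dist_triangle w w' b; rw [dist_comm w w'] at this; linarith
      have h1 : dist (P w) w' ≤ (m' + η) / (4 * C + 4) + η := by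
        have e1 := hKm' w hw
        rw [hPd w, dist_comm] at e1
        have e2 : m / (4 * C + 4) ≤ (m' + η) / (4 * C + 4) := by gcongr
        have e3 := dist_triangle_right (P w) w' w
        linarith
      have h2 : dist (P w') w' ≤ (m' + η) / (4 * C + 4) + η := by
        have e1 := hKm' w' hw'K
        rw [hPd w', dist_comm] at e1
        have e2 : m' / (4 * C + 4) ≤ (m' + η) / (4 * C + 4) := by gcongr; linarith
        linarith
      refine hΦc w' _ _ _ (hPΓ w) (hPΓ w') h1 h2 ?_
      rw [lt_div_iff₀ (by positivity)] at hw'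
      have e4 : (2 * C + 1) * ((m' + η) / (4 * C + 4)) ≤ (m' + η) / 2 := by
        rw [← mul_div_assoc, div_le_div_iff₀ (by positivity) (by positivity)]
        have : 0 ≤ m' := (hKm w' hw'K).le
        nlinarith
      nlinarith
    refine ContinuousWithinAt.congr_of_eventuallyEq ?_ hev.symm rfl
    have hlt := hPm w hw
    have n1 := hne0 _ _ _ (hlt.trans_le (min_le_left _ _))
    have n2 := hne0 _ _ _ (hlt.trans_le (min_le_right _ _))
    apply ContinuousAt.continuousWithinAt
    refine ContinuousAt.add (ContinuousAt.sub continuousAt_const (ContinuousAt.clog ?_ ?_))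
        (ContinuousAt.clog ?_ ?_)
    · exact ContinuousAt.div (by fun_prop) (by fun_prop) n1
    · exact hsl _ _ _ (hlt.trans_le (min_le_left _ _))
    · exact ContinuousAt.div (by fun_prop) (by fun_prop) n2
    · exact hsl _ _ _ (hlt.trans_le (min_le_right _ _))
  · intro w hw
    exact hΦe w _ (hPΓ w) (hPm w hw)

theorem nap_arc {C : ℝ} {γ : ℝ → ℂ} (hγc : Continuous γ) (hγp : ∀ t : ℝ, γ (t + 1) = γ t)
    (_hC : 1 ≤ C)
    (hahl : ∀ s t : ℝ, 0 ≤ s → s ≤ t → t ≤ 1 →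
      min (Metric.diam (γ '' Set.Icc s t)) (Metric.diam (γ '' Set.Icc t (s + 1)))
        ≤ C * dist (γ s) (γ t)) :
    ∀ p ∈ γ '' Set.Icc (0 : ℝ) 1, ∀ q ∈ γ '' Set.Icc (0 : ℝ) 1,
      ∃ S, IsPreconnected S ∧ S ⊆ γ '' Set.Icc (0 : ℝ) 1 ∧ p ∈ S ∧ q ∈ S ∧
      ∀ s ∈ S, dist s p ≤ C * dist p q := by
  have hall : ∀ t, γ t ∈ γ '' Set.Icc (0 : ℝ) 1 := by
    intro t
    have hper : Function.Periodic γ 1 := hγp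
    obtain ⟨y, hy, hyt⟩ := hper.exists_mem_Ico₀ one_pos t
    exact ⟨y, ⟨hy.1, hy.2.le⟩, hyt.symm⟩
  have main : ∀ s t : ℝ, 0 ≤ s → s ≤ t → t ≤ 1 → ∃ S, IsPreconnected S ∧
      S ⊆ γ '' Set.Icc (0 : ℝ) 1 ∧ γ s ∈ S ∧ γ t ∈ S ∧
      ∀ x ∈ S, ∀ y ∈ S, dist x y ≤ C * dist (γ s) (γ t) := by
    intro s t hs hst ht
    have hb : ∀ u v, Bornology.IsBounded (γ '' Set.Icc u v) := fun u v =>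
      (isCompact_Icc.image hγc).isBounded
    rcases min_le_iff.1 (hahl s t hs hst ht) with h | h
    · refine ⟨γ '' Set.Icc s t, isPreconnected_Icc.image _ hγc.continuousOn, ?_,
        ⟨s, ⟨le_rfl, hst⟩, rfl⟩, ⟨t, ⟨hst, le_rfl⟩, rfl⟩, ?_⟩
      · rintro _ ⟨u, -, rfl⟩; exact hall u
      · intro x hx y hy; exact (dist_le_diam_of_mem (hb _ _) hx hy).trans h
    · refine ⟨γ '' Set.Icc t (s + 1), isPreconnected_Icc.image _ hγc.continuousOn, ?_,
        ⟨s + 1, ⟨by linarith, le_rfl⟩, hγp s⟩, ⟨t, ⟨le_rfl, by linarith⟩, rfl⟩, ?_⟩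
      · rintro _ ⟨u, -, rfl⟩; exact hall u
      · intro x hx y hy; exact (dist_le_diam_of_mem (hb _ _) hx hy).trans h
  rintro _ ⟨s, hs, rfl⟩ _ ⟨t, ht, rfl⟩
  rcases le_total s t with h | h
  · obtain ⟨S, h1, h2, h3, h4, h5⟩ := main s t hs.1 h ht.2
    exact ⟨S, h1, h2, h3, h4, fun x hx => h5 x hx _ h3⟩
  · obtain ⟨S, h1, h2, h3, h4, h5⟩ := main t s ht.1 h hs.2
    refine ⟨S, h1, h2, h4, h3, fun x hx => ?_⟩
    rw [dist_comm (γ s)]; exact h5 x hx _ h4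

theorem nap_carrot {Γ Ω : Set ℂ} {k : ℝ} (hk : 1 ≤ k) (hΓc : IsClosed Γ) (hΓn : Γ.Nonempty)
    (hΩΓ : Disjoint Ω Γ) (hfr : frontier Ω ⊆ Γ) (hne : Ω.Nonempty)
    (hbd : Bornology.IsBounded Ω)
    (hJ : ∀ a ∈ Ω, ∀ b ∈ Ω, ∃ A, IsPreconnected A ∧ A ⊆ Ω ∧ a ∈ A ∧ b ∈ A ∧
      ∀ w ∈ A, min (dist w a) (dist w b) < k * infDist w Γ) :
    ∃ x0 ∈ Ω, ∀ x ∈ Ω, ∃ A, IsPreconnected A ∧ A ⊆ Ω ∧ x ∈ A ∧ x0 ∈ A ∧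
      ∀ w ∈ A, dist w x ≤ (4 * k ^ 2) * infDist w Γ := by
  have hpos : ∀ x ∈ Ω, 0 < infDist x Γ := fun x hx =>
    (hΓc.notMem_iff_infDist_pos hΓn).1 (Set.disjoint_left.1 hΩΓ hx)
  obtain ⟨x0, hx0, hmax⟩ := hbd.isCompact_closure.exists_isMaxOn hne.closure
    (continuous_infDist_pt Γ).continuousOn
  have hmax' : ∀ x ∈ Ω, infDist x Γ ≤ infDist x0 Γ := fun x hx => hmax (subset_closure hx)
  obtain ⟨y, hy⟩ := hne
  have hT : 0 < infDist x0 Γ := (hpos y hy).trans_le (hmax' y hy)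
  have hx0Ω : x0 ∈ Ω := by
    by_contra hn
    have : x0 ∈ frontier Ω := ⟨hx0, fun h => hn (interior_subset h)⟩
    rw [infDist_zero_of_mem (hfr this)] at hT
    exact lt_irrefl _ hT
  set T := infDist x0 Γ with hTdef
  have hdiam : ∀ a ∈ Ω, ∀ b ∈ Ω, dist a b ≤ 2 * k * T := by
    intro a ha b hb
    obtain ⟨A, hA, hAΩ, haA, hbA, hAw⟩ := hJ a ha b hb
    obtain ⟨w, hw, hwe⟩ := hA.intermediate_value₂ haA hbA
      (f := fun w => dist w a) (g := fun w => dist w b) (by fun_prop) (by fun_prop)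
      (by simp) (by simp)
    have h1 := hAw w hw
    rw [hwe, min_self] at h1
    have h2 := dist_triangle_left a b w
    have h3 := hmax' w (hAΩ hw)
    have h4 : k * infDist w Γ ≤ k * T := by gcongr
    linarith
  refine ⟨x0, hx0Ω, fun x hx => ?_⟩
  obtain ⟨A, hA, hAΩ, haA, hbA, hAw⟩ := hJ x hx x0 hx0Ω
  refine ⟨A, hA, hAΩ, haA, hbA, fun w hw => ?_⟩
  have hd := hdiam w (hAΩ hw) x hx
  have hwp := hpos w (hAΩ hw)
  have h1 := hAw w hw
  have hkk : k * infDist w Γ ≤ k ^ 2 * infDist w Γ := by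
    apply mul_le_mul_of_nonneg_right _ hwp.le
    nlinarith
  rcases le_or_gt (dist w x0) (T / 2) with h | h
  · have h2 : T ≤ infDist w Γ + dist x0 w := infDist_le_infDist_add_dist
    rw [dist_comm] at h2
    have h5 : T ≤ 2 * infDist w Γ := by linarith
    have h6 : 2 * k * T ≤ 2 * k * (2 * infDist w Γ) := by gcongr
    linarith
  · rcases min_lt_iff.1 h1 with h2 | h2
    · have := mul_pos (by linarith : 0 < k) hwp
      linarith
    · have h5 : T ≤ 2 * (k * infDist w Γ) := by linarith
      have h6 : 2 * k * T ≤ 2 * k * (2 * (k * infDist w Γ)) := by gcongr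
      linarith

/-- chains -/
def NapChain (d : ℂ → ℝ) (A : Set ℂ) (n : ℕ) (x y : ℂ) (z : ℕ → ℂ) : Prop :=
  z 0 = x ∧ z n = y ∧ (∀ i ≤ n, z i ∈ A) ∧ ∀ i < n, dist (z i) (z (i + 1)) ≤ d (z i) / 8

theorem nap_chain_exists {d : ℂ → ℝ} (hd : ∀ x y, d x ≤ d y + dist x y) {A : Set ℂ}
    (hA : IsPreconnected A) (hpos : ∀ x ∈ A, 0 < d x) {x y : ℂ} (hx : x ∈ A) (hy : y ∈ A) :
    ∃ n z, NapChain d A n x y z := by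
  refine hA.induction₂' (fun x y => ∃ n z, NapChain d A n x y z) ?_ ?_ hx hy
  · intro x hx
    have h16 : 0 < d x / 16 := by have := hpos x hx; positivity
    filter_upwards [mem_nhdsWithin_of_mem_nhds (Metric.ball_mem_nhds x h16), self_mem_nhdsWithin]
      with y hy hyA
    rw [mem_ball] at hy
    have h1 := hd x y
    rw [dist_comm] at h1
    refine ⟨⟨1, fun i => if i = 0 then x else y, by simp, by simp, ?_, ?_⟩,
      ⟨1, fun i => if i = 0 then y else x, by simp, by simp, ?_, ?_⟩⟩
    · intro i _; dsimp only; split_ifs <;> assumption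
    · intro i hi
      have : i = 0 := by omega
      subst this
      simp only [if_true, zero_add, one_ne_zero, if_false]
      rw [dist_comm]; linarith
    · intro i _; dsimp only; split_ifs <;> assumption
    · intro i hi
      have : i = 0 := by omega
      subst this
      simp only [if_true, zero_add, one_ne_zero, if_false]
      linarith
  · rintro x y w _ _ _ ⟨n, z, h0, hn, hzA, hz⟩ ⟨m, v, g0, gm, hvA, hv⟩
    refine ⟨n + m, fun i => if i ≤ n then z i else v (i - n), by simp [h0], ?_, ?_, ?_⟩
    · dsimp only
      split_ifs with h
      · have : m = 0 := by omega
        subst this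
        simp only [add_zero]; rw [hn, ← g0, gm]
      · rw [Nat.add_sub_cancel_left, gm]
    · intro i hi
      dsimp only
      split_ifs with h
      · exact hzA i h
      · exact hvA _ (by omega)
    · intro i hi
      dsimp only
      by_cases h : i < n
      · rw [if_pos h.le, if_pos (by omega)]; exact hz i h
      · rw [if_neg (by omega : ¬ i + 1 ≤ n)]
        by_cases h' : i = n
        · subst h'
          rw [if_pos le_rfl, hn, ← g0, Nat.add_sub_cancel_left]
          exact hv 0 (by omega)
        · rw [if_neg (by omega)]
          have := hv (i - n) (by omega)
          rwa [show i - n + 1 = i + 1 - n by omega] at this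

theorem nap_chain_min {d : ℂ → ℝ} (hd : ∀ x y, d x ≤ d y + dist x y) {A : Set ℂ}
    (hA : IsPreconnected A) (hpos : ∀ x ∈ A, 0 < d x) {x y : ℂ} (hx : x ∈ A) (hy : y ∈ A) :
    ∃ n z, NapChain d A n x y z ∧
      ∀ i j, i + 2 ≤ j → j ≤ n → d (z i) / 8 < dist (z i) (z j) := by
  classical
  have hex := nap_chain_exists hd hA hpos hx hy
  obtain ⟨z, hz⟩ := Nat.find_spec hex
  have hmin := fun m => Nat.find_min hex (m := m)
  set n := Nat.find hex
  refine ⟨n, z, hz, fun i j hij hj => ?_⟩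
  by_contra hlt
  push Not at hlt
  obtain ⟨h0, hn, hzA, hzd⟩ := hz
  refine hmin (n - (j - i - 1)) (by omega)
    ⟨fun k => if k ≤ i then z k else z (k + (j - i - 1)), by simp [h0], ?_, ?_, ?_⟩
  · dsimp only
    rw [if_neg (by omega), Nat.sub_add_cancel (by omega)]; exact hn
  · intro k hk
    dsimp only
    split_ifs with h
    · exact hzA k (by omega)
    · exact hzA _ (by omega)
  · intro k hk
    dsimp only
    by_cases h : k < i
    · rw [if_pos h.le, if_pos (by omega)]; exact hzd k (by omega)
    · rw [if_neg (by omega : ¬ k + 1 ≤ i)]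
      by_cases h' : k = i
      · subst h'
        rw [if_pos le_rfl, show k + 1 + (j - k - 1) = j by omega]; exact hlt
      · rw [if_neg (by omega)]
        have := hzd (k + (j - i - 1)) (by omega)
        rwa [show k + (j - i - 1) + 1 = k + 1 + (j - i - 1) by omega] at this

theorem nap_count_aux {d : ℂ → ℝ} (hd : ∀ x y, d x ≤ d y + dist x y) {z : ℕ → ℂ} {y : ℂ}
    (I : Finset ℕ) (hpos : ∀ i ∈ I, 0 < d (z i))
    (hsep : ∀ i ∈ I, ∀ j ∈ I, i < j → d (z i) / 8 < dist (z i) (z j))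
    (hy : ∀ i ∈ I, dist y (z i) < d (z i) / 2) : (I.card : ℝ) ≤ 9216 := by
  rcases I.eq_empty_or_nonempty with rfl | ⟨i0, hi0⟩
  · simp
  have hdy : 0 < d y := by
    have h1 := hd (z i0) y
    have h2 := hy i0 hi0
    rw [dist_comm] at h1
    have := hpos i0 hi0
    linarith
  have hdisj' : ∀ i ∈ I, ∀ j ∈ I, i < j →
      Disjoint (ball (z i) (d (z i) / 32)) (ball (z j) (d (z j) / 32)) := by
    intro i hi j hj hij
    apply ball_disjoint_ball
    have h1 := hsep i hi j hj hij
    have h2 := hd (z j) (z i)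
    rw [dist_comm] at h2
    have := hpos i hi
    linarith
  have hdisj : Set.PairwiseDisjoint (↑I) (fun i => ball (z i) (d (z i) / 32)) := by
    intro i hi j hj hij
    rcases lt_or_gt_of_ne hij with h | h
    · exact hdisj' i hi j hj h
    · exact (hdisj' j hj i hi h).symm
  have hsub : (⋃ i ∈ I, ball (z i) (d (z i) / 32)) ⊆ ball y (2 * d y) := by
    apply Set.iUnion₂_subset
    intro i hi w hw
    rw [mem_ball] at hw ⊢
    have h1 := hd (z i) y
    have h2 := hy i hi
    rw [dist_comm] at h1
    have h3 := dist_triangle_right w y (z i)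
    have := hpos i hi
    linarith
  have h1 := measure_mono (μ := volume) hsub
  rw [measure_biUnion_finset hdisj (fun i _ => measurableSet_ball)] at h1
  have h2 : ∀ i ∈ I, ENNReal.ofReal ((d y / 48) ^ 2 * π) ≤ volume (ball (z i) (d (z i) / 32)) := by
    intro i hi
    have h1 := hd y (z i)
    have h2 := hy i hi
    have := hpos i hi
    rw [Complex.volume_ball, ← ENNReal.ofReal_pow (by positivity), ← ENNReal.ofReal_coe_nnreal,
      ← ENNReal.ofReal_mul (by positivity)]
    apply ENNReal.ofReal_le_ofReal
    simp only [NNReal.coe_real_pi]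
    gcongr ?_ ^ 2 * _
    linarith
  have h3 := (Finset.sum_le_sum h2).trans h1
  rw [Finset.sum_const, Complex.volume_ball, ← ENNReal.ofReal_pow (by positivity),
    ← ENNReal.ofReal_coe_nnreal, ← ENNReal.ofReal_mul (by positivity), nsmul_eq_mul,
    ← ENNReal.ofReal_natCast, ← ENNReal.ofReal_mul (by positivity),
    ENNReal.ofReal_le_ofReal_iff (by positivity)] at h3
  simp only [NNReal.coe_real_pi] at h3
  have h4 : (I.card : ℝ) * ((d y) ^ 2 * π) ≤ 9216 * ((d y) ^ 2 * π) := by nlinarith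
  exact le_of_mul_le_mul_right h4 (by positivity)

theorem nap_count {d : ℂ → ℝ} (hd : ∀ x y, d x ≤ d y + dist x y) {z : ℕ → ℂ} {y : ℂ} {n : ℕ}
    (hpos : ∀ i ≤ n, 0 < d (z i))
    (hsep : ∀ i j, i + 2 ≤ j → j ≤ n → d (z i) / 8 < dist (z i) (z j))
    (I : Finset ℕ) (hI : ∀ i ∈ I, i ≤ n)
    (hy : ∀ i ∈ I, dist y (z i) < d (z i) / 2) : (I.card : ℝ) ≤ 18432 := by
  classical
  have h1 : ((I.filter (fun i => Even i)).card : ℝ) ≤ 9216 := by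
    apply nap_count_aux hd (z := z) (y := y)
    · intro i hi; exact hpos i (hI i (Finset.mem_filter.1 hi).1)
    · intro i hi j hj hij
      have hi := Finset.mem_filter.1 hi
      have hj := Finset.mem_filter.1 hj
      refine hsep i j ?_ (hI j hj.1)
      obtain ⟨a, ha⟩ := hi.2
      obtain ⟨b, hb⟩ := hj.2
      omega
    · intro i hi; exact hy i (Finset.mem_filter.1 hi).1
  have h2 : ((I.filter (fun i => ¬ Even i)).card : ℝ) ≤ 9216 := by
    apply nap_count_aux hd (z := z) (y := y)
    · intro i hi; exact hpos i (hI i (Finset.mem_filter.1 hi).1)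
    · intro i hi j hj hij
      have hi := Finset.mem_filter.1 hi
      have hj := Finset.mem_filter.1 hj
      refine hsep i j ?_ (hI j hj.1)
      obtain ⟨a, ha⟩ := Nat.not_even_iff_odd.1 hi.2
      obtain ⟨b, hb⟩ := Nat.not_even_iff_odd.1 hj.2
      omega
    · intro i hi; exact hy i (Finset.mem_filter.1 hi).1
  have h3 := Finset.card_filter_add_card_filter_not (s := I) (fun i => Even i)
  have h4 : (I.card : ℝ) = ((I.filter (fun i => Even i)).card : ℝ)
    + ((I.filter (fun i => ¬ Even i)).card : ℝ) := by rw [← h3]; push_cast; rfl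
  linarith

theorem nap_ftc {U : Set ℂ} (hU : IsOpen U) {f : ℂ → ℝ} (hf : ContDiffOn ℝ 1 f U) {p q : ℂ}
    (h : ∀ t ∈ Set.Icc (0:ℝ) 1, p + (t:ℂ) * (q - p) ∈ U) :
    ‖f p - f q‖ₑ ≤ ∫⁻ t in Set.Ioc (0:ℝ) 1, ‖q - p‖ₑ * ‖fderiv ℝ f (p + (t:ℂ) * (q - p))‖ₑ := by
  have hdc : ContinuousOn (fderiv ℝ f) U := hf.continuousOn_fderiv_of_isOpen hU le_rfl
  have hder : ∀ t ∈ Set.uIcc (0:ℝ) 1, HasDerivAt (fun t : ℝ => f (p + (t:ℂ) * (q - p)))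
      (fderiv ℝ f (p + (t:ℂ) * (q - p)) (q - p)) t := by
    intro t ht
    rw [Set.uIcc_of_le zero_le_one] at ht
    have h1 : HasFDerivAt f (fderiv ℝ f (p + (t:ℂ) * (q - p))) (p + (t:ℂ) * (q - p)) :=
      ((hf.contDiffAt (hU.mem_nhds (h t ht))).differentiableAt one_ne_zero).hasFDerivAt
    have h2 : HasDerivAt (fun t : ℝ => p + (t:ℂ) * (q - p)) (q - p) t := by
      have := ((Complex.ofRealCLM.hasDerivAt (x := t)).mul_const (q - p)).const_add p
      simpa using this
    exact h1.comp_hasDerivAt t h2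
  have hcont : ContinuousOn (fun t : ℝ => fderiv ℝ f (p + (t:ℂ) * (q - p)) (q - p))
      (Set.uIcc (0:ℝ) 1) := by
    rw [Set.uIcc_of_le zero_le_one]
    refine ContinuousOn.clm_apply ?_ continuousOn_const
    exact hdc.comp (by fun_prop) h
  have := intervalIntegral.integral_eq_sub_of_hasDerivAt hder hcont.intervalIntegrable
  simp only [Complex.ofReal_one, one_mul, Complex.ofReal_zero, zero_mul, add_zero,
    add_sub_cancel] at this
  rw [← enorm_neg, neg_sub, ← this, intervalIntegral.integral_of_le zero_le_one]
  refine (enorm_integral_le_lintegral_enorm _).trans ?_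
  refine lintegral_mono fun t => ?_
  rw [mul_comm ‖q - p‖ₑ]
  exact (fderiv ℝ f (p + (t:ℂ) * (q - p))).le_opENorm (q - p)

/-- unnormalised average -/
noncomputable def napAvg (f : ℂ → ℝ) (z : ℂ) (ρ : ℝ) : ℝ :=
  ∫ u in ball (0:ℂ) 1, f (z + (ρ:ℂ) * u)

theorem nap_step {U : Set ℂ} (hU : IsOpen U) {f : ℂ → ℝ} (hf : ContDiffOn ℝ 1 f U) {z w : ℂ}
    {ρ σ : ℝ}
    (h : ∀ u ∈ closedBall (0:ℂ) 1, ∀ t ∈ Set.Icc (0:ℝ) 1,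
      z + (t:ℂ) * (w - z) + ((ρ + t * (σ - ρ) : ℝ) : ℂ) * u ∈ U) :
    ‖napAvg f z ρ - napAvg f w σ‖ₑ ≤ ∫⁻ t in Set.Ioc (0:ℝ) 1, ∫⁻ u in ball (0:ℂ) 1,
      ‖(w - z) + ((σ - ρ : ℝ) : ℂ) * u‖ₑ *
        ‖fderiv ℝ f (z + (t:ℂ) * (w - z) + ((ρ + t * (σ - ρ) : ℝ) : ℂ) * u)‖ₑ := by
  have hint : ∀ (z : ℂ) (ρ : ℝ), (∀ u ∈ closedBall (0:ℂ) 1, z + (ρ:ℂ) * u ∈ U) →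
      IntegrableOn (fun u => f (z + (ρ:ℂ) * u)) (ball (0:ℂ) 1) := by
    intro z ρ hh
    refine IntegrableOn.mono_set (t := closedBall (0:ℂ) 1) ?_ ball_subset_closedBall
    apply ContinuousOn.integrableOn_compact (isCompact_closedBall _ _)
    exact hf.continuousOn.comp (by fun_prop) hh
  have h0 : ∀ u ∈ closedBall (0:ℂ) 1, z + (ρ:ℂ) * u ∈ U := by
    intro u hu; simpa using h u hu 0 (by simp)
  have h1 : ∀ u ∈ closedBall (0:ℂ) 1, w + (σ:ℂ) * u ∈ U := by
    intro u hu; simpa using h u hu 1 (by simp)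
  unfold napAvg
  rw [← integral_sub (hint z ρ h0) (hint w σ h1)]
  refine (enorm_integral_le_lintegral_enorm _).trans ?_
  have hm := (measurable_fderiv ℝ f)
  rw [lintegral_lintegral_swap]
  · refine setLIntegral_mono' measurableSet_ball fun u hu => ?_
    have hu' := ball_subset_closedBall hu
    refine (nap_ftc hU hf (p := z + ρ * u) (q := w + σ * u) ?_).trans (le_of_eq ?_)
    · intro t ht
      convert h u hu' t ht using 1
      push_cast; ring
    · refine lintegral_congr fun t => ?_
      congr 3
      · push_cast; ring
      · push_cast; ring
  · apply Measurable.aemeasurable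
    refine Measurable.mul (f := fun p : ℝ × ℂ => ‖w - z + ((σ - ρ : ℝ) : ℂ) * p.2‖ₑ) (g := fun p : ℝ × ℂ => ‖fderiv ℝ f (z + (p.1:ℂ) * (w - z) + ((ρ + p.1 * (σ - ρ) : ℝ) : ℂ) * p.2)‖ₑ) ?_ ?_
    · fun_prop
    · exact (hm.comp (by fun_prop)).enorm

theorem nap_cov (F : ℂ → ℝ≥0∞) (x : ℂ) {r : ℝ} (hr : 0 < r) :
    ∫⁻ u in ball (0:ℂ) 1, F (x + (r:ℂ) * u) = ENNReal.ofReal (r⁻¹ ^ 2) * ∫⁻ v in ball x r, F v := by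
  have hme : MeasurableEmbedding (fun u : ℂ => r • u) :=
    (Homeomorph.smulOfNeZero r hr.ne').measurableEmbedding
  have h1 : ∫⁻ u, (ball x r).indicator F (x + r • u)
      = ENNReal.ofReal (r⁻¹ ^ 2) * ∫⁻ v, (ball x r).indicator F v := by
    rw [← hme.lintegral_map (fun v => (ball x r).indicator F (x + v)),
      Measure.map_addHaar_smul volume hr.ne', lintegral_smul_measure,
      lintegral_add_left_eq_self (fun v => (ball x r).indicator F v) x, Complex.finrank_real_complex,
      smul_eq_mul, inv_pow, abs_of_nonneg (by positivity)]
  rw [lintegral_indicator measurableSet_ball] at h1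
  rw [← h1, ← lintegral_indicator measurableSet_ball]
  refine lintegral_congr fun u => ?_
  have : x + r • u ∈ ball x r ↔ u ∈ ball (0:ℂ) 1 := by
    simp [mem_ball, dist_eq_norm, abs_of_pos hr]
    constructor
    · intro h; nlinarith
    · intro h; nlinarith [norm_nonneg u]
  by_cases hu : u ∈ ball (0:ℂ) 1
  · rw [Set.indicator_of_mem hu, Set.indicator_of_mem (this.2 hu)]; simp
  · rw [Set.indicator_of_notMem hu, Set.indicator_of_notMem (fun h => hu (this.1 h))]

theorem nap_step_bound {U : Set ℂ} (hU : IsOpen U) {f : ℂ → ℝ} (hf : ContDiffOn ℝ 1 f U) {z w : ℂ}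
    {d d' : ℝ} (hd : 0 < d) (hb : ball z (d / 2) ⊆ U) (hzw : dist z w ≤ d / 8)
    (h1 : d' ≤ d + d / 8) (h2 : d ≤ d' + d / 8) :
    ‖napAvg f z (d / 4) - napAvg f w (d' / 4)‖ₑ ≤
      ENNReal.ofReal (4 / d) * ∫⁻ v in ball z (d / 2), ‖fderiv ℝ f v‖ₑ := by
  have hnzw : ‖w - z‖ ≤ d / 8 := by rwa [← dist_eq_norm, dist_comm]
  have hρ : ∀ t ∈ Set.Icc (0:ℝ) 1, 7 / 32 * d ≤ d / 4 + t * (d' / 4 - d / 4) ∧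
      d / 4 + t * (d' / 4 - d / 4) ≤ 9 / 32 * d := by
    rintro t ⟨ht0, ht1⟩
    constructor <;> nlinarith
  refine (nap_step hU hf (z := z) (w := w) (ρ := d / 4) (σ := d' / 4) ?_).trans ?_
  · intro u hu t ht
    apply hb
    have hu1 : ‖u‖ ≤ 1 := by simpa using hu
    obtain ⟨h3, h4⟩ := hρ t ht
    rw [mem_ball, dist_eq_norm]
    have e : z + (t:ℂ) * (w - z) + ((d / 4 + t * (d' / 4 - d / 4) : ℝ) : ℂ) * u - z
      = (t:ℂ) * (w - z) + ((d / 4 + t * (d' / 4 - d / 4) : ℝ) : ℂ) * u := by ring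
    rw [e]
    refine (norm_add_le _ _).trans_lt ?_
    rw [norm_mul, norm_mul, Complex.norm_real, Complex.norm_real, Real.norm_of_nonneg ht.1,
      Real.norm_of_nonneg (by linarith)]
    have : t * ‖w - z‖ ≤ 1 * (d / 8) := by
      gcongr
      exact ht.2
    have : (d / 4 + t * (d' / 4 - d / 4)) * ‖u‖ ≤ 9 / 32 * d * 1 := by gcongr
    linarith
  · have key : ∀ t ∈ Set.Ioc (0:ℝ) 1, (∫⁻ u in ball (0:ℂ) 1,
      ‖(w - z) + ((d' / 4 - d / 4 : ℝ) : ℂ) * u‖ₑ *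
        ‖fderiv ℝ f (z + (t:ℂ) * (w - z) + ((d / 4 + t * (d' / 4 - d / 4) : ℝ) : ℂ) * u)‖ₑ)
        ≤ ENNReal.ofReal (4 / d) * ∫⁻ v in ball z (d / 2), ‖fderiv ℝ f v‖ₑ := by
      intro t ht
      obtain ⟨h3, h4⟩ := hρ t ⟨ht.1.le, ht.2⟩
      set r := d / 4 + t * (d' / 4 - d / 4) with hr
      have hr0 : 0 < r := by linarith
      have hsub : ball (z + (t:ℂ) * (w - z)) r ⊆ ball z (d / 2) := by
        apply ball_subset_ball'
        have : dist (z + (t:ℂ) * (w - z)) z ≤ d / 8 := by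
          rw [dist_eq_norm, add_sub_cancel_left, norm_mul, Complex.norm_real,
            Real.norm_of_nonneg ht.1.le]
          have : t * ‖w - z‖ ≤ 1 * (d / 8) := by
            gcongr
            exact ht.2
          linarith
        linarith
      calc _ ≤ ∫⁻ u in ball (0:ℂ) 1, ENNReal.ofReal (5 / 32 * d) *
            ‖fderiv ℝ f (z + (t:ℂ) * (w - z) + (r : ℂ) * u)‖ₑ := by
            refine setLIntegral_mono' measurableSet_ball fun u hu => ?_
            gcongr
            rw [← ofReal_norm]
            apply ENNReal.ofReal_le_ofReal
            have hu1 : ‖u‖ ≤ 1 := by simpa using (ball_subset_closedBall hu)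
            refine (norm_add_le _ _).trans ?_
            rw [norm_mul, Complex.norm_real]
            have : ‖d' / 4 - d / 4‖ * ‖u‖ ≤ d / 32 * 1 := by
              gcongr
              rw [Real.norm_eq_abs, abs_le]; constructor <;> linarith
            linarith
        _ = ENNReal.ofReal (5 / 32 * d) * (ENNReal.ofReal (r⁻¹ ^ 2) *
            ∫⁻ v in ball (z + (t:ℂ) * (w - z)) r, ‖fderiv ℝ f v‖ₑ) := by
            rw [lintegral_const_mul' _ _ ENNReal.ofReal_ne_top,
              nap_cov (fun v => ‖fderiv ℝ f v‖ₑ) _ hr0]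
        _ ≤ ENNReal.ofReal (5 / 32 * d) * (ENNReal.ofReal (r⁻¹ ^ 2) *
            ∫⁻ v in ball z (d / 2), ‖fderiv ℝ f v‖ₑ) := by
            gcongr
        _ ≤ _ := by
            rw [← mul_assoc, ← ENNReal.ofReal_mul (by positivity)]
            gcongr
            have : r⁻¹ ≤ (7 / 32 * d)⁻¹ := by gcongr
            have h5 : r⁻¹ ^ 2 ≤ (7 / 32 * d)⁻¹ ^ 2 := by gcongr
            calc 5 / 32 * d * r⁻¹ ^ 2 ≤ 5 / 32 * d * (7 / 32 * d)⁻¹ ^ 2 := by gcongr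
              _ ≤ 4 / d := by
                field_simp
                norm_num
    refine (setLIntegral_mono' measurableSet_Ioc key).trans ?_
    simp

theorem nap_tint {s : ℝ} (hs : 0 < s) :
    ∫⁻ t in Set.Ioi s, ENNReal.ofReal (t⁻¹ ^ 3) = ENNReal.ofReal (s⁻¹ ^ 2 / 2) := by
  have e : ∀ t ∈ Set.Ioi s, t⁻¹ ^ 3 = t ^ (-3 : ℝ) := by
    intro t ht
    have : (0:ℝ) < t := hs.trans ht
    rw [Real.rpow_neg this.le, inv_pow]; norm_cast
  rw [setLIntegral_congr_fun measurableSet_Ioi (fun t ht => by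
    show ENNReal.ofReal (t⁻¹ ^ 3) = ENNReal.ofReal (t ^ (-3:ℝ))
    rw [e t ht])]
  rw [← ofReal_integral_eq_lintegral_ofReal (integrableOn_Ioi_rpow_of_lt (by norm_num) hs)]
  · rw [integral_Ioi_rpow_of_lt (by norm_num) hs]
    congr 1
    rw [show (-3 + 1 : ℝ) = -2 by norm_num, Real.rpow_neg hs.le, inv_pow]
    norm_cast
    simp
    try ring
  · filter_upwards [ae_restrict_mem measurableSet_Ioi] with t ht
    have : (0:ℝ) < t := hs.trans ht
    positivity

theorem nap_center {U : Set ℂ} (hU : IsOpen U) {f : ℂ → ℝ} (hf : ContDiffOn ℝ 1 f U) {x : ℂ}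
    {σ : ℝ} (hσ : 0 < σ) (hb : closedBall x σ ⊆ U) :
    ‖π * f x - napAvg f x σ‖ₑ ≤
      ∫⁻ v in ball x σ, ENNReal.ofReal (dist x v)⁻¹ * ‖fderiv ℝ f v‖ₑ := by
  have e0 : π * f x = napAvg f x 0 := by
    simp [napAvg, Measure.real, Complex.volume_ball]
  rw [e0]
  refine (nap_step hU hf (z := x) (w := x) (ρ := 0) (σ := σ) ?_).trans ?_
  · intro u hu t ht
    apply hb
    have hu1 : ‖u‖ ≤ 1 := by simpa using hu
    rw [mem_closedBall, dist_eq_norm]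
    have e : x + (t:ℂ) * (x - x) + ((0 + t * (σ - 0) : ℝ) : ℂ) * u - x = ((t * σ : ℝ) : ℂ) * u := by
      push_cast; ring
    rw [e, norm_mul, Complex.norm_real, Real.norm_of_nonneg (mul_nonneg ht.1 hσ.le)]
    calc t * σ * ‖u‖ ≤ 1 * σ * 1 := by
          have := ht.2
          gcongr
      _ = σ := by ring
  · have hg : Measurable (fun v => ‖fderiv ℝ f v‖ₑ) := (measurable_fderiv ℝ f).enorm
    set g : ℂ → ℝ≥0∞ := fun v => ‖fderiv ℝ f v‖ₑ with hgdef
    let H : ℝ → ℂ → ℝ≥0∞ := fun t v => ENNReal.ofReal (t⁻¹ ^ 3 * σ⁻¹ ^ 2) *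
      (ENNReal.ofReal (dist x v) * g v)
    have key : ∀ t ∈ Set.Ioc (0:ℝ) 1, (∫⁻ u in ball (0:ℂ) 1,
      ‖(x - x) + ((σ - 0 : ℝ) : ℂ) * u‖ₑ *
        g (x + (t:ℂ) * (x - x) + ((0 + t * (σ - 0) : ℝ) : ℂ) * u))
        = ∫⁻ v, {p : ℝ × ℂ | dist x p.2 < p.1 * σ}.indicator (Function.uncurry H) (t, v) := by
      intro t ht
      have htσ : 0 < t * σ := mul_pos ht.1 hσ
      have e1 : ∀ u : ℂ, ‖(x - x) + ((σ - 0 : ℝ) : ℂ) * u‖ₑ *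
        g (x + (t:ℂ) * (x - x) + ((0 + t * (σ - 0) : ℝ) : ℂ) * u) =
          (fun v => ENNReal.ofReal (t⁻¹) * (ENNReal.ofReal (dist x v) * g v))
            (x + ((t * σ : ℝ) : ℂ) * u) := by
        intro u
        simp only
        have e2 : x + (t:ℂ) * (x - x) + ((0 + t * (σ - 0) : ℝ) : ℂ) * u
          = x + ((t * σ : ℝ) : ℂ) * u := by push_cast; ring
        rw [e2, ← mul_assoc]
        congr 1
        rw [← ofReal_norm, ← ENNReal.ofReal_mul (inv_nonneg.2 ht.1.le)]
        congr 1
        rw [dist_self_add_right, norm_mul, Complex.norm_real, Real.norm_of_nonneg htσ.le,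
          sub_self, zero_add, norm_mul, Complex.norm_real, sub_zero, Real.norm_of_nonneg hσ.le]
        have := ht.1.ne'
        field_simp
      rw [lintegral_congr e1, nap_cov (fun v => ENNReal.ofReal (t⁻¹) * (ENNReal.ofReal (dist x v) * g v)) x htσ, ← lintegral_indicator measurableSet_ball,
        ← lintegral_const_mul' _ _ ENNReal.ofReal_ne_top]
      refine lintegral_congr fun v => ?_
      by_cases hv : dist x v < t * σ
      · rw [Set.indicator_of_mem (by rwa [mem_ball, dist_comm]), Set.indicator_of_mem (by exact hv)]
        simp only [Function.uncurry, H]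
        rw [← mul_assoc, ← ENNReal.ofReal_mul (by positivity)]
        congr 2
        have := ht.1.ne'
        field_simp
      · rw [Set.indicator_of_notMem (by rwa [mem_ball, dist_comm]),
          Set.indicator_of_notMem (by exact hv), mul_zero]
    rw [setLIntegral_congr_fun measurableSet_Ioc key, lintegral_lintegral_swap]
    · rw [← lintegral_indicator measurableSet_ball]
      refine lintegral_mono fun v => ?_
      by_cases hv : v ∈ ball x σ
      · rw [Set.indicator_of_mem hv]
        rcases eq_or_ne x v with rfl | hne
        · have : ∀ t, {p : ℝ × ℂ | dist x p.2 < p.1 * σ}.indicator (Function.uncurry H) (t, x) = 0 := by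
            intro t
            apply Set.indicator_apply_eq_zero.2
            intro _; simp [Function.uncurry, H]
          simp [this]
        · have hdp : 0 < dist x v := dist_pos.2 hne
          have hs : 0 < dist x v / σ := div_pos hdp hσ
          calc _ ≤ ∫⁻ t in Set.Ioc (0:ℝ) 1, (Set.Ioi (dist x v / σ)).indicator
                (fun t => ENNReal.ofReal (t⁻¹ ^ 3) *
                  (ENNReal.ofReal (σ⁻¹ ^ 2 * dist x v) * g v)) t := by
                refine setLIntegral_mono' measurableSet_Ioc fun t ht => ?_
                by_cases h : dist x v < t * σ
                · rw [Set.indicator_of_mem (by exact h), Set.indicator_of_mem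
                    (by rw [Set.mem_Ioi, div_lt_iff₀ hσ]; exact h)]
                  simp only [Function.uncurry, H]
                  have := ht.1
                  rw [← mul_assoc, ← mul_assoc, ← ENNReal.ofReal_mul (by positivity),
                    ← ENNReal.ofReal_mul (by positivity)]
                  apply le_of_eq; congr 2; ring
                · rw [Set.indicator_of_notMem (by exact h)]; exact zero_le
            _ ≤ ∫⁻ t, (Set.Ioi (dist x v / σ)).indicator
                (fun t => ENNReal.ofReal (t⁻¹ ^ 3) *
                  (ENNReal.ofReal (σ⁻¹ ^ 2 * dist x v) * g v)) t := setLIntegral_le_lintegral _ _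
            _ = ENNReal.ofReal ((dist x v / σ)⁻¹ ^ 2 / 2) *
                  (ENNReal.ofReal (σ⁻¹ ^ 2 * dist x v) * g v) := by
                rw [lintegral_indicator measurableSet_Ioi, lintegral_mul_const, nap_tint hs]
                fun_prop
            _ ≤ _ := by
                rw [← mul_assoc, ← ENNReal.ofReal_mul (by positivity)]
                gcongr
                field_simp
                norm_num
      · rw [Set.indicator_of_notMem hv]
        apply le_of_eq
        refine (setLIntegral_congr_fun measurableSet_Ioc (g := fun _ => 0) fun t ht => ?_).trans
          (by simp)
        apply Set.indicator_of_notMem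
        intro h
        have h' : dist x v < t * σ := h
        apply hv
        rw [mem_ball, dist_comm]
        nlinarith [ht.2]
    · apply Measurable.aemeasurable
      have hH : Measurable (Function.uncurry H) := by
        refine Measurable.mul (f := fun p : ℝ × ℂ => ENNReal.ofReal (p.1⁻¹ ^ 3 * σ⁻¹ ^ 2))
          (g := fun p : ℝ × ℂ => ENNReal.ofReal (dist x p.2) * g p.2) ?_ ?_
        · fun_prop
        · exact Measurable.mul (by fun_prop) (hg.comp measurable_snd)
      exact hH.indicator (measurableSet_lt (by fun_prop) (by fun_prop))

theorem nap_pointwise {Ω : Set ℂ} (hΩ : IsOpen Ω) {f : ℂ → ℝ} (hf : ContDiffOn ℝ 1 f Ω)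
    {d : ℂ → ℝ} (hd : ∀ x y, d x ≤ d y + dist x y) (hball : ∀ y ∈ Ω, ball y (d y) ⊆ Ω)
    (hpos : ∀ y ∈ Ω, 0 < d y) {A : Set ℂ} (hA : IsPreconnected A) (hAΩ : A ⊆ Ω) {x x0 : ℂ}
    (hx : x ∈ A) (hx0 : x0 ∈ A) {B : ℝ} (hB : 0 ≤ B) (hAB : ∀ w ∈ A, dist w x ≤ B * d w) :
    ‖π * f x - napAvg f x0 (d x0 / 4)‖ₑ ≤ ENNReal.ofReal (1 + 73728 * (B + 1)) *
      ∫⁻ v in Ω, ENNReal.ofReal (dist x v)⁻¹ * ‖fderiv ℝ f v‖ₑ := by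
  classical
  obtain ⟨n, z, ⟨hz0, hzn, hzA, hzd⟩, hsep⟩ :=
    nap_chain_min hd hA (fun x hx => hpos x (hAΩ hx)) hx hx0
  have hzp : ∀ i ≤ n, 0 < d (z i) := fun i hi => hpos _ (hAΩ (hzA i hi))
  have hzb : ∀ i ≤ n, ball (z i) (d (z i) / 2) ⊆ Ω := fun i hi =>
    (ball_subset_ball (by have := hzp i hi; linarith)).trans (hball _ (hAΩ (hzA i hi)))
  set g : ℂ → ℝ≥0∞ := fun v => ‖fderiv ℝ f v‖ₑ with hgdef
  have hg : Measurable g := (measurable_fderiv ℝ f).enorm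
  set J := ∫⁻ v in Ω, ENNReal.ofReal (dist x v)⁻¹ * g v with hJ
  have hdx := hpos x (hAΩ hx)
  have hcen : ‖π * f x - napAvg f x (d x / 4)‖ₑ ≤ J := by
    have hcb : closedBall x (d x / 4) ⊆ Ω :=
      (closedBall_subset_ball (by linarith)).trans (hball x (hAΩ hx))
    refine (nap_center hΩ hf (by positivity) hcb).trans ?_
    exact lintegral_mono_set (ball_subset_closedBall.trans hcb)
  have hchain : ‖napAvg f x (d x / 4) - napAvg f x0 (d x0 / 4)‖ₑ ≤
      ENNReal.ofReal (73728 * (B + 1)) * J := by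
    have e1 : napAvg f x (d x / 4) - napAvg f x0 (d x0 / 4) =
        ∑ i ∈ Finset.range n, (napAvg f (z i) (d (z i) / 4)
          - napAvg f (z (i + 1)) (d (z (i + 1)) / 4)) := by
      rw [Finset.sum_range_sub' (fun i => napAvg f (z i) (d (z i) / 4)), hz0, hzn]
    rw [e1]
    refine (enorm_sum_le _ _).trans ?_
    calc _ ≤ ∑ i ∈ Finset.range n, ENNReal.ofReal (4 / d (z i)) *
          ∫⁻ v in ball (z i) (d (z i) / 2), g v := by
          refine Finset.sum_le_sum fun i hi => ?_
          have hi := Finset.mem_range.1 hi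
          have h1 := hzd i hi
          have h2 := hd (z i) (z (i + 1))
          have h3 := hd (z (i + 1)) (z i)
          rw [dist_comm] at h3
          exact nap_step_bound hΩ hf (hzp i hi.le) (hzb i hi.le) h1 (by linarith) (by linarith)
      _ = ∑ i ∈ Finset.range n, ∫⁻ v in Ω, (ball (z i) (d (z i) / 2)).indicator
            (fun v => ENNReal.ofReal (4 / d (z i)) * g v) v := by
          refine Finset.sum_congr rfl fun i hi => ?_
          have hi := Finset.mem_range.1 hi
          rw [setLIntegral_indicator measurableSet_ball,
            Set.inter_eq_left.2 (hzb i hi.le), lintegral_const_mul _ hg]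
      _ = ∫⁻ v in Ω, ∑ i ∈ Finset.range n, (ball (z i) (d (z i) / 2)).indicator
            (fun v => ENNReal.ofReal (4 / d (z i)) * g v) v := by
          rw [lintegral_finsetSum]
          intro i _
          exact (hg.const_mul _).indicator measurableSet_ball
      _ ≤ ∫⁻ v in Ω, ENNReal.ofReal (73728 * (B + 1)) * (ENNReal.ofReal (dist x v)⁻¹ * g v) := by
          apply lintegral_mono_ae
          have hae : ∀ᵐ v ∂(volume.restrict Ω), v ≠ x :=
            ae_restrict_of_ae (Measure.ae_ne volume x)
          filter_upwards [hae] with v hv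
          have hdv : 0 < dist x v := dist_pos.2 hv.symm
          set I := (Finset.range n).filter (fun i => v ∈ ball (z i) (d (z i) / 2)) with hI
          have hcard : (I.card : ℝ) ≤ 18432 := by
            apply nap_count hd (z := z) (y := v) (n := n) hzp hsep
            · intro i hi
              exact (Finset.mem_range.1 (Finset.mem_filter.1 hi).1).le
            · intro i hi
              exact (Finset.mem_filter.1 hi).2
          calc _ = ∑ i ∈ I, ENNReal.ofReal (4 / d (z i)) * g v := by
                rw [hI, Finset.sum_filter]
                refine Finset.sum_congr rfl fun i _ => ?_
                rw [Set.indicator_apply]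
            _ ≤ ∑ i ∈ I, ENNReal.ofReal (4 * (B + 1) * (dist x v)⁻¹) * g v := by
                refine Finset.sum_le_sum fun i hi => ?_
                have hi' := Finset.mem_filter.1 hi
                have hin := (Finset.mem_range.1 hi'.1).le
                have hp := hzp i hin
                have h1 := hAB _ (hzA i hin)
                have h2 : dist v (z i) < d (z i) / 2 := hi'.2
                have h3 := dist_triangle_left x v (z i)
                rw [dist_comm v] at h2
                have h4 : dist x v ≤ (B + 1) * d (z i) := by linarith
                gcongr
                rw [← div_eq_mul_inv, div_le_div_iff₀ hp hdv]
                linarith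
            _ ≤ _ := by
                rw [Finset.sum_const, nsmul_eq_mul, ← mul_assoc, ← mul_assoc,
                  ← ENNReal.ofReal_natCast, ← ENNReal.ofReal_mul (by positivity),
                  ← ENNReal.ofReal_mul (by positivity)]
                have hr : (I.card : ℝ) * (4 * (B + 1) * (dist x v)⁻¹) ≤
                    73728 * (B + 1) * (dist x v)⁻¹ := by
                  calc _ ≤ 18432 * (4 * (B + 1) * (dist x v)⁻¹) := by gcongr
                    _ = _ := by ring
                exact mul_le_mul' (ENNReal.ofReal_le_ofReal hr) le_rfl
      _ = _ := by
          rw [lintegral_const_mul' _ _ ENNReal.ofReal_ne_top]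
  calc ‖π * f x - napAvg f x0 (d x0 / 4)‖ₑ
      = ‖(π * f x - napAvg f x (d x / 4)) + (napAvg f x (d x / 4) - napAvg f x0 (d x0 / 4))‖ₑ := by
        congr 1; ring
    _ ≤ J + ENNReal.ofReal (73728 * (B + 1)) * J := (enorm_add_le _ _).trans (by gcongr)
    _ = _ := by
        rw [ENNReal.ofReal_add zero_le_one (by positivity), ENNReal.ofReal_one, add_mul, one_mul]

theorem nap_riesz_ball (x : ℂ) {R : ℝ} (hR : 0 < R) :
    ∫⁻ v in ball x R, ENNReal.ofReal (dist x v)⁻¹ ≤ ENNReal.ofReal (2 * π * R) := by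
  have h1 : ∫⁻ v in ball x R, ENNReal.ofReal (dist x v)⁻¹ =
      ∫⁻ v, (ball (0:ℂ) R).indicator (fun v => ENNReal.ofReal ‖v‖⁻¹) v := by
    rw [← lintegral_indicator measurableSet_ball,
      ← lintegral_add_left_eq_self (fun v => (ball x R).indicator
        (fun v => ENNReal.ofReal (dist x v)⁻¹) v) x]
    refine lintegral_congr fun v => ?_
    have e1 : dist x (x + v) = ‖v‖ := by simp [dist_eq_norm]
    have e2 : x + v ∈ ball x R ↔ v ∈ ball (0 : ℂ) R := by
      rw [mem_ball, mem_ball, dist_comm, e1, dist_zero_right]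
    by_cases h : v ∈ ball (0 : ℂ) R
    · rw [Set.indicator_of_mem h]
      refine (Set.indicator_of_mem (e2.2 h) _).trans ?_
      simp only [e1]
    · rw [Set.indicator_of_notMem h]
      exact Set.indicator_of_notMem (fun h2 => h (e2.1 h2)) _
  rw [h1, ← Complex.lintegral_comp_polarCoord_symm]
  calc _ ≤ ∫⁻ p in polarCoord.target, (Set.Ioo 0 R ×ˢ Set.Ioo (-π) π).indicator (fun _ => 1) p := by
        refine setLIntegral_mono' polarCoord.open_target.measurableSet fun p hp => ?_
        rw [polarCoord_target] at hp
        have hp1 : 0 < p.1 := hp.1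
        have hn : ‖Complex.polarCoord.symm p‖ = p.1 := by
          rw [Complex.norm_polarCoord_symm, abs_of_pos hp1]
        by_cases h : p.1 < R
        · rw [Set.indicator_of_mem (by rw [mem_ball, dist_zero_right, hn]; exact h),
            Set.indicator_of_mem (by exact ⟨⟨hp1, h⟩, hp.2⟩), hn, smul_eq_mul,
            ← ENNReal.ofReal_mul hp1.le, mul_inv_cancel₀ hp1.ne']
          simp
        · rw [Set.indicator_of_notMem (by rw [mem_ball, dist_zero_right, hn]; exact h)]
          simp
    _ ≤ ∫⁻ p, (Set.Ioo 0 R ×ˢ Set.Ioo (-π) π).indicator (fun _ => 1) p :=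
        setLIntegral_le_lintegral _ _
    _ = volume (Set.Ioo 0 R ×ˢ Set.Ioo (-π) π) := by
        rw [lintegral_indicator (measurableSet_Ioo.prod measurableSet_Ioo)]; simp
    _ = _ := by
        rw [Measure.volume_eq_prod, Measure.prod_prod, Real.volume_Ioo, Real.volume_Ioo,
          ← ENNReal.ofReal_mul (by linarith)]
        congr 1; ring

theorem nap_riesz (x : ℂ) {Ω : Set ℂ} {V : ℝ} (hV : 0 < V) (hΩ : volume Ω = ENNReal.ofReal V) :
    ∫⁻ v in Ω, ENNReal.ofReal (dist x v)⁻¹ ≤ ENNReal.ofReal ((2 * π + 1) * √V) := by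
  have hs : 0 < √V := Real.sqrt_pos.2 hV
  calc _ ≤ ∫⁻ v in Ω, ((ball x √V).indicator (fun v => ENNReal.ofReal (dist x v)⁻¹) v
          + ENNReal.ofReal (√V)⁻¹) := by
        refine lintegral_mono fun v => ?_
        by_cases h : v ∈ ball x √V
        · simp only [Set.indicator_of_mem h]; exact le_self_add
        · simp only [Set.indicator_of_notMem h, zero_add]
          rw [mem_ball, dist_comm, not_lt] at h
          gcongr
    _ ≤ ENNReal.ofReal (2 * π * √V) + ENNReal.ofReal (√V)⁻¹ * ENNReal.ofReal V := by
        rw [lintegral_add_right _ measurable_const]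
        gcongr
        · refine (setLIntegral_le_lintegral _ _).trans ?_
          rw [lintegral_indicator measurableSet_ball]
          exact nap_riesz_ball x hs
        · rw [lintegral_const, Measure.restrict_apply_univ, hΩ]
    _ = _ := by
        rw [← ENNReal.ofReal_mul (by positivity), ← ENNReal.ofReal_add (by positivity) (by positivity)]
        congr 1
        have : V = √V * √V := (Real.mul_self_sqrt hV.le).symm
        rw [show (√V)⁻¹ * V = √V by
          nth_rewrite 2 [this]; field_simp]
        ring

theorem nap_schur {μ : Measure ℂ} [SFinite μ] {g : ℂ → ℝ≥0∞} (hg : Measurable g) {S : ℝ≥0∞}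
    (hS : ∀ x, ∫⁻ v, ENNReal.ofReal (dist x v)⁻¹ ∂μ ≤ S) :
    ∫⁻ x, (∫⁻ v, ENNReal.ofReal (dist x v)⁻¹ * g v ∂μ) ^ 2 ∂μ ≤ S ^ 2 * ∫⁻ v, g v ^ 2 ∂μ := by
  have hk : Measurable (fun p : ℂ × ℂ => ENNReal.ofReal (dist p.1 p.2)⁻¹) := by fun_prop
  have hcs : ∀ x, (∫⁻ v, ENNReal.ofReal (dist x v)⁻¹ * g v ∂μ) ^ 2 ≤
      S * ∫⁻ v, ENNReal.ofReal (dist x v)⁻¹ * g v ^ 2 ∂μ := by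
    intro x
    set k : ℂ → ℝ≥0∞ := fun v => ENNReal.ofReal (dist x v)⁻¹ with hkdef
    have hkm : Measurable k := by fun_prop
    have h := ENNReal.lintegral_mul_le_Lp_mul_Lq μ Real.HolderConjugate.two_two
      (f := fun v => k v ^ (1/2 : ℝ)) (g := fun v => k v ^ (1/2 : ℝ) * g v)
      (by fun_prop) (by fun_prop)
    have e1 : ∀ v, (k v ^ (1/2 : ℝ)) * (k v ^ (1/2 : ℝ)) = k v := by
      intro v
      rw [← ENNReal.rpow_add_of_nonneg _ _ (by norm_num) (by norm_num)]; norm_num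
    have e2 : ∀ v, ((fun v => k v ^ (1/2 : ℝ)) * fun v => k v ^ (1/2 : ℝ) * g v) v = k v * g v := by
      intro v
      simp only [Pi.mul_apply]
      rw [← mul_assoc, e1]
    have e3 : ∀ v, (k v ^ (1/2 : ℝ)) ^ (2:ℝ) = k v := by
      intro v; rw [← ENNReal.rpow_mul]; norm_num
    have e4 : ∀ v, (k v ^ (1/2 : ℝ) * g v) ^ (2:ℝ) = k v * g v ^ 2 := by
      intro v; rw [ENNReal.mul_rpow_of_nonneg _ _ (by norm_num), e3]; norm_num
    simp only [e2, e3, e4] at h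
    calc (∫⁻ v, k v * g v ∂μ) ^ 2 ≤ ((∫⁻ v, k v ∂μ) ^ (1/2:ℝ) *
          (∫⁻ v, k v * g v ^ 2 ∂μ) ^ (1/2:ℝ)) ^ 2 := by gcongr
      _ = (∫⁻ v, k v ∂μ) * ∫⁻ v, k v * g v ^ 2 ∂μ := by
          rw [mul_pow, ← ENNReal.rpow_natCast, ← ENNReal.rpow_natCast, ← ENNReal.rpow_mul,
            ← ENNReal.rpow_mul]
          norm_num
      _ ≤ _ := by gcongr; exact hS x
  calc _ ≤ ∫⁻ x, S * ∫⁻ v, ENNReal.ofReal (dist x v)⁻¹ * g v ^ 2 ∂μ ∂μ := lintegral_mono hcs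
    _ = S * ∫⁻ x, ∫⁻ v, ENNReal.ofReal (dist x v)⁻¹ * g v ^ 2 ∂μ ∂μ := by
        rw [lintegral_const_mul]
        exact Measurable.lintegral_prod_right' (f := fun p : ℂ × ℂ =>
          ENNReal.ofReal (dist p.1 p.2)⁻¹ * g p.2 ^ 2) (by fun_prop)
    _ = S * ∫⁻ v, ∫⁻ x, ENNReal.ofReal (dist x v)⁻¹ * g v ^ 2 ∂μ ∂μ := by
        rw [lintegral_lintegral_swap]
        exact Measurable.aemeasurable (f := fun p : ℂ × ℂ =>
          ENNReal.ofReal (dist p.1 p.2)⁻¹ * g p.2 ^ 2) (by fun_prop)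
    _ ≤ S * ∫⁻ v, S * g v ^ 2 ∂μ := by
        gcongr with v
        rw [lintegral_mul_const _ (by fun_prop)]
        gcongr
        simp only [dist_comm _ v]
        exact hS v
    _ = _ := by
        rw [lintegral_const_mul _ (by fun_prop), ← mul_assoc, sq]

theorem nap_variance {Ω : Set ℂ} (hΩ : MeasurableSet Ω) (hfin : volume Ω ≠ ⊤) (h0 : volume Ω ≠ 0)
    {f : ℂ → ℝ} (hfm : AEStronglyMeasurable f (volume.restrict Ω))
    (hf2 : IntegrableOn (fun z => (f z) ^ 2) Ω) (c : ℝ) :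
    IntegrableOn (fun w => (f w - c) ^ 2) Ω ∧
    ∫ w in Ω, (f w - ⨍ w in Ω, f w) ^ 2 ≤ ∫ w in Ω, (f w - c) ^ 2 := by
  have : IsFiniteMeasure (volume.restrict Ω) := ⟨by simpa using hfin.lt_top⟩
  have hL : MemLp f 2 (volume.restrict Ω) := (memLp_two_iff_integrable_sq hfm).2 hf2
  have hi : Integrable f (volume.restrict Ω) := hL.integrable (by norm_num)
  have hsq : ∀ a : ℝ, Integrable (fun w => (f w - a) ^ 2) (volume.restrict Ω) := fun a =>
    (hL.sub (memLp_const a)).integrable_sq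
  refine ⟨hsq c, ?_⟩
  set m := ⨍ w in Ω, f w with hm
  have hz : ∫ w in Ω, (f w - m) = 0 := by
    have : NeZero (volume.restrict Ω) := ⟨by simpa using h0⟩
    exact integral_sub_average _ f
  have e : ∀ w, (f w - c) ^ 2 = (f w - m) ^ 2 + (2 * (m - c) * (f w - m) + (m - c) ^ 2) := by
    intro w; ring
  have hi2 : Integrable (fun w => 2 * (m - c) * (f w - m)) (volume.restrict Ω) :=
    (hi.sub (integrable_const m)).const_mul _
  simp_rw [e]
  have hi3 : Integrable (fun w => 2 * (m - c) * (f w - m) + (m - c) ^ 2) (volume.restrict Ω) :=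
    hi2.add (integrable_const _)
  rw [integral_add (hsq m) hi3, integral_add hi2 (integrable_const _),
    integral_const_mul, hz]
  have : 0 ≤ ∫ w in Ω, (m - c) ^ 2 := integral_nonneg fun _ => sq_nonneg _
  linarith

theorem nap_poincare {Ω : Set ℂ} (hΩ : IsOpen Ω) (hne : Ω.Nonempty) (hbd : Bornology.IsBounded Ω)
    {f : ℂ → ℝ} (hf : ContDiffOn ℝ 1 f Ω)
    {d : ℂ → ℝ} (hd : ∀ x y, d x ≤ d y + dist x y) (hball : ∀ y ∈ Ω, ball y (d y) ⊆ Ω)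
    (hpos : ∀ y ∈ Ω, 0 < d y) {x0 : ℂ} {B : ℝ} (hB : 0 ≤ B)
    (hJ : ∀ x ∈ Ω, ∃ A, IsPreconnected A ∧ A ⊆ Ω ∧ x ∈ A ∧ x0 ∈ A ∧
      ∀ w ∈ A, dist w x ≤ B * d w)
    (hf2 : IntegrableOn (fun z => (f z) ^ 2) Ω)
    (hg2 : IntegrableOn (fun z => ‖fderiv ℝ f z‖ ^ 2) Ω) :
    ∫ w in Ω, (f w - ⨍ w in Ω, f w) ^ 2 ≤
      ((1 + 73728 * (B + 1)) * (2 * π + 1)) ^ 2 * (volume Ω).toReal *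
        ∫ w in Ω, ‖fderiv ℝ f w‖ ^ 2 := by
  have hfin : volume Ω ≠ ⊤ := hbd.measure_lt_top.ne
  have h0 : volume Ω ≠ 0 := (hΩ.measure_pos volume hne).ne'
  have hV : 0 < (volume Ω).toReal := ENNReal.toReal_pos h0 hfin
  set c := napAvg f x0 (d x0 / 4) / π with hc
  have hfm : AEStronglyMeasurable f (volume.restrict Ω) :=
    hf.continuousOn.aestronglyMeasurable hΩ.measurableSet
  obtain ⟨hci, hvar⟩ := nap_variance hΩ.measurableSet hfin h0 hfm hf2 c
  refine hvar.trans ?_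
  have hgm : Measurable (fun v => ‖fderiv ℝ f v‖ₑ) := (measurable_fderiv ℝ f).enorm
  set M := 1 + 73728 * (B + 1) with hM
  have hM0 : 0 ≤ M := by positivity
  have hpt : ∀ x ∈ Ω, ‖f x - c‖ₑ ^ 2 ≤ ENNReal.ofReal M ^ 2 *
      (∫⁻ v in Ω, ENNReal.ofReal (dist x v)⁻¹ * ‖fderiv ℝ f v‖ₑ) ^ 2 := by
    intro x hx
    rw [← mul_pow]
    gcongr
    obtain ⟨A, hA, hAΩ, hxA, hx0A, hAB⟩ := hJ x hx
    refine le_trans ?_ (nap_pointwise hΩ hf hd hball hpos hA hAΩ hxA hx0A hB hAB)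
    rw [← ofReal_norm, ← ofReal_norm]
    apply ENNReal.ofReal_le_ofReal
    have : π * f x - napAvg f x0 (d x0 / 4) = π * (f x - c) := by
      rw [hc]; field_simp
    rw [this, norm_mul, Real.norm_of_nonneg Real.pi_pos.le]
    nlinarith [Real.pi_gt_three, norm_nonneg (f x - c)]
  have hS := fun x => nap_riesz x hV (ENNReal.ofReal_toReal hfin).symm
  have hmain : ∫⁻ x in Ω, ‖f x - c‖ₑ ^ 2 ≤ ENNReal.ofReal M ^ 2 *
      (ENNReal.ofReal ((2 * π + 1) * √(volume Ω).toReal) ^ 2 *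
        ∫⁻ v in Ω, ‖fderiv ℝ f v‖ₑ ^ 2) := by
    refine (setLIntegral_mono' hΩ.measurableSet hpt).trans ?_
    rw [lintegral_const_mul' _ _ (by finiteness)]
    gcongr
    exact nap_schur hgm hS
  have e1 : ∫⁻ x in Ω, ‖f x - c‖ₑ ^ 2 = ENNReal.ofReal (∫ x in Ω, (f x - c) ^ 2) := by
    rw [ofReal_integral_eq_lintegral_ofReal hci (Filter.Eventually.of_forall fun _ => sq_nonneg _)]
    refine lintegral_congr fun x => ?_
    rw [← ofReal_norm, ← ENNReal.ofReal_pow (norm_nonneg _), Real.norm_eq_abs, sq_abs]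
  have e2 : ∫⁻ x in Ω, ‖fderiv ℝ f x‖ₑ ^ 2 = ENNReal.ofReal (∫ x in Ω, ‖fderiv ℝ f x‖ ^ 2) := by
    rw [ofReal_integral_eq_lintegral_ofReal hg2 (Filter.Eventually.of_forall fun _ => sq_nonneg _)]
    refine lintegral_congr fun x => ?_
    rw [← ofReal_norm, ← ENNReal.ofReal_pow (norm_nonneg _)]
  have hI : 0 ≤ ∫ x in Ω, ‖fderiv ℝ f x‖ ^ 2 := integral_nonneg fun _ => sq_nonneg _
  rw [e1, e2, ← ENNReal.ofReal_pow hM0, ← ENNReal.ofReal_pow (by positivity),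
    ← ENNReal.ofReal_mul (by positivity), ← ENNReal.ofReal_mul (by positivity),
    ENNReal.ofReal_le_ofReal_iff (by positivity)] at hmain
  refine hmain.trans (le_of_eq ?_)
  rw [mul_pow, mul_pow, Real.sq_sqrt hV.le]
  ring

theorem nap_const {C : ℝ} (hC : 1 ≤ C) :
    ((1 + 73728 * (4 * (4 * C + 4) ^ 2 + 1)) * (2 * π + 1)) ^ 2 ≤
      50000 * Real.exp (2 * (1 + Real.exp (2 * π) * C ^ 5) ^ 2) := by
  have hC2 : 1 ≤ C ^ 2 := one_le_pow₀ hC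
  have hC4 : 1 ≤ C ^ 4 := one_le_pow₀ hC
  have h1 : (1 + 73728 * (4 * (4 * C + 4) ^ 2 + 1)) ≤ 18948097 * C ^ 2 := by nlinarith
  have h2 : 2 * π + 1 ≤ 8 := by linarith [Real.pi_lt_d2]
  have h3 : ((1 + 73728 * (4 * (4 * C + 4) ^ 2 + 1)) * (2 * π + 1)) ^ 2 ≤
      (18948097 * C ^ 2 * 8) ^ 2 := by
    have := Real.pi_pos
    gcongr
  have h4 : (387 : ℝ) ≤ Real.exp (2 * π) := by
    calc (387 : ℝ) ≤ 2.7 ^ 6 := by norm_num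
      _ ≤ (Real.exp 1) ^ 6 := by
        gcongr; linarith [Real.exp_one_gt_d9]
      _ = Real.exp 6 := by rw [← Real.exp_nat_mul]; norm_num
      _ ≤ _ := Real.exp_le_exp.2 (by linarith [Real.pi_gt_three])
  have h5 : (387 * C ^ 2) ≤ 1 + Real.exp (2 * π) * C ^ 5 := by
    have : C ^ 2 ≤ C ^ 5 := pow_le_pow_right₀ hC (by norm_num)
    have : 387 * C ^ 2 ≤ Real.exp (2 * π) * C ^ 5 := by gcongr
    linarith
  set E := 2 * (1 + Real.exp (2 * π) * C ^ 5) ^ 2 with hE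
  have h6 : 200000 * C ^ 4 ≤ E := by
    have : (387 * C ^ 2) ^ 2 ≤ (1 + Real.exp (2 * π) * C ^ 5) ^ 2 := by gcongr
    nlinarith
  have hE0 : 200000 ≤ E := by linarith
  have h7 := Real.pow_div_factorial_le_exp E (by linarith) 3
  have h8 : (200000:ℝ) ^ 2 * (200000 * C ^ 4) ≤ E ^ 3 := by
    calc _ ≤ E ^ 2 * E := by gcongr
      _ = _ := by ring
  have h9 : ((Nat.factorial 3 : ℕ) : ℝ) = 6 := by norm_num [Nat.factorial]
  rw [h9] at h7
  have : (18948097 * C ^ 2 * 8) ^ 2 = 18948097 ^ 2 * 64 * C ^ 4 := by ring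
  rw [this] at h3
  linarith

theorem nap_const2 {C K₀ α ν T : ℝ} (hC : 1 ≤ C)
    (hK₀ : K₀ = Real.exp ((1 + Real.exp (2 * π) * C ^ 5) ^ 2) / 2 ^ 10)
    (hα : 2 < α) (hαK : α * (K₀ ^ 2 - 1) < 2 * K₀ ^ 2) (hν0 : 0 ≤ ν) (hν : ν < 1) (hT : 0 ≤ T) :
    50000 * Real.exp (2 * (1 + Real.exp (2 * π) * C ^ 5) ^ 2) ≤
      ((10 ^ 6 / ((α - 1) * (1 - ν)) ^ (1 / α)) ^ 2 *
        Real.exp (2 * (1 + Real.exp (2 * π) * C ^ 5) ^ 2) / (2 ^ 20 * π)) *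
          ((2 * α - 2) / (α - 2)) ^ ((2 * α - 2) / α) * Real.exp T := by
  have hX : 1 ≤ Real.exp (2 * π) * C ^ 5 :=
    one_le_mul_of_one_le_of_one_le (Real.one_le_exp (by positivity)) (one_le_pow₀ hC)
  have h4 : (387 : ℝ) ≤ Real.exp (2 * π) := by
    calc (387 : ℝ) ≤ 2.7 ^ 6 := by norm_num
      _ ≤ (Real.exp 1) ^ 6 := by
        gcongr; linarith [Real.exp_one_gt_d9]
      _ = Real.exp 6 := by rw [← Real.exp_nat_mul]; norm_num
      _ ≤ _ := Real.exp_le_exp.2 (by linarith [Real.pi_gt_three])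
  have hK : 2 ≤ K₀ := by
    have h5 : (1:ℝ) ≤ C ^ 5 := one_le_pow₀ hC
    have h6 : 387 ≤ Real.exp (2 * π) * C ^ 5 := by nlinarith
    have h7 := Real.add_one_le_exp ((1 + Real.exp (2 * π) * C ^ 5) ^ 2)
    rw [hK₀, le_div_iff₀ (by positivity)]
    nlinarith
  have hα3 : α < 3 := by
    by_contra h
    push Not at h
    have hK2 : 4 ≤ K₀ ^ 2 := by nlinarith
    nlinarith
  set E := Real.exp (2 * (1 + Real.exp (2 * π) * C ^ 5) ^ 2) with hE
  have hE0 : 0 < E := Real.exp_pos _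
  have hp : 0 < (α - 1) * (1 - ν) := mul_pos (by linarith) (by linarith)
  have hle : (α - 1) * (1 - ν) ≤ 2 := by nlinarith
  have hd0 : 0 < ((α - 1) * (1 - ν)) ^ (1 / α) := Real.rpow_pos_of_pos hp _
  have hd2 : ((α - 1) * (1 - ν)) ^ (1 / α) ≤ 2 := by
    calc _ ≤ (2:ℝ) ^ (1 / α) := Real.rpow_le_rpow hp.le hle (by positivity)
      _ ≤ (2:ℝ) ^ (1:ℝ) := by
        apply Real.rpow_le_rpow_of_exponent_le (by norm_num)
        rw [div_le_one (by linarith)]; linarith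
      _ = 2 := Real.rpow_one 2
  have h1 : (500000:ℝ) ≤ 10 ^ 6 / ((α - 1) * (1 - ν)) ^ (1 / α) := by
    rw [le_div_iff₀ hd0]; linarith
  have h2 : 50000 * E ≤ (10 ^ 6 / ((α - 1) * (1 - ν)) ^ (1 / α)) ^ 2 * E / (2 ^ 20 * π) := by
    rw [le_div_iff₀ (by positivity)]
    have h3 : (500000:ℝ) ^ 2 ≤ (10 ^ 6 / ((α - 1) * (1 - ν)) ^ (1 / α)) ^ 2 := by gcongr
    calc 50000 * E * (2 ^ 20 * π) ≤ 50000 * E * (2 ^ 20 * 4) := by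
          gcongr; exact Real.pi_le_four
      _ = (50000 * (2 ^ 20 * 4)) * E := by ring
      _ ≤ _ := by
        gcongr
        linarith
  have h3 : 1 ≤ ((2 * α - 2) / (α - 2)) ^ ((2 * α - 2) / α) := by
    apply Real.one_le_rpow
    · rw [le_div_iff₀ (by linarith)]; linarith
    · apply div_nonneg <;> linarith
  have h4 : 1 ≤ Real.exp T := Real.one_le_exp hT
  calc 50000 * E ≤ _ := h2
    _ ≤ _ := le_mul_of_one_le_right (by positivity) h3
    _ ≤ _ := le_mul_of_one_le_right (by positivity) h4

/-- Spectral-type Poincaré inequality (Rayleigh-quotient form of the lower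
bound for the first nontrivial Neumann eigenvalue, Corollary of Theorem A and
the Ahlfors reflection theorem) in a bounded domain `Ω` whose boundary is a
Jordan curve `γ` satisfying the Ahlfors three-point (bounded turning)
condition with constant `C ≥ 1`; `K₀ = 2^{−10}·exp{(1+e^{2π}C⁵)²}`. -/
theorem neumann_poincare_ahlfors_domain
    (C : ℝ) (hC : 1 ≤ C)
    (γ : ℝ → ℂ) (hγc : Continuous γ) (hγp : ∀ t : ℝ, γ (t + 1) = γ t)
    (hγi : Set.InjOn γ (Set.Ico (0 : ℝ) 1))
    (Ω : Set ℂ) (z : ℂ)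
    (hΩ : Ω = connectedComponentIn (γ '' Set.Icc (0 : ℝ) 1)ᶜ z)
    (hbdd : Bornology.IsBounded Ω)
    (hfr : frontier Ω = γ '' Set.Icc (0 : ℝ) 1)
    (hahl : ∀ s t : ℝ, 0 ≤ s → s ≤ t → t ≤ 1 →
      min (Metric.diam (γ '' Set.Icc s t)) (Metric.diam (γ '' Set.Icc t (s + 1)))
        ≤ C * dist (γ s) (γ t))
    (K₀ : ℝ) (hK₀ : K₀ = Real.exp ((1 + Real.exp (2 * π) * C ^ 5) ^ 2) / 2 ^ 10)
    (α : ℝ) (hα : 2 < α) (hαK : α * (K₀ ^ 2 - 1) < 2 * K₀ ^ 2)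
    (hν : (10 : ℝ) ^ (4 * α) *
        ((24 * π ^ 2 / 2 ^ 20) * Real.exp (2 * (1 + Real.exp (2 * π) * C ^ 5) ^ 2)) ^ α *
        ((α - 2) / (α - 1)) < 1)
    (f : ℂ → ℝ) (hf : ContDiffOn ℝ 1 f Ω)
    (hf2 : IntegrableOn (fun z => (f z) ^ 2) Ω)
    (hg2 : IntegrableOn (fun z => ‖fderiv ℝ f z‖ ^ 2) Ω) :
    ∫ w in Ω, (f w - ⨍ w in Ω, f w) ^ 2
      ≤ ((10 ^ 6 /
            ((α - 1) *
              (1 - (10 : ℝ) ^ (4 * α) *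
                ((24 * π ^ 2 / 2 ^ 20) *
                  Real.exp (2 * (1 + Real.exp (2 * π) * C ^ 5) ^ 2)) ^ α *
                ((α - 2) / (α - 1)))) ^ (1 / α)) ^ 2 *
            Real.exp (2 * (1 + Real.exp (2 * π) * C ^ 5) ^ 2) / (2 ^ 20 * π)) *
          ((2 * α - 2) / (α - 2)) ^ ((2 * α - 2) / α) *
          Real.exp (π ^ 2 * (2 + π ^ 4) ^ 2 *
            Real.exp (2 * (1 + Real.exp (2 * π) * C ^ 5) ^ 2) / (2 ^ 21 * Real.log 3)) *
          (volume Ω).toReal *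
          ∫ w in Ω, ‖fderiv ℝ f w‖ ^ 2 := by
  set Γ := γ '' Set.Icc (0 : ℝ) 1 with hΓdef
  have hΓ : IsCompact Γ := isCompact_Icc.image hγc
  have hΓn : Γ.Nonempty := ⟨γ 0, 0, by simp, rfl⟩
  have hΓc := hΓ.isClosed
  have hΩo : IsOpen Ω := hΩ ▸ hΓc.isOpen_compl.connectedComponentIn
  have hsub : Ω ⊆ Γᶜ := hΩ ▸ connectedComponentIn_subset _ _
  have hne : Ω.Nonempty := by
    by_contra h
    rw [Set.not_nonempty_iff_eq_empty] at h
    rw [h, frontier_empty] at hfr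
    exact hΓn.ne_empty hfr.symm
  have hdis : Disjoint Ω Γ := Set.disjoint_left.2 fun x hx hx2 => hsub hx hx2
  have hBT := nap_arc hγc hγp hC hahl
  obtain ⟨x0, hx0, hJ⟩ := nap_carrot (k := 4 * C + 4) (by linarith) hΓc hΓn hdis hfr.le hne hbdd
    (fun a ha b hb => nap_john hC hΓ hΓn hBT z hΩ hbdd ha hb)
  have hpos : ∀ y ∈ Ω, 0 < infDist y Γ := fun y hy =>
    (hΓc.notMem_iff_infDist_pos hΓn).1 (hsub hy)
  have hball : ∀ y ∈ Ω, ball y (infDist y Γ) ⊆ Ω := by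
    intro y hy
    have h1 : ball y (infDist y Γ) ⊆ Γᶜ := by
      intro w hw hwΓ
      have := infDist_le_dist_of_mem (x := y) hwΓ
      rw [mem_ball, dist_comm] at hw
      linarith
    have h2 := (convex_ball y (infDist y Γ)).isPreconnected.subset_connectedComponentIn
      (mem_ball_self (hpos y hy)) h1
    have hy2 : y ∈ connectedComponentIn Γᶜ z := hΩ ▸ hy
    rw [← connectedComponentIn_eq hy2, ← hΩ] at h2
    exact h2
  have hmain := nap_poincare hΩo hne hbdd hf (d := fun y => infDist y Γ)
    (fun x y => infDist_le_infDist_add_dist) hball hpos (x0 := x0) (B := 4 * (4 * C + 4) ^ 2)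
    (by positivity) hJ hf2 hg2
  refine hmain.trans ?_
  have hν0 : 0 ≤ (10 : ℝ) ^ (4 * α) *
        ((24 * π ^ 2 / 2 ^ 20) * Real.exp (2 * (1 + Real.exp (2 * π) * C ^ 5) ^ 2)) ^ α *
        ((α - 2) / (α - 1)) := by
    have : 0 ≤ (α - 2) / (α - 1) := div_nonneg (by linarith) (by linarith)
    positivity
  have hT : 0 ≤ π ^ 2 * (2 + π ^ 4) ^ 2 *
            Real.exp (2 * (1 + Real.exp (2 * π) * C ^ 5) ^ 2) / (2 ^ 21 * Real.log 3) := by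
    have : 0 < Real.log 3 := Real.log_pos (by norm_num)
    positivity
  have hc := (nap_const hC).trans (nap_const2 hC hK₀ hα hαK hν0 hν hT)
  have hI : 0 ≤ ∫ w in Ω, ‖fderiv ℝ f w‖ ^ 2 := integral_nonneg fun _ => sq_nonneg _
  exact mul_le_mul_of_nonneg_right
    (mul_le_mul_of_nonneg_right hc ENNReal.toReal_nonneg) hI
end
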